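/- Theorem 1.4. Let α ∈ (0,1), d₁, d₂ > 0 and c₁, c₂ ∈ ℝ with c₁ ≠ c₂. Assume f₁, f₂, g₁, g₂ : ℝ² → ℝ are C^{2,α} and there exist constants C₀ > 1 and r₀ > 0 such that for all |u|, |v| ≤ r₀: |f₁(u,v)| ≤ C₀(|u|⁴ + |u||v| + |v|⁴), |g₁(u,v)| ≤ C₀(|u|² + |u||v| + |v|³), |f₂(u,v)| ≤ C₀(|v|⁴ + |u||v| + |u|⁴), |g₂(u,v)| ≤ C₀(|v|² + |u||v| + |u|³). Then there exists M₀ ≥ 1 such that for every M ≥ M₀ and every ε > 0 there exists δ > 0 with the following property: for every pair (u₀, v₀) of bounded, α-Hölder continuous functions ℝ → ℝ satisfying |u₀(x)| e^{x²/M} < δ and |v₀(x)| e^{x²/M} < δ for all x ∈ ℝ, there exists a global classical solution (u,v) of system (GRD) with initial data (u₀, v₀) such that for all t ≥ 0: sup_{x∈ℝ}(|u(x,t)| + |v(x,t)|) ≤ ε/√(1+t) and ∫_ℝ (|u(x,t)| + |v(x,t)|) dx ≤ ε. -/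

import Mathlib

open MeasureTheory Set

noncomputable section

/-- `f` is `α`-Hölder continuous. -/
def HolderCont (α : ℝ) (f : ℝ → ℝ) : Prop :=
  ∃ C : ℝ, ∀ x y : ℝ, |f x - f y| ≤ C * |x - y| ^ α

/-- `h : ℝ² → ℝ` is `C^{2,α}`: twice continuously differentiable with `α`-Hölder
continuous second-order derivatives. -/
def IsC2Holder (α : ℝ) (h : ℝ × ℝ → ℝ) : Prop :=
  ContDiff ℝ 2 h ∧
    ∃ C : ℝ, ∀ x y : ℝ × ℝ,
      ‖iteratedFDeriv ℝ 2 h x - iteratedFDeriv ℝ 2 h y‖ ≤ C * ‖x - y‖ ^ α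

/-- A classical solution of the reaction-diffusion-advection system (GRD)
`u_t = d₁ u_xx + c₁ u_x + f₁(u,v) + ∂_x(g₁(u,v))`,
`v_t = d₂ v_xx + c₂ v_x + f₂(u,v) + ∂_x(g₂(u,v))`
on `ℝ × [0,T)` with initial data `(u₀, v₀)`: jointly continuous, bounded in `x` on
each compact time interval, once continuously differentiable in `t` and twice
continuously differentiable in `x` on `ℝ × (0,T)`, satisfying both equations
pointwise there, and attaining the initial data at `t = 0`. -/
def IsClassicalSolution (d₁ d₂ c₁ c₂ : ℝ) (f₁ f₂ g₁ g₂ : ℝ × ℝ → ℝ)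
    (T : ENNReal) (u₀ v₀ : ℝ → ℝ) (u v : ℝ → ℝ → ℝ) : Prop :=
  (∀ x : ℝ, u x 0 = u₀ x) ∧ (∀ x : ℝ, v x 0 = v₀ x) ∧
  ContinuousOn (fun p : ℝ × ℝ => (u p.1 p.2, v p.1 p.2))
    {p : ℝ × ℝ | 0 ≤ p.2 ∧ ENNReal.ofReal p.2 < T} ∧
  (∀ t₁ : ℝ, 0 ≤ t₁ → ENNReal.ofReal t₁ < T →
    ∃ K : ℝ, ∀ x t : ℝ, 0 ≤ t → t ≤ t₁ → |u x t| + |v x t| ≤ K) ∧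
  ∃ ut vt ux vx uxx vxx gx hx : ℝ → ℝ → ℝ,
    (∀ x t : ℝ, 0 < t → ENNReal.ofReal t < T →
      HasDerivAt (fun τ => u x τ) (ut x t) t ∧
      HasDerivAt (fun ξ => u ξ t) (ux x t) x ∧
      HasDerivAt (fun ξ => ux ξ t) (uxx x t) x ∧
      HasDerivAt (fun ξ => g₁ (u ξ t, v ξ t)) (gx x t) x ∧
      HasDerivAt (fun τ => v x τ) (vt x t) t ∧
      HasDerivAt (fun ξ => v ξ t) (vx x t) x ∧
      HasDerivAt (fun ξ => vx ξ t) (vxx x t) x ∧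
      HasDerivAt (fun ξ => g₂ (u ξ t, v ξ t)) (hx x t) x ∧
      ut x t = d₁ * uxx x t + c₁ * ux x t + f₁ (u x t, v x t) + gx x t ∧
      vt x t = d₂ * vxx x t + c₂ * vx x t + f₂ (u x t, v x t) + hx x t) ∧
    ContinuousOn (fun p : ℝ × ℝ =>
        (ut p.1 p.2, ux p.1 p.2, uxx p.1 p.2, vt p.1 p.2, vx p.1 p.2, vxx p.1 p.2))
      {p : ℝ × ℝ | 0 < p.2 ∧ ENNReal.ofReal p.2 < T}

namespace GRD
def gam (y : ℝ) : ℝ := (√(2 * Real.pi))⁻¹ * Real.exp (-(y ^ 2) / 2)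

def kk : ℕ → ℝ → ℝ
  | 0, y => gam y
  | 1, y => y * gam y
  | (_ + 2), y => (y ^ 2 - 1) * gam y

lemma gam_pos (y : ℝ) : 0 < gam y := by unfold gam; positivity

lemma gam_le (y : ℝ) : gam y ≤ 48 * ((1 + y ^ 2) ^ 3)⁻¹ := by
  have h1 : (√(2 * Real.pi))⁻¹ ≤ 1 := by
    apply inv_le_one_of_one_le₀
    rw [Real.one_le_sqrt]
    nlinarith [Real.pi_gt_three]
  have hv : (0:ℝ) ≤ y ^ 2 / 2 := by positivity
  set v := y ^ 2 / 2 with hvd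
  have he : (1 + y ^ 2) ^ 3 ≤ 48 * Real.exp v := by
    have h3 := Real.sum_le_exp_of_nonneg hv 4
    simp [Finset.sum_range_succ, Nat.factorial] at h3
    have : y ^ 2 = 2 * v := by rw [hvd]; ring
    rw [this]
    nlinarith [sq_nonneg v, mul_nonneg hv (sq_nonneg v)]
  have h2 : Real.exp (-(y ^ 2) / 2) ≤ 48 * ((1 + y ^ 2) ^ 3)⁻¹ := by
    have : -(y ^ 2) / 2 = -v := by rw [hvd]; ring
    rw [this, Real.exp_neg, ← div_eq_mul_inv, inv_le_comm₀ (Real.exp_pos _) (by positivity), inv_div]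
    rw [div_le_iff₀ (by norm_num)]
    linarith
  unfold gam
  calc _ ≤ 1 * Real.exp (-(y ^ 2) / 2) := by gcongr
    _ ≤ _ := by rw [one_mul]; exact h2

lemma kk_le (j : ℕ) (y : ℝ) : |kk j y| ≤ 48 * ((1 + y ^ 2) ^ 2)⁻¹ := by
  have key : |kk j y| ≤ (1 + y ^ 2) * gam y := by
    have hg := gam_pos y
    match j with
    | 0 => simp only [kk]; rw [abs_of_pos hg]; nlinarith [sq_nonneg y]
    | 1 =>
      simp only [kk]; rw [abs_mul, abs_of_pos hg]; gcongr
      nlinarith [sq_abs y, sq_nonneg (|y| - 1), abs_nonneg y]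
    | (n + 2) =>
      simp only [kk]; rw [abs_mul, abs_of_pos hg]; gcongr
      rw [abs_le]; constructor <;> nlinarith [sq_nonneg y]
  refine key.trans ?_
  calc (1 + y ^ 2) * gam y ≤ (1 + y ^ 2) * (48 * ((1 + y ^ 2) ^ 3)⁻¹) := by
        gcongr; exact gam_le y
    _ = _ := by field_simp

lemma inv_sq_le (y : ℝ) : ((1 + y ^ 2) ^ 2)⁻¹ ≤ (1 + y ^ 2)⁻¹ := by
  apply inv_anti₀ (by positivity)
  nlinarith [sq_nonneg y]

lemma kk_le1 (j : ℕ) (y : ℝ) : |kk j y| ≤ 48 * (1 + y ^ 2)⁻¹ :=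
  (kk_le j y).trans (mul_le_mul_of_nonneg_left (inv_sq_le y) (by norm_num))

lemma kk_le_const (j : ℕ) (y : ℝ) : |kk j y| ≤ 48 :=
  (kk_le1 j y).trans (by
    have : (1 + y ^ 2)⁻¹ ≤ 1 := inv_le_one_of_one_le₀ (by nlinarith [sq_nonneg y])
    linarith)

lemma abs_le_one_add_sq (y : ℝ) : |y| ≤ 1 + y ^ 2 := by
  nlinarith [sq_abs y, sq_nonneg (|y| - 1), abs_nonneg y]

lemma ykk_le1 (j : ℕ) (y : ℝ) : |y * kk j y| ≤ 48 * (1 + y ^ 2)⁻¹ := by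
  rw [abs_mul]
  calc |y| * |kk j y| ≤ (1 + y ^ 2) * (48 * ((1 + y ^ 2) ^ 2)⁻¹) := by
        gcongr
        · exact abs_le_one_add_sq y
        · exact kk_le j y
    _ = _ := by field_simp

lemma gam_hasDerivAt (y : ℝ) : HasDerivAt gam (-(y * gam y)) y := by
  have h : HasDerivAt (fun y : ℝ => -(y ^ 2) / 2) (-y) y := by
    have := ((hasDerivAt_pow 2 y).fun_neg).div_const 2
    refine this.congr_deriv ?_
    norm_num
    ring
  refine ((h.exp).const_mul ((√(2 * Real.pi))⁻¹)).congr_deriv ?_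
  unfold gam
  ring

lemma kk0_hasDerivAt (y : ℝ) : HasDerivAt (kk 0) (-(kk 1 y)) y := gam_hasDerivAt y

lemma kk1_hasDerivAt (y : ℝ) : HasDerivAt (kk 1) (-(kk 2 y)) y := by
  have := (hasDerivAt_id y).mul (gam_hasDerivAt y)
  refine this.congr_deriv ?_
  change 1 * gam y + y * -(y * gam y) = -((y ^ 2 - 1) * gam y)
  ring

lemma gam_cont : Continuous gam := by unfold gam; fun_prop

lemma kk_cont (j : ℕ) : Continuous (kk j) := by
  have := gam_cont
  match j with
  | 0 => exact this
  | 1 => exact continuous_id.mul this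
  | (n + 2) => exact ((continuous_id.pow 2).sub continuous_const).mul this

lemma w_int : Integrable (fun y : ℝ => 48 * (1 + y ^ 2)⁻¹) := integrable_inv_one_add_sq.const_mul 48

lemma kk_int (j : ℕ) : Integrable (kk j) :=
  w_int.mono' (kk_cont j).aestronglyMeasurable (Filter.Eventually.of_forall (kk_le1 j))

lemma gam_integral : ∫ y, kk 0 y = 1 := by
  simp only [kk, gam]
  rw [integral_const_mul]
  have : (fun y : ℝ => Real.exp (-(y ^ 2) / 2)) = fun y => Real.exp (-(1/2) * y ^ 2) := by
    ext y; congr 1; ring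
  rw [this, integral_gaussian]
  have : Real.pi / (1 / 2) = 2 * Real.pi := by ring
  rw [this, inv_mul_cancel₀]
  positivity

lemma kk2_integral : ∫ y, kk 2 y = 0 := by
  have := integral_eq_zero_of_hasDerivAt_of_integrable (f := kk 1) (f' := fun y => -(kk 2 y))
    kk1_hasDerivAt (kk_int 2).neg (kk_int 1)
  rw [integral_neg] at this
  linarith

/-- product integrability -/
lemma kphi_int (j : ℕ) {φ : ℝ → ℝ} (hφ : AEStronglyMeasurable φ) {B : ℝ} (hB : ∀ y, |φ y| ≤ B) :
    Integrable (fun y => kk j y * φ y) := by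
  have hB0 : 0 ≤ B := (abs_nonneg _).trans (hB 0)
  refine (w_int.mul_const B).mono' ((kk_cont j).aestronglyMeasurable.mul hφ)
    (Filter.Eventually.of_forall fun y => ?_)
  rw [Real.norm_eq_abs, abs_mul]
  have := kk_le1 j y
  have := hB y
  gcongr

lemma kphi_bound (j : ℕ) {φ : ℝ → ℝ} {B : ℝ} (hB : ∀ y, |φ y| ≤ B) :
    |∫ y, kk j y * φ y| ≤ 48 * Real.pi * B := by
  have hB0 : 0 ≤ B := (abs_nonneg _).trans (hB 0)
  have h := norm_integral_le_of_norm_le (μ := volume) (f := fun y => kk j y * φ y) (w_int.mul_const B)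
    (Filter.Eventually.of_forall fun y => by
      rw [Real.norm_eq_abs, abs_mul]
      have := kk_le1 j y
      have := hB y
      gcongr)
  rw [integral_mul_const, integral_const_mul, integral_univ_inv_one_add_sq] at h
  exact h

/-- change of variables -/
lemma cov (k φ : ℝ → ℝ) (X : ℝ) {σ : ℝ} (hσ : 0 < σ) :
    ∫ y, k y * φ (X + σ * y) = ∫ z, σ⁻¹ * k ((z - X) / σ) * φ z := by
  have h1 : (fun y => k y * φ (X + σ * y)) =
      fun y => (fun w => (fun z => k ((z - X) / σ) * φ z) (X + w)) (σ * y) := by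
    ext y; simp only; congr 2; field_simp; ring
  rw [h1, Measure.integral_comp_mul_left (fun w => (fun z => k ((z - X) / σ) * φ z) (X + w)) σ,
    integral_add_left_eq_self (fun z => k ((z - X) / σ) * φ z) X, abs_of_pos (inv_pos.2 hσ),
    smul_eq_mul, ← integral_const_mul]
  congr 1; ext z; ring

/-- derivative of the Gaussian averages along a curve -/
lemma hasDerivAt_avg (k k' φ : ℝ → ℝ) (hk : ∀ y, HasDerivAt k (k' y) y) (hk'c : Continuous k')
    (C : ℝ) (hk0 : ∀ y, |k y| ≤ C * (1 + y ^ 2)⁻¹) (hk1 : ∀ y, |k' y| ≤ C * (1 + y ^ 2)⁻¹)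
    (hk2 : ∀ y, |y * k' y| ≤ C * (1 + y ^ 2)⁻¹)
    (hφ : Continuous φ) (B : ℝ) (hB : ∀ y, |φ y| ≤ B)
    (X σ X' σ' : ℝ → ℝ) (r₀ ε lo hi D : ℝ) (hε : 0 < ε) (hlo : 0 < lo)
    (hX : ∀ r ∈ Metric.ball r₀ ε, HasDerivAt X (X' r) r)
    (hσ : ∀ r ∈ Metric.ball r₀ ε, HasDerivAt σ (σ' r) r)
    (hb : ∀ r ∈ Metric.ball r₀ ε, lo ≤ σ r ∧ σ r ≤ hi ∧ |X r - X r₀| ≤ D ∧ |X' r| ≤ D ∧ |σ' r| ≤ D) :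
    HasDerivAt (fun r => ∫ y, k y * φ (X r + σ r * y))
      (∫ y, (-(k' y * X' r₀) - (k y + y * k' y) * σ' r₀) * (σ r₀)⁻¹ * φ (X r₀ + σ r₀ * y)) r₀ := by
  have hr₀ : r₀ ∈ Metric.ball r₀ ε := Metric.mem_ball_self hε
  have hkc : Continuous k := continuous_iff_continuousAt.2 fun y => (hk y).continuousAt
  have hB0 : 0 ≤ B := (abs_nonneg _).trans (hB 0)
  have hD0 : 0 ≤ D := (abs_nonneg _).trans (hb r₀ hr₀).2.2.1
  have hC0 : 0 ≤ C := by
    have := (abs_nonneg _).trans (hk0 0); simpa using this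
  have hball : Metric.ball r₀ ε ∈ nhds r₀ := Metric.ball_mem_nhds _ hε
  set F : ℝ → ℝ → ℝ := fun r z => (σ r)⁻¹ * k ((z - X r) / σ r) * φ z with hF
  set F' : ℝ → ℝ → ℝ := fun r z => (-(k' ((z - X r) / σ r) * X' r) -
    (k ((z - X r) / σ r) + ((z - X r) / σ r) * k' ((z - X r) / σ r)) * σ' r) * ((σ r)⁻¹ * (σ r)⁻¹) * φ z with hF'
  have hder : ∀ z, ∀ r ∈ Metric.ball r₀ ε, HasDerivAt (fun r => F r z) (F' r z) r := by
    intro z r hr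
    have hs : σ r ≠ 0 := (hlo.trans_le (hb r hr).1).ne'
    have h1 := ((hX r hr).const_sub z).div (hσ r hr) hs
    have h2 := (((hσ r hr).inv hs).mul ((hk _).comp r h1)).mul_const (φ z)
    refine h2.congr_deriv ?_
    simp only [hF', Function.comp, Pi.div_apply, Pi.inv_apply]
    generalize k ((z - X r) / σ r) = a
    generalize k' ((z - X r) / σ r) = b
    field_simp
    ring
  set C1 : ℝ := 1 + 2 * hi ^ 2 + 2 * D ^ 2 with hC1
  have hw : ∀ r ∈ Metric.ball r₀ ε, ∀ z, (1 + ((z - X r) / σ r) ^ 2)⁻¹ ≤ C1 * (1 + (z - X r₀) ^ 2)⁻¹ := by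
    intro r hr z
    obtain ⟨h1, h2, h3, -, -⟩ := hb r hr
    have hs : 0 < σ r := hlo.trans_le h1
    rw [← div_eq_mul_inv, inv_le_comm₀ (by positivity) (by positivity), inv_div, div_le_iff₀ (by positivity)]
    set w := (z - X r) / σ r with hwd
    have hz : z - X r₀ = σ r * w + (X r - X r₀) := by rw [hwd]; field_simp; ring
    have h4 : (X r - X r₀) ^ 2 ≤ D ^ 2 := sq_le_sq' (by linarith [(abs_le.1 h3).1]) (abs_le.1 h3).2
    have h5 : (σ r) ^ 2 ≤ hi ^ 2 := by gcongr
    have h6 : (σ r * w) ^ 2 ≤ hi ^ 2 * w ^ 2 := by rw [mul_pow]; gcongr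
    rw [hz]
    nlinarith [sq_nonneg (σ r * w - (X r - X r₀)), sq_nonneg w, sq_nonneg D, sq_nonneg hi, mul_nonneg (sq_nonneg D) (sq_nonneg w)]
  have hbd : ∀ z, ∀ r ∈ Metric.ball r₀ ε, ‖F' r z‖ ≤ (3 * C * D * (lo⁻¹ * lo⁻¹) * B * C1) * (1 + (z - X r₀) ^ 2)⁻¹ := by
    intro z r hr
    obtain ⟨h1, h2, h3, h4, h5⟩ := hb r hr
    have hs : 0 < σ r := hlo.trans_le h1
    have hw' := hw r hr z
    set w := (z - X r) / σ r with hwd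
    set q := (1 + w ^ 2)⁻¹ with hq
    have hq0 : 0 ≤ q := by positivity
    have a1 := hk0 w
    have a2 := hk1 w
    have a3 := hk2 w
    have hi1 : (σ r)⁻¹ ≤ lo⁻¹ := inv_anti₀ hlo h1
    simp only [hF', ← hwd, norm_mul, Real.norm_eq_abs]
    have e1 : |(-(k' w * X' r) - (k w + w * k' w) * σ' r)| ≤ 3 * C * D * q := by
      have b1 : |k' w * X' r| ≤ C * q * D := by rw [abs_mul]; gcongr
      have b2 : |(k w + w * k' w) * σ' r| ≤ (C * q + C * q) * D := by
        rw [abs_mul]; gcongr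
        exact (abs_add_le _ _).trans (add_le_add a1 a3)
      calc _ ≤ |-(k' w * X' r)| + |(k w + w * k' w) * σ' r| := abs_sub _ _
        _ ≤ C * q * D + (C * q + C * q) * D := by rw [abs_neg]; exact add_le_add b1 b2
        _ = _ := by ring
    have e2 : |(σ r)⁻¹| ≤ lo⁻¹ := by rw [abs_of_pos (inv_pos.2 hs)]; exact hi1
    calc _ ≤ (3 * C * D * q) * (lo⁻¹ * lo⁻¹) * B := by
          have := hB z
          gcongr
      _ ≤ (3 * C * D * (C1 * (1 + (z - X r₀) ^ 2)⁻¹)) * (lo⁻¹ * lo⁻¹) * B := by gcongr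
      _ = _ := by ring
  have hint : Integrable fun z => (3 * C * D * (lo⁻¹ * lo⁻¹) * B * C1) * (1 + (z - X r₀) ^ 2)⁻¹ :=
    (integrable_inv_one_add_sq.comp_sub_right (X r₀)).const_mul _
  have hFc : ∀ r, Continuous (F r) := by
    intro r
    simp only [hF, div_eq_mul_inv]; fun_prop
  have hF0 : Integrable (F r₀) := by
    refine ((integrable_inv_one_add_sq.comp_sub_right (X r₀)).const_mul (lo⁻¹ * (C * C1) * B)).mono'
      (hFc r₀).aestronglyMeasurable (Filter.Eventually.of_forall fun z => ?_)
    obtain ⟨h1, h2, h3, h4, h5⟩ := hb r₀ hr₀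
    have hs : 0 < σ r₀ := hlo.trans_le h1
    simp only [hF, norm_mul, Real.norm_eq_abs]
    have e2 : |(σ r₀)⁻¹| ≤ lo⁻¹ := by rw [abs_of_pos (inv_pos.2 hs)]; exact inv_anti₀ hlo h1
    calc _ ≤ lo⁻¹ * (C * (C1 * (1 + (z - X r₀) ^ 2)⁻¹)) * B := by
          have := hB z
          have := (hk0 ((z - X r₀) / σ r₀)).trans (mul_le_mul_of_nonneg_left (hw r₀ hr₀ z) hC0)
          gcongr
      _ = _ := by ring
  have hF'm : AEStronglyMeasurable (F' r₀) := by
    have : Continuous (F' r₀) := by simp only [hF', div_eq_mul_inv]; fun_prop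
    exact this.aestronglyMeasurable
  have main := (hasDerivAt_integral_of_dominated_loc_of_deriv_le hball
    (Filter.Eventually.of_forall fun r => (hFc r).aestronglyMeasurable) hF0 hF'm
    (Filter.Eventually.of_forall hbd) hint (Filter.Eventually.of_forall hder)).2
  have hs0 : 0 < σ r₀ := hlo.trans_le (hb r₀ hr₀).1
  have e3 : ∫ y, (-(k' y * X' r₀) - (k y + y * k' y) * σ' r₀) * (σ r₀)⁻¹ * φ (X r₀ + σ r₀ * y) =
      ∫ z, F' r₀ z := by
    rw [cov (fun y => (-(k' y * X' r₀) - (k y + y * k' y) * σ' r₀) * (σ r₀)⁻¹) φ (X r₀) hs0]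
    congr 1; ext z; simp only [hF']; ring
  rw [e3]
  refine main.congr_of_eventuallyEq ?_
  filter_upwards [hball] with r hr
  exact cov k φ (X r) (hlo.trans_le (hb r hr).1)

end GRD

namespace GRD
def sg (d θ : ℝ) : ℝ := √(2 * d * θ)

def Sop (j : ℕ) (d c θ : ℝ) (φ : ℝ → ℝ) (x : ℝ) : ℝ :=
  ((sg d θ)⁻¹) ^ j * ∫ y, kk j y * φ (x + c * θ + sg d θ * y)

def CS (d : ℝ) : ℝ := 48 * Real.pi * (1 + (√(2 * d))⁻¹) ^ 2

lemma CS_pos (d : ℝ) : 0 < CS d := by unfold CS; positivity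

lemma sg_pos {d θ : ℝ} (hd : 0 < d) (hθ : 0 < θ) : 0 < sg d θ := by unfold sg; positivity

lemma sg_nonneg (d θ : ℝ) : 0 ≤ sg d θ := Real.sqrt_nonneg _

lemma sg_eq {d θ : ℝ} (hd : 0 < d) : sg d θ = √(2 * d) * √θ := by
  unfold sg; rw [Real.sqrt_mul (by positivity)]

lemma sg_inv {d θ : ℝ} (hd : 0 < d) (hθ : 0 ≤ θ) : (sg d θ)⁻¹ = (√(2 * d))⁻¹ * θ ^ (-(1/2) : ℝ) := by
  rw [sg_eq hd, mul_inv, Real.sqrt_eq_rpow θ, Real.rpow_neg hθ]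

lemma sg_inv_le {d θ : ℝ} (hd : 0 < d) (hθ : 0 ≤ θ) :
    (sg d θ)⁻¹ ≤ (1 + (√(2 * d))⁻¹) * θ ^ (-(1/2) : ℝ) := by
  rw [sg_inv hd hθ]
  have := Real.rpow_nonneg hθ (-(1/2) : ℝ)
  gcongr; linarith

lemma Sop_bound {j : ℕ} (hj : j ≤ 2) {d c θ : ℝ} (hd : 0 < d) (hθ : 0 ≤ θ) {φ : ℝ → ℝ} {B : ℝ}
    (hB : ∀ y, |φ y| ≤ B) (x : ℝ) : |Sop j d c θ φ x| ≤ CS d * θ ^ (-(j:ℝ)/2) * B := by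
  have hB0 : 0 ≤ B := (abs_nonneg _).trans (hB 0)
  unfold Sop CS
  rw [abs_mul]
  have h1 := kphi_bound j (φ := fun y => φ (x + c * θ + sg d θ * y)) (fun y => hB _)
  have h0 : 0 ≤ (sg d θ)⁻¹ := inv_nonneg.2 (sg_nonneg _ _)
  have h2 : |((sg d θ)⁻¹) ^ j| ≤ (1 + (√(2 * d))⁻¹) ^ 2 * θ ^ (-(j:ℝ)/2) := by
    rw [abs_of_nonneg (by positivity)]
    have h3 := pow_le_pow_left₀ h0 (sg_inv_le hd hθ) j
    rw [mul_pow, ← Real.rpow_mul_natCast hθ] at h3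
    have h4 : (-(1/2) : ℝ) * j = -(j:ℝ)/2 := by ring
    rw [h4] at h3
    refine h3.trans ?_
    have := Real.rpow_nonneg hθ (-(j:ℝ)/2)
    have h5 : (1:ℝ) ≤ 1 + (√(2 * d))⁻¹ := by
      have : 0 ≤ (√(2 * d))⁻¹ := by positivity
      linarith
    gcongr
  calc _ ≤ ((1 + (√(2 * d))⁻¹) ^ 2 * θ ^ (-(j:ℝ)/2)) * (48 * Real.pi * B) := by gcongr
    _ = _ := by ring

lemma phi_comp_cont {φ : ℝ → ℝ} (hφ : Continuous φ) (a b : ℝ) : Continuous fun y => φ (a + b * y) := by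
  fun_prop

lemma Sop_sub (j : ℕ) (d c θ : ℝ) {φ ψ : ℝ → ℝ} (hφ : Continuous φ) (hψ : Continuous ψ) {B B' : ℝ}
    (hB : ∀ y, |φ y| ≤ B) (hB' : ∀ y, |ψ y| ≤ B') (x : ℝ) :
    Sop j d c θ φ x - Sop j d c θ ψ x = Sop j d c θ (fun y => φ y - ψ y) x := by
  unfold Sop
  rw [← mul_sub, ← integral_sub]
  · congr 2; ext y; ring
  · exact kphi_int j (phi_comp_cont hφ _ _).aestronglyMeasurable (fun y => hB _)
  · exact kphi_int j (phi_comp_cont hψ _ _).aestronglyMeasurable (fun y => hB' _)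

lemma Sop_add (j : ℕ) (d c θ : ℝ) {φ ψ : ℝ → ℝ} (hφ : Continuous φ) (hψ : Continuous ψ) {B B' : ℝ}
    (hB : ∀ y, |φ y| ≤ B) (hB' : ∀ y, |ψ y| ≤ B') (x : ℝ) :
    Sop j d c θ (fun y => φ y + ψ y) x = Sop j d c θ φ x + Sop j d c θ ψ x := by
  unfold Sop
  rw [← mul_add, ← integral_add]
  · congr 2; ext y; ring
  · exact kphi_int j (phi_comp_cont hφ _ _).aestronglyMeasurable (fun y => hB _)
  · exact kphi_int j (phi_comp_cont hψ _ _).aestronglyMeasurable (fun y => hB' _)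

lemma Sop_holder {d c θ : ℝ} (hd : 0 < d) (hθ : 0 < θ) {φ : ℝ → ℝ} (hφ : Continuous φ) {B B' : ℝ}
    (hB' : ∀ y, |φ y| ≤ B')
    (hB : ∀ a b, |φ a - φ b| ≤ B * √|a - b|) (x : ℝ) :
    |Sop 2 d c θ φ x| ≤ CS d * θ ^ (-(3/4):ℝ) * B := by
  have hB0 : 0 ≤ B := by
    have := (abs_nonneg _).trans (hB 1 0); simpa using this
  set σ := sg d θ with hσ
  have hσ0 : 0 < σ := sg_pos hd hθ
  set X := x + c * θ
  have e1 : ∫ y, kk 2 y * φ (X + σ * y) = ∫ y, kk 2 y * (φ (X + σ * y) - φ X) := by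
    have i1 := kphi_int 2 (phi_comp_cont hφ X σ).aestronglyMeasurable (fun y => hB' _)
    have i2 : Integrable fun y => kk 2 y * φ X := (kk_int 2).mul_const _
    have : ∫ y, kk 2 y * (φ (X + σ * y) - φ X) = ∫ y, (kk 2 y * φ (X + σ * y) - kk 2 y * φ X) := by
      congr 1; ext y; ring
    rw [this, integral_sub i1 i2, integral_mul_const, kk2_integral]; ring
  have e2 : |∫ y, kk 2 y * (φ (X + σ * y) - φ X)| ≤ 48 * Real.pi * (B * √σ) := by
    have h := norm_integral_le_of_norm_le (μ := volume) (f := fun y => kk 2 y * (φ (X + σ * y) - φ X))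
      (w_int.mul_const (B * √σ))
      (Filter.Eventually.of_forall fun y => by
        rw [Real.norm_eq_abs, abs_mul]
        have h1 := kk_le 2 y
        have h2 := hB (X + σ * y) X
        have h3 : √|X + σ * y - X| = √σ * √|y| := by
          rw [show X + σ * y - X = σ * y by ring, abs_mul, abs_of_pos hσ0, Real.sqrt_mul hσ0.le]
        rw [h3] at h2
        have h4 : √|y| ≤ 1 + y ^ 2 := by
          rw [Real.sqrt_le_left (by positivity)]
          nlinarith [abs_le_one_add_sq y, sq_nonneg y]
        calc _ ≤ (48 * ((1 + y ^ 2) ^ 2)⁻¹) * (B * (√σ * (1 + y ^ 2))) := by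
              gcongr
              exact h2.trans (by gcongr)
          _ = _ := by field_simp)
    rw [integral_mul_const, integral_const_mul, integral_univ_inv_one_add_sq] at h
    exact h
  unfold Sop CS
  rw [← hσ, e1, abs_mul]
  have h0 : 0 ≤ σ⁻¹ := inv_nonneg.2 hσ0.le
  have h5 : (1:ℝ) ≤ 1 + (√(2 * d))⁻¹ := by
    have : 0 ≤ (√(2 * d))⁻¹ := by positivity
    linarith
  have h6 : |σ⁻¹ ^ 2| * √σ ≤ (1 + (√(2 * d))⁻¹) ^ 2 * θ ^ (-(3/4) : ℝ) := by
    rw [abs_of_nonneg (by positivity)]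
    have h7 : σ⁻¹ ^ 2 * √σ = (σ⁻¹) ^ (3/2 : ℝ) := by
      rw [Real.sqrt_eq_rpow, Real.inv_rpow hσ0.le, ← Real.rpow_neg hσ0.le, inv_pow, ← Real.rpow_natCast,
        ← Real.rpow_neg hσ0.le, ← Real.rpow_add hσ0]
      norm_num
    rw [h7]
    have h8 := Real.rpow_le_rpow h0 (sg_inv_le hd hθ.le) (by norm_num : (0:ℝ) ≤ 3/2)
    rw [Real.mul_rpow (by positivity) (by positivity), ← Real.rpow_mul hθ.le] at h8
    refine h8.trans ?_
    have h9 : (1 + (√(2 * d))⁻¹) ^ (3/2 : ℝ) ≤ (1 + (√(2 * d))⁻¹) ^ 2 := by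
      rw [← Real.rpow_natCast]
      exact Real.rpow_le_rpow_of_exponent_le h5 (by norm_num)
    have h10 : (-(1/2) * (3/2) : ℝ) = -(3/4) := by norm_num
    rw [h10]
    gcongr
  calc _ ≤ |σ⁻¹ ^ 2| * (48 * Real.pi * (B * √σ)) := by gcongr
    _ = (|σ⁻¹ ^ 2| * √σ) * (48 * Real.pi * B) := by ring
    _ ≤ ((1 + (√(2 * d))⁻¹) ^ 2 * θ ^ (-(3/4) : ℝ)) * (48 * Real.pi * B) := by gcongr
    _ = _ := by ring

lemma Sop_deriv_x {j : ℕ} (hj : j ≤ 1) {d c θ : ℝ} (hd : 0 < d) (hθ : 0 < θ) {φ : ℝ → ℝ} (hφ : Continuous φ)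
    {B : ℝ} (hB : ∀ y, |φ y| ≤ B) (x : ℝ) :
    HasDerivAt (fun x => Sop j d c θ φ x) (Sop (j + 1) d c θ φ x) x := by
  have hσ0 : 0 < sg d θ := sg_pos hd hθ
  have hk : ∀ y, HasDerivAt (kk j) (-(kk (j + 1) y)) y := by
    interval_cases j
    · exact kk0_hasDerivAt
    · exact kk1_hasDerivAt
  have h := hasDerivAt_avg (kk j) (fun y => -(kk (j + 1) y)) φ hk (kk_cont _).neg 48 (kk_le1 j)
    (fun y => by rw [abs_neg]; exact kk_le1 _ y)
    (fun y => by rw [mul_neg, abs_neg]; exact ykk_le1 _ y) hφ B hB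
    (fun x => x + c * θ) (fun _ => sg d θ) (fun _ => 1) (fun _ => 0) x 1 (sg d θ) (sg d θ) 1 one_pos hσ0
    (fun r _ => (hasDerivAt_id r).add_const _) (fun r _ => hasDerivAt_const _ _)
    (fun r hr => ⟨le_rfl, le_rfl, by
      rw [Metric.mem_ball, Real.dist_eq] at hr
      rw [show r + c * θ - (x + c * θ) = r - x by ring]; exact hr.le, by simp, by simp⟩)
  refine (h.const_mul (((sg d θ)⁻¹) ^ j)).congr_deriv ?_
  unfold Sop
  rw [pow_succ, mul_assoc, ← integral_const_mul]
  rw [← integral_const_mul, ← integral_const_mul]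
  congr 1; ext y; ring

lemma Sop_deriv_t {d c θ : ℝ} (hd : 0 < d) (hθ : 0 < θ) {φ : ℝ → ℝ} (hφ : Continuous φ)
    {B : ℝ} (hB : ∀ y, |φ y| ≤ B) (x : ℝ) :
    HasDerivAt (fun θ => Sop 0 d c θ φ x) (d * Sop 2 d c θ φ x + c * Sop 1 d c θ φ x) θ := by
  have hσ0 : 0 < sg d θ := sg_pos hd hθ
  have hm : Metric.ball θ (θ/2) ⊆ Ioo (θ/2) (2*θ) := by
    intro r hr
    rw [Metric.mem_ball, Real.dist_eq, abs_lt] at hr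
    constructor <;> linarith [hr.1, hr.2]
  have hlo : 0 < sg d (θ/2) := sg_pos hd (by linarith)
  set D := |c| * θ + |c| + d / sg d (θ/2) with hD
  have hsm : ∀ r, 0 < r → HasDerivAt (fun r => sg d r) (d / sg d r) r := by
    intro r hr
    have h1 : HasDerivAt (fun r => 2 * d * r) (2 * d) r := by
      simpa using (hasDerivAt_id r).const_mul (2 * d)
    refine (h1.sqrt (by positivity)).congr_deriv ?_
    unfold sg
    field_simp
  have h := hasDerivAt_avg (kk 0) (fun y => -(kk 1 y)) φ kk0_hasDerivAt (kk_cont _).neg 48 (kk_le1 0)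
    (fun y => by rw [abs_neg]; exact kk_le1 _ y)
    (fun y => by rw [mul_neg, abs_neg]; exact ykk_le1 _ y) hφ B hB
    (fun r => x + c * r) (fun r => sg d r) (fun _ => c) (fun r => d / sg d r) θ (θ/2) (sg d (θ/2)) (sg d (2 * θ))
    D (by linarith) hlo
    (fun r _ => by simpa using ((hasDerivAt_id r).const_mul c).const_add x)
    (fun r hr => hsm r (by linarith [(hm hr).1]))
    (fun r hr => by
      have h1 := hm hr
      have hr0 : 0 < r := by linarith [h1.1]
      have m1 : sg d (θ/2) ≤ sg d r := by
        unfold sg; apply Real.sqrt_le_sqrt; have := h1.1.le; gcongr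
      have m2 : sg d r ≤ sg d (2 * θ) := by
        unfold sg; apply Real.sqrt_le_sqrt; have := h1.2.le; gcongr
      have p1 : 0 ≤ |c| * θ := by positivity
      have p2 : 0 ≤ d / sg d (θ/2) := by positivity
      refine ⟨m1, m2, ?_, ?_, ?_⟩
      · rw [show x + c * r - (x + c * θ) = c * (r - θ) by ring, abs_mul]
        rw [Metric.mem_ball, Real.dist_eq] at hr
        have : |c| * |r - θ| ≤ |c| * θ := by gcongr; linarith
        linarith [abs_nonneg c]
      · linarith
      · rw [abs_of_nonneg (div_nonneg hd.le (sg_nonneg _ _))]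
        have : d / sg d r ≤ d / sg d (θ/2) := by gcongr
        linarith [abs_nonneg c])
  have e0 : (fun θ => Sop 0 d c θ φ x) = fun r => ∫ y, kk 0 y * φ (x + c * r + sg d r * y) := by
    ext r; simp [Sop]
  rw [e0]
  refine h.congr_deriv ?_
  unfold Sop
  have i1 := kphi_int 1 (phi_comp_cont hφ (x + c * θ) (sg d θ)).aestronglyMeasurable (fun y => hB _)
  have i2 := kphi_int 2 (phi_comp_cont hφ (x + c * θ) (sg d θ)).aestronglyMeasurable (fun y => hB _)
  rw [← mul_assoc, ← mul_assoc, ← integral_const_mul, ← integral_const_mul, ← integral_add (i2.const_mul _) (i1.const_mul _)]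
  congr 1; ext y
  have : kk 0 y = gam y := rfl
  have : kk 1 y = y * gam y := rfl
  have : kk 2 y = (y ^ 2 - 1) * gam y := rfl
  simp only [*]
  field_simp
  ring

lemma min_le_sqrt {a b m : ℝ} (hm : 0 ≤ m) (ha : m ≤ a) (hb : m ≤ b) : m ≤ √(a * b) := by
  apply Real.le_sqrt_of_sq_le
  rw [sq]; gcongr
  linarith

lemma Sop1_holder {d c θ : ℝ} (hd : 0 < d) (hθ : 0 < θ) {φ : ℝ → ℝ} (hφ : Continuous φ) {B : ℝ}
    (hB : ∀ y, |φ y| ≤ B) (x x' : ℝ) :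
    |Sop 1 d c θ φ x - Sop 1 d c θ φ x'| ≤ 2 * CS d * θ ^ (-(3/4):ℝ) * B * √|x - x'| := by
  have hB0 : 0 ≤ B := (abs_nonneg _).trans (hB 0)
  have hC := CS_pos d
  have h1 : |Sop 1 d c θ φ x - Sop 1 d c θ φ x'| ≤ 2 * (CS d * θ ^ (-(1/2):ℝ) * B) := by
    have a := Sop_bound (j := 1) (by norm_num) hd hθ.le hB x (c := c)
    have b := Sop_bound (j := 1) (by norm_num) hd hθ.le hB x' (c := c)
    rw [show (-((1:ℕ):ℝ)/2) = -(1/2) by norm_num] at a b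
    linarith [abs_sub (Sop 1 d c θ φ x) (Sop 1 d c θ φ x')]
  have h2 : |Sop 1 d c θ φ x - Sop 1 d c θ φ x'| ≤ CS d * θ ^ (-1:ℝ) * B * |x - x'| := by
    have := Convex.norm_image_sub_le_of_norm_hasDerivWithin_le (s := univ) (f := fun x => Sop 1 d c θ φ x)
      (f' := fun x => Sop 2 d c θ φ x) (C := CS d * θ ^ (-1:ℝ) * B) (x := x') (y := x)
      (fun y _ => (Sop_deriv_x (j := 1) le_rfl hd hθ hφ hB y).hasDerivWithinAt)
      (fun y _ => by
        have := Sop_bound (j := 2) le_rfl hd hθ.le hB y (c := c)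
        rw [show (-((2:ℕ):ℝ)/2) = -1 by norm_num] at this
        exact this) convex_univ trivial trivial
    simpa [Real.norm_eq_abs] using this
  refine (min_le_sqrt (abs_nonneg _) h1 h2).trans ?_
  apply Real.sqrt_le_iff.2
  refine ⟨by positivity, ?_⟩
  have e : (2 * CS d * θ ^ (-(3/4):ℝ) * B * √|x - x'|) ^ 2 =
      4 * CS d ^ 2 * (θ ^ (-(1/2):ℝ) * θ ^ (-1:ℝ)) * B ^ 2 * |x - x'| := by
    rw [← Real.rpow_add hθ, mul_pow, mul_pow, mul_pow, mul_pow, Real.sq_sqrt (abs_nonneg _), ← Real.rpow_natCast (θ ^ (-(3/4):ℝ)),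
      ← Real.rpow_mul hθ.le]
    norm_num
  rw [e]
  have p : 0 ≤ CS d ^ 2 * (θ ^ (-(1/2):ℝ) * θ ^ (-1:ℝ)) * B ^ 2 * |x - x'| := by positivity
  nlinarith

/-- integration by parts -/
lemma Sop_ibp {d c θ : ℝ} (hd : 0 < d) (hθ : 0 < θ) {φ φ' : ℝ → ℝ} (hφ' : Continuous φ') {B B' : ℝ}
    (hB : ∀ y, |φ y| ≤ B) (hB' : ∀ y, |φ' y| ≤ B') (hder : ∀ y, HasDerivAt φ (φ' y) y) (x : ℝ) :
    Sop 0 d c θ φ' x = Sop 1 d c θ φ x := by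
  have hφ : Continuous φ := continuous_iff_continuousAt.2 fun y => (hder y).continuousAt
  have h1 := Sop_deriv_x (j := 0) (by norm_num) hd hθ hφ hB x (c := c)
  have hB0 : 0 ≤ B' := (abs_nonneg _).trans (hB' 0)
  have h2 : HasDerivAt (fun x => Sop 0 d c θ φ x) (Sop 0 d c θ φ' x) x := by
    have := (hasDerivAt_integral_of_dominated_loc_of_deriv_le (μ := volume) (x₀ := x) (s := univ) Filter.univ_mem
      (F := fun x y => kk 0 y * φ (x + c * θ + sg d θ * y))
      (F' := fun x y => kk 0 y * φ' (x + c * θ + sg d θ * y))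
      (bound := fun y => (48 * (1 + y ^ 2)⁻¹) * B')
      (Filter.Eventually.of_forall fun r => ((kk_cont 0).mul (phi_comp_cont hφ _ _)).aestronglyMeasurable)
      (kphi_int 0 (phi_comp_cont hφ _ _).aestronglyMeasurable fun y => hB _)
      ((kk_cont 0).mul (phi_comp_cont hφ' _ _)).aestronglyMeasurable
      (Filter.Eventually.of_forall fun y r _ => by
        rw [Real.norm_eq_abs, abs_mul]
        have := kk_le1 0 y
        have := hB' (r + c * θ + sg d θ * y)
        gcongr)
      (w_int.mul_const B')
      (Filter.Eventually.of_forall fun y r _ => by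
        have h3 : HasDerivAt (fun r => r + c * θ + sg d θ * y) 1 r := ((hasDerivAt_id r).add_const _).add_const _
        have := ((hder (r + c * θ + sg d θ * y)).comp r h3).const_mul (kk 0 y)
        simpa using this)).2
    simpa [Sop] using this
  exact h2.unique h1

/-- abstract continuity of Gaussian averages -/
lemma avg_cont (j : ℕ) {Y : Type*} [TopologicalSpace Y] [FirstCountableTopology Y] {Φ : Y → ℝ → ℝ} {S : Set Y} {p₀ : Y}
    {B : ℝ} (hm : ∀ᶠ p in nhdsWithin p₀ S, Continuous (Φ p))
    (hb : ∀ᶠ p in nhdsWithin p₀ S, ∀ y, |Φ p y| ≤ B)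
    (hc : ∀ y, ContinuousWithinAt (fun p => Φ p y) S p₀) :
    ContinuousWithinAt (fun p => ∫ y, kk j y * Φ p y) S p₀ := by
  refine continuousWithinAt_of_dominated (bound := fun y => (48 * (1 + y ^ 2)⁻¹) * B) ?_ ?_ (w_int.mul_const B) ?_
  · filter_upwards [hm] with p hp
    exact ((kk_cont j).mul hp).aestronglyMeasurable
  · filter_upwards [hb] with p hp
    refine Filter.Eventually.of_forall fun y => ?_
    rw [Real.norm_eq_abs, abs_mul]
    have := kk_le1 j y
    have := hp y
    gcongr
  · exact Filter.Eventually.of_forall fun y => continuousWithinAt_const.mul (hc y)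

end GRD

namespace GRD
/-- the envelope -/
def Q (z t : ℝ) : ℝ := (1 + t) ^ (1/4 : ℝ) * (1 + t + z ^ 2) ^ (-(3/4) : ℝ)

lemma Q_pos {z t : ℝ} (ht : 0 ≤ t) : 0 < Q z t := by unfold Q; positivity

lemma Q_cont (t : ℝ) (ht : 0 ≤ t) : Continuous fun z => Q z t := by
  unfold Q
  refine continuous_const.mul ?_
  refine Continuous.rpow_const (by fun_prop) fun z => Or.inl ?_
  positivity

lemma Q_le {z t : ℝ} (ht : 0 ≤ t) : Q z t ≤ (1 + t) ^ (-(1/2) : ℝ) := by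
  unfold Q
  have h : (1 + t + z ^ 2) ^ (-(3/4) : ℝ) ≤ (1 + t) ^ (-(3/4) : ℝ) :=
    Real.rpow_le_rpow_of_nonpos (by positivity) (by nlinarith [sq_nonneg z]) (by norm_num)
  calc _ ≤ (1 + t) ^ (1/4 : ℝ) * (1 + t) ^ (-(3/4) : ℝ) := by gcongr
    _ = _ := by rw [← Real.rpow_add (by positivity)]; norm_num

lemma Q_le_one {z t : ℝ} (ht : 0 ≤ t) : Q z t ≤ 1 :=
  (Q_le ht).trans (Real.rpow_le_one_of_one_le_of_nonpos (by linarith) (by norm_num))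

/-- comparison in the good case -/
lemma Q_comp {z z' s t : ℝ} (hs : 0 ≤ s) (hst : s ≤ t)
    (h : (1 + t + z ^ 2) / 4 ≤ 1 + s + z' ^ 2) : Q z' s ≤ 4 * Q z t := by
  have ht : 0 ≤ t := hs.trans hst
  unfold Q
  have h1 : (1 + s + z' ^ 2) ^ (-(3/4) : ℝ) ≤ ((1 + t + z ^ 2) / 4) ^ (-(3/4) : ℝ) :=
    Real.rpow_le_rpow_of_nonpos (by positivity) h (by norm_num)
  have h2 : ((1 + t + z ^ 2) / 4) ^ (-(3/4) : ℝ) ≤ 4 * (1 + t + z ^ 2) ^ (-(3/4) : ℝ) := by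
    rw [Real.div_rpow (by positivity) (by norm_num), div_eq_inv_mul, Real.rpow_neg (by norm_num : (0:ℝ) ≤ 4), inv_inv]
    gcongr
    calc (4:ℝ) ^ (3/4 : ℝ) ≤ 4 ^ (1:ℝ) := Real.rpow_le_rpow_of_exponent_le (by norm_num) (by norm_num)
      _ = 4 := by norm_num
  calc _ ≤ (1 + t) ^ (1/4 : ℝ) * (4 * (1 + t + z ^ 2) ^ (-(3/4) : ℝ)) := by
        gcongr
        exact h1.trans h2
    _ = _ := by ring

def CB (b : ℝ) : ℝ := (1 + 4 * b ^ 2) ^ (3/4 : ℝ)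
lemma CB_pos (b : ℝ) : 0 < CB b := by unfold CB; positivity

lemma CB_ge (b : ℝ) : 1 ≤ CB b := by
  unfold CB; exact Real.one_le_rpow (by nlinarith [sq_nonneg b]) (by norm_num)

/-- lower bound of `Q` when `A ≤ a²(..)`. -/
lemma Q_lower {z t m κ : ℝ} (ht : 0 ≤ t) (hκ : 0 < κ) (hm : 0 < m) (h : 1 + t + z ^ 2 ≤ κ * m) :
    m ^ (-(3/4) : ℝ) * (1 + t) ^ (1/4 : ℝ) ≤ κ ^ (3/4 : ℝ) * Q z t := by
  unfold Q
  have h1 : (κ * m) ^ (-(3/4) : ℝ) ≤ (1 + t + z ^ 2) ^ (-(3/4) : ℝ) :=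
    Real.rpow_le_rpow_of_nonpos (by positivity) h (by norm_num)
  rw [Real.mul_rpow hκ.le hm.le] at h1
  have h2 : κ ^ (3/4 : ℝ) * κ ^ (-(3/4) : ℝ) = 1 := by
    rw [← Real.rpow_add hκ]; norm_num
  calc _ = κ ^ (3/4 : ℝ) * ((κ ^ (-(3/4) : ℝ) * m ^ (-(3/4) : ℝ)) * (1 + t) ^ (1/4 : ℝ)) := by
        rw [← mul_assoc, ← mul_assoc, h2, one_mul]
    _ ≤ κ ^ (3/4 : ℝ) * ((1 + t + z ^ 2) ^ (-(3/4) : ℝ) * (1 + t) ^ (1/4 : ℝ)) := by gcongr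
    _ = _ := by ring

def CD (d : ℝ) : ℝ := (1/d + 4) ^ (3/4 : ℝ) * (2 * d) ^ (1/4 : ℝ) + 4
lemma CD_pos {d : ℝ} (hd : 0 < d) : 0 < CD d := by unfold CD; positivity

/-- pointwise convolution bound -/
lemma CL_pt {d s θ z y : ℝ} (hd : 0 < d) (hs : 0 ≤ s) (hθ : 0 < θ) :
    ((1 + y ^ 2) ^ 2)⁻¹ * Q (z + sg d θ * y) s ≤
      CD d * Q z (s + θ) * ((1 + y ^ 2)⁻¹ + sg d θ * Q (z + sg d θ * y) s) := by
  have hσ := sg_pos hd hθ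
  have hσ2 : sg d θ ^ 2 = 2 * d * θ := by unfold sg; exact Real.sq_sqrt (by positivity)
  set σ := sg d θ with hσd
  have hQ := Q_pos (z := z) (t := s + θ) (by linarith)
  have hQ' := Q_pos (z := z + σ * y) (t := s) hs
  have hk : ((1 + y ^ 2) ^ 2)⁻¹ ≤ (1 + y ^ 2)⁻¹ := inv_sq_le y
  have hcd : 4 ≤ CD d := by unfold CD; have : 0 ≤ (1/d + 4) ^ (3/4 : ℝ) * (2 * d) ^ (1/4 : ℝ) := by positivity
                            linarith
  by_cases h : (1 + (s + θ) + z ^ 2) / 4 ≤ 1 + s + (z + σ * y) ^ 2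
  · have h1 := Q_comp hs (by linarith : s ≤ s + θ) h
    have h2 : 0 ≤ σ * Q (z + σ * y) s := by positivity
    calc _ ≤ (1 + y ^ 2)⁻¹ * (CD d * Q z (s + θ)) := by
          gcongr
          exact h1.trans (by gcongr)
      _ ≤ (CD d * Q z (s + θ)) * ((1 + y ^ 2)⁻¹ + σ * Q (z + σ * y) s) := by
          rw [mul_comm]; 
          have := CD_pos hd
          gcongr; linarith
  · push Not at h
    have hA : 1 + (s + θ) + z ^ 2 ≤ (1/d + 4) * (σ ^ 2 * (1 + y ^ 2)) := by
      have e : (1/d + 4) * (σ ^ 2 * (1 + y ^ 2)) = 2 * θ * (1 + y ^ 2) + 4 * (σ ^ 2 * (1 + y ^ 2)) := by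
        rw [hσ2]; field_simp
      rw [e]
      have : 0 ≤ θ * y ^ 2 := by positivity
      nlinarith [sq_nonneg (z + σ * y + σ * y), sq_nonneg σ]
    have h1 := Q_lower (by linarith : 0 ≤ s + θ) (by positivity) (by positivity) hA
    have h2 : (σ ^ 2 * (1 + y ^ 2)) ^ (-(3/4) : ℝ) = (1 + y ^ 2) ^ (-(3/4) : ℝ) * σ ^ (-(3/2) : ℝ) := by
      rw [Real.mul_rpow (by positivity) (by positivity), ← Real.rpow_natCast, ← Real.rpow_mul hσ.le]
      norm_num [mul_comm]
    have h3 : ((1 + y ^ 2) ^ 2)⁻¹ ≤ (1 + y ^ 2) ^ (-(3/4) : ℝ) := by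
      rw [← Real.rpow_natCast, ← Real.rpow_neg (by positivity)]
      exact Real.rpow_le_rpow_of_exponent_le (by nlinarith [sq_nonneg y]) (by norm_num)
    have h4 : σ ^ (1/2 : ℝ) ≤ (2 * d) ^ (1/4 : ℝ) * (1 + (s + θ)) ^ (1/4 : ℝ) := by
      have : σ ^ (1/2 : ℝ) = (2 * d * θ) ^ (1/4 : ℝ) := by
        rw [← hσ2, ← Real.rpow_natCast, ← Real.rpow_mul hσ.le]; norm_num
      rw [this, Real.mul_rpow (by positivity) hθ.le]
      gcongr
      linarith
    have h5 : ((1 + y ^ 2) ^ 2)⁻¹ ≤ CD d * Q z (s + θ) * σ := by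
      rw [h2] at h1
      have e : σ ^ (-(3/2) : ℝ) * σ ^ (1/2 : ℝ) * σ = 1 := by
        nth_rewrite 3 [← Real.rpow_one σ]
        rw [← Real.rpow_add hσ, ← Real.rpow_add hσ]; norm_num
      calc _ ≤ (1 + y ^ 2) ^ (-(3/4) : ℝ) * (σ ^ (-(3/2) : ℝ) * σ ^ (1/2 : ℝ) * σ) := by rw [e, mul_one]; exact h3
        _ ≤ (1 + y ^ 2) ^ (-(3/4) : ℝ) * (σ ^ (-(3/2) : ℝ) * ((2 * d) ^ (1/4 : ℝ) * (1 + (s + θ)) ^ (1/4 : ℝ)) * σ) := by gcongr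
        _ = (2 * d) ^ (1/4 : ℝ) * σ * ((1 + y ^ 2) ^ (-(3/4) : ℝ) * σ ^ (-(3/2) : ℝ) * (1 + (s + θ)) ^ (1/4 : ℝ)) := by ring
        _ ≤ (2 * d) ^ (1/4 : ℝ) * σ * ((1/d + 4) ^ (3/4 : ℝ) * Q z (s + θ)) := by gcongr
        _ = (CD d - 4) * Q z (s + θ) * σ := by unfold CD; ring
        _ ≤ _ := by gcongr; linarith
    have h6 : 0 ≤ (1 + y ^ 2)⁻¹ := by positivity
    calc _ ≤ CD d * Q z (s + θ) * σ * Q (z + σ * y) s := by gcongr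
      _ = CD d * Q z (s + θ) * (σ * Q (z + σ * y) s) := by ring
      _ ≤ _ := by
        have := CD_pos hd
        gcongr; linarith

def CQ : ℝ := ∫ v : ℝ, (1 + v ^ 2) ^ (-(3/4) : ℝ)

lemma CQ_int0 : Integrable fun v : ℝ => (1 + v ^ 2) ^ (-(3/4) : ℝ) := by
  have := integrable_rpow_neg_one_add_norm_sq (E := ℝ) (μ := volume) (r := 3/2) (by norm_num)
  simp only [Real.norm_eq_abs, sq_abs] at this
  convert this using 3
  norm_num

lemma CQ_nonneg : 0 ≤ CQ := integral_nonneg fun v => by positivity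

lemma Q_scale {w t : ℝ} (ht : 0 ≤ t) : Q w t = (√(1 + t))⁻¹ * (1 + ((√(1+t))⁻¹ * w) ^ 2) ^ (-(3/4) : ℝ) := by
  unfold Q
  have h1 : (0:ℝ) < 1 + t := by linarith
  have h2 : 1 + t + w ^ 2 = (1 + t) * (1 + ((√(1+t))⁻¹ * w) ^ 2) := by
    rw [mul_pow, inv_pow, Real.sq_sqrt h1.le]; field_simp
  rw [h2, Real.mul_rpow h1.le (by positivity), ← mul_assoc, ← Real.rpow_add h1, Real.sqrt_eq_rpow,
    ← Real.rpow_neg h1.le]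
  norm_num

lemma Q_int {t : ℝ} (ht : 0 ≤ t) : Integrable (fun w => Q w t) ∧ ∫ w, Q w t = CQ := by
  have h1 : (0:ℝ) < √(1 + t) := by positivity
  have e : (fun w => Q w t) = fun w => (√(1 + t))⁻¹ * (fun v : ℝ => (1 + v ^ 2) ^ (-(3/4) : ℝ)) ((√(1+t))⁻¹ * w) := by
    ext w; rw [Q_scale ht]
  constructor
  · rw [e]
    exact (CQ_int0.comp_mul_left' (by positivity)).const_mul _
  · rw [e, integral_const_mul, Measure.integral_comp_mul_left (fun v : ℝ => (1 + v ^ 2) ^ (-(3/4) : ℝ))]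
    rw [inv_inv, abs_of_pos h1, smul_eq_mul, ← mul_assoc, inv_mul_cancel₀ h1.ne', one_mul]; rfl

/-- integrals of `Q` along lines -/
lemma Q_line {z b t : ℝ} (ht : 0 ≤ t) (hb : b ≠ 0) :
    Integrable (fun s => Q (z + b * s) t) ∧ ∫ s, Q (z + b * s) t = |b⁻¹| * CQ := by
  obtain ⟨h1, h2⟩ := Q_int ht
  have h3 : Integrable fun w => Q (z + w) t := h1.comp_add_left z
  refine ⟨h3.comp_mul_left' hb, ?_⟩
  have := Measure.integral_comp_mul_left (fun w => Q (z + w) t) b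
  rw [this, integral_add_left_eq_self (fun w => Q w t) z, h2, smul_eq_mul]

lemma CL {d s θ z : ℝ} (j : ℕ) (hd : 0 < d) (hs : 0 ≤ s) (hθ : 0 < θ) {φ : ℝ → ℝ} {B : ℝ} (hB : 0 ≤ B)
    (hφ : ∀ y, |φ y| ≤ B * Q (z + sg d θ * y) s) :
    |∫ y, kk j y * φ y| ≤ 48 * CD d * (Real.pi + CQ) * B * Q z (s + θ) := by
  have hσ := sg_pos hd hθ
  obtain ⟨i1, i2⟩ := Q_line (z := z) hs hσ.ne'
  have ib : Integrable fun y => (48 * CD d * B * Q z (s + θ)) * ((1 + y ^ 2)⁻¹ + sg d θ * Q (z + sg d θ * y) s) :=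
    (integrable_inv_one_add_sq.add (i1.const_mul _)).const_mul _
  have h := norm_integral_le_of_norm_le (μ := volume) (f := fun y => kk j y * φ y) ib
    (Filter.Eventually.of_forall fun y => by
      rw [Real.norm_eq_abs, abs_mul]
      calc _ ≤ (48 * ((1 + y ^ 2) ^ 2)⁻¹) * (B * Q (z + sg d θ * y) s) := by
            have := kk_le j y
            have := hφ y
            gcongr
        _ = 48 * B * (((1 + y ^ 2) ^ 2)⁻¹ * Q (z + sg d θ * y) s) := by ring
        _ ≤ 48 * B * (CD d * Q z (s + θ) * ((1 + y ^ 2)⁻¹ + sg d θ * Q (z + sg d θ * y) s)) := by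
            exact mul_le_mul_of_nonneg_left (CL_pt hd hs hθ) (by positivity)
        _ = _ := by ring)
  refine h.trans (le_of_eq ?_)
  rw [integral_const_mul, integral_add integrable_inv_one_add_sq (i1.const_mul _), integral_const_mul, i2,
    integral_univ_inv_one_add_sq, abs_of_pos (inv_pos.2 hσ)]
  field_simp

/-- products -/
lemma UV {z z' s b : ℝ} (hs : 0 ≤ s) (hb : b ≠ 0) (h : z' = z + b * s) :
    Q z s * Q z' s ≤ (min (1/2) (b ^ 2 / 8)) ^ (-(3/4) : ℝ) * (1 + s) ^ (-(5/4) : ℝ) * (Q z s + Q z' s) := by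
  have hq := Q_pos (z := z) hs
  have hq' := Q_pos (z := z') hs
  set κ := min (1/2) (b ^ 2 / 8) with hκ
  have hκ0 : 0 < κ := by
    have : 0 < b ^ 2 := by positivity
    rw [hκ]; apply lt_min <;> linarith
  have key : ∀ w, (b * s) ^ 2 ≤ 4 * w ^ 2 → Q w s ≤ κ ^ (-(3/4) : ℝ) * (1 + s) ^ (-(5/4) : ℝ) := by
    intro w hw
    have k1 : κ ≤ 1/2 := min_le_left _ _
    have k2 : κ ≤ b ^ 2 / 8 := min_le_right _ _
    have h1 : κ * (1 + s) ^ 2 ≤ 1 + s + w ^ 2 := by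
      have a1 : κ * s ^ 2 ≤ b ^ 2 / 8 * s ^ 2 := by gcongr
      have a2 : κ * s ≤ 1/2 * s := by gcongr
      nlinarith
    have h2 : (1 + s + w ^ 2) ^ (-(3/4) : ℝ) ≤ (κ * (1 + s) ^ 2) ^ (-(3/4) : ℝ) :=
      Real.rpow_le_rpow_of_nonpos (by positivity) h1 (by norm_num)
    rw [Real.mul_rpow hκ0.le (by positivity), ← Real.rpow_natCast (1 + s), ← Real.rpow_mul (by positivity)] at h2
    unfold Q
    calc _ ≤ (1 + s) ^ (1/4 : ℝ) * (κ ^ (-(3/4) : ℝ) * (1 + s) ^ (((2:ℕ):ℝ) * -(3/4))) := by gcongr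
      _ = κ ^ (-(3/4) : ℝ) * ((1 + s) ^ (1/4 : ℝ) * (1 + s) ^ (((2:ℕ):ℝ) * -(3/4))) := by ring
      _ = _ := by rw [← Real.rpow_add (by positivity)]; norm_num
  have hc : (b * s) ^ 2 ≤ 4 * z ^ 2 ∨ (b * s) ^ 2 ≤ 4 * z' ^ 2 := by
    by_contra hh
    push Not at hh
    have : b * s = z' - z := by rw [h]; ring
    rw [this] at hh
    nlinarith [sq_nonneg (z + z')]
  rcases hc with hc | hc
  · have := key z hc
    calc _ ≤ (κ ^ (-(3/4) : ℝ) * (1 + s) ^ (-(5/4) : ℝ)) * Q z' s := by gcongr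
      _ ≤ _ := by gcongr; linarith
  · have := key z' hc
    calc _ ≤ Q z s * (κ ^ (-(3/4) : ℝ) * (1 + s) ^ (-(5/4) : ℝ)) := by gcongr
      _ = (κ ^ (-(3/4) : ℝ) * (1 + s) ^ (-(5/4) : ℝ)) * Q z s := by ring
      _ ≤ _ := by gcongr; linarith

end GRD

namespace GRD
def TB (a b t s : ℝ) : ℝ := (t/2) ^ (-a) * s ^ (-b) + (t/2) ^ (-b) * (t - s) ^ (-a)

lemma TB_ge {a b t s : ℝ} (ha : 0 ≤ a) (hb : 0 ≤ b) (hs : 0 < s) (hst : s < t) :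
    (t - s) ^ (-a) * s ^ (-b) ≤ TB a b t s := by
  unfold TB
  have h1 : 0 < t - s := by linarith
  have h2 : 0 < t / 2 := by linarith
  rcases le_total s (t/2) with h | h
  · have : (t - s) ^ (-a) ≤ (t/2) ^ (-a) :=
      Real.rpow_le_rpow_of_nonpos h2 (by linarith) (by linarith)
    have h3 : 0 ≤ (t/2) ^ (-b) * (t - s) ^ (-a) := by positivity
    have : (t - s) ^ (-a) * s ^ (-b) ≤ (t/2) ^ (-a) * s ^ (-b) := by gcongr
    linarith
  · have : s ^ (-b) ≤ (t/2) ^ (-b) :=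
      Real.rpow_le_rpow_of_nonpos h2 (by linarith) (by linarith)
    have h3 : 0 ≤ (t/2) ^ (-a) * s ^ (-b) := by positivity
    have : (t - s) ^ (-a) * s ^ (-b) ≤ (t - s) ^ (-a) * (t/2) ^ (-b) := by gcongr
    linarith

lemma pow_ii {b : ℝ} (hb : b < 1) (t : ℝ) : IntervalIntegrable (fun s : ℝ => s ^ (-b)) volume 0 t :=
  intervalIntegral.intervalIntegrable_rpow' (by linarith)

lemma pow_ii' {a : ℝ} (ha : a < 1) (t : ℝ) : IntervalIntegrable (fun s : ℝ => (t - s) ^ (-a)) volume 0 t := by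
  have := (pow_ii ha t).comp_sub_left t
  simp only [sub_zero, sub_self] at this
  exact this.symm

lemma pow_int {b : ℝ} (hb : b < 1) (t : ℝ) : ∫ s in (0:ℝ)..t, s ^ (-b) = t ^ (1 - b) / (1 - b) := by
  rw [integral_rpow (Or.inl (by linarith)), Real.zero_rpow (by linarith)]
  rw [show -b + 1 = 1 - b by ring, sub_zero]

lemma pow_int' {a : ℝ} (ha : a < 1) (t : ℝ) : ∫ s in (0:ℝ)..t, (t - s) ^ (-a) = t ^ (1 - a) / (1 - a) := by
  have := intervalIntegral.integral_comp_sub_left (a := 0) (b := t) (fun s : ℝ => s ^ (-a)) t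
  rw [this]; simp only [sub_zero, sub_self]
  exact pow_int ha t

lemma TB_ii {a b : ℝ} (ha : a < 1) (hb : b < 1) (t : ℝ) : IntervalIntegrable (TB a b t) volume 0 t :=
  ((pow_ii hb t).const_mul _).add ((pow_ii' ha t).const_mul _)

lemma TB_int {a b : ℝ} (ha : a < 1) (hb : b < 1) (t : ℝ) : ∫ s in (0:ℝ)..t, TB a b t s =
    (t/2) ^ (-a) * (t ^ (1 - b) / (1 - b)) + (t/2) ^ (-b) * (t ^ (1 - a) / (1 - a)) := by
  unfold TB
  rw [intervalIntegral.integral_add ((pow_ii hb t).const_mul _) ((pow_ii' ha t).const_mul _),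
    intervalIntegral.integral_const_mul, intervalIntegral.integral_const_mul, pow_int hb, pow_int' ha]

lemma TB_half (t : ℝ) (ht : 0 < t) : ∫ s in (0:ℝ)..t, TB (1/2) (1/2) t s ≤ 8 := by
  rw [TB_int (by norm_num) (by norm_num)]
  have h1 : (t/2) ^ (-(1/2) : ℝ) = 2 ^ (1/2 : ℝ) * t ^ (-(1/2) : ℝ) := by
    rw [Real.div_rpow ht.le (by norm_num), Real.rpow_neg (by norm_num : (0:ℝ) ≤ 2)]
    field_simp
  have h2 : t ^ (-(1/2) : ℝ) * t ^ (1 - 1/2 : ℝ) = 1 := by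
    rw [← Real.rpow_add ht]; norm_num
  have h3 : (2:ℝ) ^ (1/2 : ℝ) ≤ 2 := by
    calc (2:ℝ) ^ (1/2 : ℝ) ≤ 2 ^ (1:ℝ) := Real.rpow_le_rpow_of_exponent_le (by norm_num) (by norm_num)
      _ = 2 := by norm_num
  rw [h1]
  calc _ = 4 * 2 ^ (1/2 : ℝ) * (t ^ (-(1/2) : ℝ) * t ^ (1 - 1/2 : ℝ)) := by ring
    _ ≤ _ := by rw [h2]; linarith

lemma int54 (t : ℝ) (ht : 0 ≤ t) : IntervalIntegrable (fun s : ℝ => (1 + s) ^ (-(5/4) : ℝ)) volume 0 t ∧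
    ∫ s in (0:ℝ)..t, (1 + s) ^ (-(5/4) : ℝ) ≤ 4 := by
  constructor
  · apply ContinuousOn.intervalIntegrable
    rw [uIcc_of_le ht]
    refine ContinuousOn.rpow_const (by fun_prop) fun s hs => Or.inl ?_
    have := hs.1; positivity
  · have h := intervalIntegral.integral_comp_add_left (a := 0) (b := t) (fun x : ℝ => x ^ (-(5/4) : ℝ)) 1
    rw [h, integral_rpow (Or.inr ⟨by norm_num, by rw [uIcc_of_le (by linarith)]; simp [ht]⟩)]
    have : 0 ≤ (1 + t) ^ (-(5/4) + 1 : ℝ) := by positivity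
    rw [add_zero, Real.one_rpow, div_le_iff_of_neg (by norm_num)]
    linarith

def IND (t s : ℝ) : ℝ := (Iio (√(1 + t))).indicator (fun r : ℝ => r ^ (-(1/2) : ℝ)) (t - s)

lemma IND_int (t : ℝ) (ht : 0 ≤ t) : IntervalIntegrable (IND t) volume 0 t ∧
    ∫ s in (0:ℝ)..t, IND t s ≤ 2 * (1 + t) ^ (1/4 : ℝ) := by
  set F : ℝ → ℝ := (Iio (√(1 + t))).indicator (fun r : ℝ => r ^ (-(1/2) : ℝ)) with hF
  have hp := pow_ii (b := 1/2) (by norm_num) t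
  have i1 : IntervalIntegrable F volume 0 t := by
    rw [intervalIntegrable_iff] at hp ⊢
    exact hp.indicator measurableSet_Iio
  constructor
  · have := i1.comp_sub_left t
    simp only [sub_zero, sub_self] at this
    exact this.symm
  · have := intervalIntegral.integral_comp_sub_left (a := 0) (b := t) F t
    simp only [sub_zero, sub_self] at this
    change ∫ s in (0:ℝ)..t, F (t - s) ≤ _
    rw [this, intervalIntegral.integral_of_le ht, hF, setIntegral_indicator measurableSet_Iio]
    have hp2 := pow_ii (b := 1/2) (by norm_num) (√(1+t))
    rw [intervalIntegrable_iff, uIoc_of_le (by positivity)] at hp2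
    have hm : ∫ r in Ioc 0 t ∩ Iio √(1 + t), r ^ (-(1/2) : ℝ) ≤ ∫ r in Ioc 0 (√(1 + t)), r ^ (-(1/2) : ℝ) := by
      apply setIntegral_mono_set hp2
      · refine (ae_restrict_mem measurableSet_Ioc).mono fun r hr => ?_
        have := hr.1
        change 0 ≤ r ^ (-(1/2) : ℝ)
        positivity
      · exact LE.le.eventuallyLE (fun r hr => ⟨hr.1.1, (le_of_lt hr.2)⟩ : Ioc 0 t ∩ Iio √(1 + t) ≤ Ioc 0 (√(1 + t)))
    refine hm.trans (le_of_eq ?_)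
    rw [← intervalIntegral.integral_of_le (by positivity), pow_int (by norm_num), Real.sqrt_eq_rpow,
      ← Real.rpow_mul (by positivity)]
    norm_num
    ring

lemma T_caseB {z b s t : ℝ} (hs : 0 ≤ s) (hst : s ≤ t)
    (h : ¬ (1 + t + z ^ 2) / 4 ≤ 1 + t + (z + b * s) ^ 2) :
    (1 + s) ^ (-(3/2) : ℝ) * (1 + t) ^ (1/4 : ℝ) ≤ CB b * Q z t := by
  push Not at h
  have h1 : 1 + t + z ^ 2 ≤ (1 + 4 * b ^ 2) * (1 + s) ^ 2 := by
    have : b ^ 2 * s ^ 2 ≤ b ^ 2 * (1 + s) ^ 2 := by gcongr; linarith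
    nlinarith [sq_nonneg (z + b * s + b * s), sq_nonneg (1 + s)]
  have h2 := Q_lower (by linarith : 0 ≤ t) (by positivity) (by positivity) h1
  rw [← Real.rpow_natCast (1 + s), ← Real.rpow_mul (by positivity)] at h2
  unfold CB
  norm_num at h2 ⊢
  exact h2

lemma T2 {z b s t : ℝ} (hs : 0 ≤ s) (hst : s ≤ t) :
    (1 + s) ^ (-(5/4) : ℝ) * Q (z + b * s) t ≤
      (4 + CB b) * Q z t * ((1 + s) ^ (-(5/4) : ℝ) + Q (z + b * s) t) := by
  have ht : 0 ≤ t := hs.trans hst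
  have hQ := Q_pos (z := z) ht
  have hQ' := Q_pos (z := z + b * s) ht
  have hC := CB_pos b
  have hp : 0 < (1 + s) ^ (-(5/4) : ℝ) := by positivity
  by_cases h : (1 + t + z ^ 2) / 4 ≤ 1 + t + (z + b * s) ^ 2
  · have h1 := Q_comp ht le_rfl h
    calc _ ≤ (1 + s) ^ (-(5/4) : ℝ) * (4 * Q z t) := by gcongr
      _ = 4 * Q z t * (1 + s) ^ (-(5/4) : ℝ) := by ring
      _ ≤ _ := by gcongr <;> linarith
  · have h1 := T_caseB hs hst h
    have h2 : (1 + s) ^ (-(5/4) : ℝ) ≤ CB b * Q z t := by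
      refine le_trans ?_ h1
      calc (1 + s) ^ (-(5/4) : ℝ) = (1 + s) ^ (-(3/2) : ℝ) * (1 + s) ^ (1/4 : ℝ) := by
            rw [← Real.rpow_add (by positivity)]; norm_num
        _ ≤ _ := by gcongr
    calc _ ≤ (CB b * Q z t) * Q (z + b * s) t := by gcongr
      _ ≤ _ := by gcongr <;> linarith

lemma T3 {z b s t : ℝ} (hs : 0 < s) (hst : s < t) :
    (t - s) ^ (-(1/2) : ℝ) * ((1 + s) ^ (-1 : ℝ) * Q (z + b * s) t) ≤
      (4 + CB b) * Q z t * (TB (1/2) (1/2) t s + Q (z + b * s) t + (1 + t) ^ (-(1/4) : ℝ) * IND t s) := by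
  have ht : 0 < t := hs.trans hst
  have hQ := Q_pos (z := z) ht.le
  have hQ' := Q_pos (z := z + b * s) ht.le
  have hC := CB_pos b
  have hts : 0 < t - s := by linarith
  have hTB : (t - s) ^ (-(1/2) : ℝ) * (1 + s) ^ (-1 : ℝ) ≤ TB (1/2) (1/2) t s := by
    refine le_trans ?_ (TB_ge (by norm_num) (by norm_num) hs hst)
    have a1 : (1 + s) ^ (-1 : ℝ) ≤ (1 + s) ^ (-(1/2) : ℝ) :=
      Real.rpow_le_rpow_of_exponent_le (by linarith) (by norm_num)
    have a2 : (1 + s) ^ (-(1/2) : ℝ) ≤ s ^ (-(1/2) : ℝ) :=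
      Real.rpow_le_rpow_of_nonpos hs (by linarith) (by norm_num)
    have := a1.trans a2
    gcongr
  have hTB0 : 0 ≤ TB (1/2) (1/2) t s := le_trans (by positivity) hTB
  have hI0 : 0 ≤ IND t s := by
    unfold IND; apply indicator_apply_nonneg; intro _; positivity
  have hp : 0 ≤ (1 + t) ^ (-(1/4) : ℝ) * IND t s := by positivity
  by_cases h : (1 + t + z ^ 2) / 4 ≤ 1 + t + (z + b * s) ^ 2
  · have h1 := Q_comp ht.le le_rfl h
    calc _ = ((t - s) ^ (-(1/2) : ℝ) * (1 + s) ^ (-1 : ℝ)) * Q (z + b * s) t := by ring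
      _ ≤ TB (1/2) (1/2) t s * (4 * Q z t) := by gcongr
      _ = 4 * Q z t * TB (1/2) (1/2) t s := by ring
      _ ≤ _ := by gcongr <;> linarith
  · have h1 := T_caseB hs.le hst.le h
    have h2 : (1 + s) ^ (-1 : ℝ) ≤ CB b * Q z t * (1 + t) ^ (1/4 : ℝ) := by
      calc (1 + s) ^ (-1 : ℝ) = (1 + s) ^ (-(3/2) : ℝ) * (1 + s) ^ (1/2 : ℝ) := by
            rw [← Real.rpow_add (by positivity)]; norm_num
        _ ≤ (1 + s) ^ (-(3/2) : ℝ) * (1 + t) ^ (1/2 : ℝ) := by gcongr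
        _ = (1 + s) ^ (-(3/2) : ℝ) * (1 + t) ^ (1/4 : ℝ) * (1 + t) ^ (1/4 : ℝ) := by
            rw [mul_assoc, ← Real.rpow_add (by positivity : 0 < 1 + t)]; norm_num
        _ ≤ _ := by gcongr
    have h3 : (t - s) ^ (-(1/2) : ℝ) * ((1 + t) ^ (1/4 : ℝ) * Q (z + b * s) t) ≤
        Q (z + b * s) t + (1 + t) ^ (-(1/4) : ℝ) * IND t s := by
      by_cases h4 : t - s < √(1 + t)
      · have e : IND t s = (t - s) ^ (-(1/2) : ℝ) := by unfold IND; rw [indicator_of_mem (show t - s ∈ Iio (√(1 + t)) from h4)]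
        rw [e]
        have h5 := Q_le (z := z + b * s) ht.le
        calc _ ≤ (t - s) ^ (-(1/2) : ℝ) * ((1 + t) ^ (1/4 : ℝ) * (1 + t) ^ (-(1/2) : ℝ)) := by gcongr
          _ = (1 + t) ^ (-(1/4) : ℝ) * (t - s) ^ (-(1/2) : ℝ) := by
            rw [← Real.rpow_add (by positivity : 0 < 1 + t)]; norm_num [mul_comm]
          _ ≤ _ := by linarith
      · push Not at h4
        have h5 : (t - s) ^ (-(1/2) : ℝ) ≤ (√(1 + t)) ^ (-(1/2) : ℝ) :=
          Real.rpow_le_rpow_of_nonpos (by positivity) h4 (by norm_num)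
        have h6 : (√(1 + t)) ^ (-(1/2) : ℝ) * (1 + t) ^ (1/4 : ℝ) = 1 := by
          rw [Real.sqrt_eq_rpow, ← Real.rpow_mul (by positivity), ← Real.rpow_add (by positivity)]
          norm_num
        calc _ ≤ (√(1 + t)) ^ (-(1/2) : ℝ) * ((1 + t) ^ (1/4 : ℝ) * Q (z + b * s) t) := by gcongr
          _ = Q (z + b * s) t := by rw [← mul_assoc, h6, one_mul]
          _ ≤ _ := by linarith
    calc _ ≤ (t - s) ^ (-(1/2) : ℝ) * ((CB b * Q z t * (1 + t) ^ (1/4 : ℝ)) * Q (z + b * s) t) := by gcongr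
      _ = (CB b * Q z t) * ((t - s) ^ (-(1/2) : ℝ) * ((1 + t) ^ (1/4 : ℝ) * Q (z + b * s) t)) := by ring
      _ ≤ (CB b * Q z t) * (Q (z + b * s) t + (1 + t) ^ (-(1/4) : ℝ) * IND t s) := by gcongr
      _ ≤ _ := by gcongr <;> linarith

def CE (b : ℝ) : ℝ := (10 + 2 * CB b) * (14 + |b⁻¹| * CQ)

lemma CE_pos (b : ℝ) : 0 < CE b := by
  unfold CE; have := CB_pos b; have := CQ_nonneg; positivity

lemma env_int {z b t B : ℝ} (ht : 0 < t) (hb : b ≠ 0) (hB : 0 ≤ B) {F : ℝ → ℝ}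
    (hF : ∀ s, 0 < s → s < t → |F s| ≤ B * ((1 + s) ^ (-(5/4) : ℝ) * (Q z t + Q (z + b * s) t) +
      (t - s) ^ (-(1/2) : ℝ) * ((1 + s) ^ (-(1/2) : ℝ) * Q z t + (1 + s) ^ (-1 : ℝ) * Q (z + b * s) t))) :
    |∫ s in (0:ℝ)..t, F s| ≤ CE b * B * Q z t := by
  have hQ := Q_pos (z := z) ht.le
  have hC := CB_pos b
  obtain ⟨i1, e1⟩ := int54 t ht.le
  obtain ⟨i2', e2'⟩ := Q_line (z := z) ht.le hb
  have i2 : IntervalIntegrable (fun s => Q (z + b * s) t) volume 0 t := i2'.intervalIntegrable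
  have e2 : ∫ s in (0:ℝ)..t, Q (z + b * s) t ≤ |b⁻¹| * CQ := by
    rw [intervalIntegral.integral_of_le ht.le, ← e2']
    exact setIntegral_le_integral i2' (Filter.Eventually.of_forall fun s => (Q_pos ht.le).le)
  have i3 := TB_ii (a := 1/2) (b := 1/2) (by norm_num) (by norm_num) t
  have e3 := TB_half t ht
  obtain ⟨i4, e4⟩ := IND_int t ht.le
  have i4' := i4.const_mul ((1 + t) ^ (-(1/4) : ℝ))
  have e4' : ∫ s in (0:ℝ)..t, (1 + t) ^ (-(1/4) : ℝ) * IND t s ≤ 2 := by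
    rw [intervalIntegral.integral_const_mul]
    calc _ ≤ (1 + t) ^ (-(1/4) : ℝ) * (2 * (1 + t) ^ (1/4 : ℝ)) := by gcongr
      _ = 2 * ((1 + t) ^ (-(1/4) : ℝ) * (1 + t) ^ (1/4 : ℝ)) := by ring
      _ = 2 := by rw [← Real.rpow_add (by positivity)]; norm_num
  set G : ℝ → ℝ := fun s => (B * (10 + 2 * CB b) * Q z t) * ((1 + s) ^ (-(5/4) : ℝ) + Q (z + b * s) t +
    TB (1/2) (1/2) t s + (1 + t) ^ (-(1/4) : ℝ) * IND t s) with hG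
  have iG : IntervalIntegrable G volume 0 t := (((i1.add i2).add i3).add i4').const_mul _
  have hFG : ∀ s, 0 < s → s < t → |F s| ≤ G s := by
    intro s hs hst
    have hts : 0 < t - s := by linarith
    have hQ' := Q_pos (z := z + b * s) ht.le
    have t2 := T2 (z := z) (b := b) hs.le hst.le
    have t3 := T3 (z := z) (b := b) hs hst
    have hTB : (t - s) ^ (-(1/2) : ℝ) * (1 + s) ^ (-(1/2) : ℝ) ≤ TB (1/2) (1/2) t s := by
      refine le_trans ?_ (TB_ge (by norm_num) (by norm_num) hs hst)
      have a2 : (1 + s) ^ (-(1/2) : ℝ) ≤ s ^ (-(1/2) : ℝ) :=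
        Real.rpow_le_rpow_of_nonpos hs (by linarith) (by norm_num)
      gcongr
    have hTB0 : 0 ≤ TB (1/2) (1/2) t s := le_trans (by positivity) hTB
    have hI0 : 0 ≤ IND t s := by
      unfold IND; apply indicator_apply_nonneg; intro _; positivity
    have hp : 0 ≤ (1 + t) ^ (-(1/4) : ℝ) * IND t s := by positivity
    have hp5 : 0 ≤ (1 + s) ^ (-(5/4) : ℝ) := by positivity
    have h5 := mul_le_mul_of_nonneg_right hTB hQ.le
    refine (hF s hs hst).trans ?_
    rw [hG]
    simp only
    rw [mul_assoc B, mul_assoc B]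
    refine mul_le_mul_of_nonneg_left ?_ hB
    set a := (1 + s) ^ (-(5/4) : ℝ)
    set q := Q z t
    set q' := Q (z + b * s) t
    set T := TB (1/2) (1/2) t s
    set I := (1 + t) ^ (-(1/4) : ℝ) * IND t s
    have m1 : 0 ≤ q * a := by positivity
    have m2 : 0 ≤ q * q' := by positivity
    have m3 : 0 ≤ q * T := by positivity
    have m4 : 0 ≤ q * I := by positivity
    have n1 := mul_nonneg hC.le m1
    have n2 := mul_nonneg hC.le m2
    have n3 := mul_nonneg hC.le m3
    have n4 := mul_nonneg hC.le m4
    linarith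
  have h := intervalIntegral.norm_integral_le_of_norm_le ht.le (f := F) (g := G) (μ := volume)
    (by
      have : ∀ᵐ s : ℝ, s ≠ t := by simp [ae_iff, measure_singleton]
      filter_upwards [this] with s hs hm
      exact hFG s hm.1 (lt_of_le_of_ne hm.2 hs)) iG
  refine h.trans ?_
  rw [hG, intervalIntegral.integral_const_mul, intervalIntegral.integral_add ((i1.add i2).add i3) i4',
    intervalIntegral.integral_add (i1.add i2) i3, intervalIntegral.integral_add i1 i2]
  calc _ ≤ (B * (10 + 2 * CB b) * Q z t) * (14 + |b⁻¹| * CQ) := by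
        refine mul_le_mul_of_nonneg_left ?_ (by positivity)
        linarith
    _ = _ := by unfold CE; ring

/-- Gaussian data -/
lemma gauss_Q {M : ℝ} (hM : 1 ≤ M) (x : ℝ) : Real.exp (-(x ^ 2 / M)) ≤ M * Q x 0 := by
  have h0 : (0:ℝ) ≤ x ^ 2 / M := by positivity
  have h1 := Real.add_one_le_exp (x ^ 2 / M)
  have hM0 : 0 < M := by linarith
  have h2 : 1 + x ^ 2 ≤ M * (x ^ 2 / M + 1) := by
    rw [mul_add, mul_div_cancel₀ _ hM0.ne']; linarith
  have h3 : 1 + x ^ 2 ≤ M * Real.exp (x ^ 2 / M) := h2.trans (by gcongr)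
  rw [Real.exp_neg]
  have h4 : (1 + x ^ 2)⁻¹ ≤ Q x 0 := by
    unfold Q
    rw [add_zero, Real.one_rpow, one_mul, ← Real.rpow_neg_one]
    exact Real.rpow_le_rpow_of_exponent_le (by nlinarith [sq_nonneg x]) (by norm_num)
  calc (Real.exp (x ^ 2 / M))⁻¹ = M * (M * Real.exp (x ^ 2 / M))⁻¹ := by field_simp
    _ ≤ M * (1 + x ^ 2)⁻¹ := by gcongr
    _ ≤ _ := by gcongr

end GRD

namespace GRD
lemma sg_cont (d : ℝ) : Continuous fun θ => sg d θ := by unfold sg; fun_prop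

/-- joint continuity of the homogeneous part for `t > 0` -/
lemma Sop_cont (j : ℕ) {d c : ℝ} (hd : 0 < d) {φ : ℝ → ℝ} (hφ : Continuous φ) {B : ℝ} (hB : ∀ y, |φ y| ≤ B) :
    ContinuousOn (fun p : ℝ × ℝ => Sop j d c p.2 φ p.1) {p | 0 < p.2} := by
  intro p hp
  have h1 : ContinuousWithinAt (fun p : ℝ × ℝ => ((sg d p.2)⁻¹) ^ j) {p | 0 < p.2} p := by
    have : ContinuousAt (fun p : ℝ × ℝ => sg d p.2) p := ((sg_cont d).comp continuous_snd).continuousAt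
    exact ((this.inv₀ (sg_pos hd hp).ne').pow j).continuousWithinAt
  refine h1.mul (avg_cont j (B := B) ?_ ?_ ?_)
  · exact Filter.Eventually.of_forall fun q => phi_comp_cont hφ _ _
  · exact Filter.Eventually.of_forall fun q y => hB _
  · intro y
    have := sg_cont d
    exact Continuous.continuousWithinAt (by fun_prop)

lemma Sop0_cont {d c : ℝ} {φ : ℝ → ℝ} (hφ : Continuous φ) {B : ℝ} (hB : ∀ y, |φ y| ≤ B) :
    Continuous (fun p : ℝ × ℝ => Sop 0 d c p.2 φ p.1) := by
  rw [← continuousOn_univ]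
  intro p hp
  simp only [Sop, pow_zero, one_mul]
  refine (avg_cont 0 (B := B) ?_ ?_ ?_)
  · exact Filter.Eventually.of_forall fun q => phi_comp_cont hφ _ _
  · exact Filter.Eventually.of_forall fun q y => hB _
  · intro y
    have := sg_cont d
    exact Continuous.continuousWithinAt (by fun_prop)

lemma Sop0_zero (d c : ℝ) (φ : ℝ → ℝ) (x : ℝ) : Sop 0 d c 0 φ x = φ x := by
  simp [Sop, sg, integral_mul_const, gam_integral]

def Tri : Set (ℝ × ℝ × ℝ) := {p | 0 < p.2.2 ∧ p.2.2 < p.2.1}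

/-- Duhamel integrand -/
def Psi (j : ℕ) (d c : ℝ) (h : ℝ → ℝ → ℝ) (x t s : ℝ) : ℝ := Sop j d c (t - s) (fun y => h y s) x

def W (j : ℕ) (d c : ℝ) (h : ℝ → ℝ → ℝ) (x t : ℝ) : ℝ := ∫ s in (0:ℝ)..t, Psi j d c h x t s

/-- sources -/
structure Src (H : ℝ) (h : ℝ → ℝ → ℝ) : Prop where
  cont : ContinuousOn (fun p : ℝ × ℝ => h p.1 p.2) {p | 0 < p.2}
  bd : ∀ x s, 0 < s → |h x s| ≤ H * s ^ (-(1/2) : ℝ)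

lemma Src.nonneg {H : ℝ} {h : ℝ → ℝ → ℝ} (hs : Src H h) : 0 ≤ H := by
  have := (abs_nonneg _).trans (hs.bd 0 1 one_pos)
  simpa using this

lemma Src.contx {H : ℝ} {h : ℝ → ℝ → ℝ} (hs : Src H h) {s : ℝ} (h0 : 0 < s) : Continuous fun y => h y s := by
  have : Continuous fun y : ℝ => ((y, s) : ℝ × ℝ) := by fun_prop
  rw [← continuousOn_univ] at this ⊢
  exact hs.cont.comp this fun y _ => h0

lemma Psi_cont (j : ℕ) {d c H : ℝ} (hd : 0 < d) {h : ℝ → ℝ → ℝ} (hs : Src H h) :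
    ContinuousOn (fun p : ℝ × ℝ × ℝ => Psi j d c h p.1 p.2.1 p.2.2) Tri := by
  intro p hp
  have hp0 : 0 < p.2.2 := hp.1
  have hp1 : p.2.2 < p.2.1 := hp.2
  have hσ : Continuous fun p : ℝ × ℝ × ℝ => sg d (p.2.1 - p.2.2) := (sg_cont d).comp (by fun_prop)
  have h1 : ContinuousWithinAt (fun p : ℝ × ℝ × ℝ => ((sg d (p.2.1 - p.2.2))⁻¹) ^ j) Tri p := by
    exact ((hσ.continuousAt.inv₀ (sg_pos hd (by linarith)).ne').pow j).continuousWithinAt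
  have hlow : ∀ᶠ q in nhdsWithin p Tri, p.2.2 / 2 < q.2.2 := by
    apply mem_nhdsWithin_of_mem_nhds
    exact (isOpen_lt continuous_const (by fun_prop)).mem_nhds (by simp; linarith)
  refine h1.mul (avg_cont j (B := H * (p.2.2/2) ^ (-(1/2) : ℝ)) ?_ ?_ ?_)
  · filter_upwards [hlow] with q hq
    exact phi_comp_cont (hs.contx (by linarith)) _ _
  · filter_upwards [hlow] with q hq y
    refine (hs.bd _ _ (by linarith)).trans ?_
    have : q.2.2 ^ (-(1/2) : ℝ) ≤ (p.2.2/2) ^ (-(1/2) : ℝ) :=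
      Real.rpow_le_rpow_of_nonpos (by linarith) hq.le (by norm_num)
    have := hs.nonneg
    gcongr
  · intro y
    have c1 : ContinuousAt (fun q : ℝ × ℝ => h q.1 q.2)
        (p.1 + c * (p.2.1 - p.2.2) + sg d (p.2.1 - p.2.2) * y, p.2.2) :=
      hs.cont.continuousAt ((isOpen_lt continuous_const continuous_snd).mem_nhds hp0)
    have c2 : ContinuousAt (fun q : ℝ × ℝ × ℝ =>
      ((q.1 + c * (q.2.1 - q.2.2) + sg d (q.2.1 - q.2.2) * y, q.2.2) : ℝ × ℝ)) p :=
      Continuous.continuousAt (by fun_prop)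
    exact (ContinuousAt.comp (f := fun q : ℝ × ℝ × ℝ =>
      ((q.1 + c * (q.2.1 - q.2.2) + sg d (q.2.1 - q.2.2) * y, q.2.2) : ℝ × ℝ)) (x := p) c1 c2).continuousWithinAt

/-- integrands with integrable singularities -/
structure Ker (a b : ℝ) (Ψ : ℝ → ℝ → ℝ → ℝ) : Prop where
  cont : ContinuousOn (fun p : ℝ × ℝ × ℝ => Ψ p.1 p.2.1 p.2.2) Tri
  bd : ∀ T, 0 < T → ∃ C, 0 ≤ C ∧ ∀ x t s, 0 < s → s < t → t ≤ T → |Ψ x t s| ≤ C * ((t - s) ^ (-a) * s ^ (-b))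

lemma Ker.meas {a b : ℝ} {Ψ : ℝ → ℝ → ℝ → ℝ} (hk : Ker a b Ψ) (x : ℝ) {t : ℝ} (ht : 0 < t) :
    AEStronglyMeasurable (fun s => Ψ x t s) (volume.restrict (uIoc 0 t)) := by
  rw [uIoc_of_le ht.le, ← restrict_Ioo_eq_restrict_Ioc]
  refine ContinuousOn.aestronglyMeasurable ?_ measurableSet_Ioo
  have : ContinuousOn (fun s : ℝ => ((x, t, s) : ℝ × ℝ × ℝ)) (Ioo 0 t) := by fun_prop
  exact hk.cont.comp this fun s hs => ⟨hs.1, hs.2⟩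

lemma ae_ne (t : ℝ) : ∀ᵐ s : ℝ, s ≠ t := by simp [ae_iff, measure_singleton]

lemma Ker.ii {a b : ℝ} (ha : 0 ≤ a) (ha1 : a < 1) (hb : 0 ≤ b) (hb1 : b < 1) {Ψ : ℝ → ℝ → ℝ → ℝ} (hk : Ker a b Ψ) (x : ℝ) {t : ℝ} (ht : 0 < t) :
    IntervalIntegrable (fun s => Ψ x t s) volume 0 t := by
  obtain ⟨C, hC, hbd⟩ := hk.bd t ht
  refine ((TB_ii ha1 hb1 t).const_mul C).mono_fun' (hk.meas x ht) ?_
  rw [Filter.EventuallyLE, ae_restrict_iff' measurableSet_uIoc]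
  filter_upwards [ae_ne t] with s hs hm
  rw [uIoc_of_le ht.le] at hm
  have hst := lt_of_le_of_ne hm.2 hs
  refine (hbd x t s hm.1 hst le_rfl).trans ?_
  gcongr
  exact TB_ge ha hb hm.1 hst

lemma Ker.integral_cont {a b : ℝ} (ha : 0 ≤ a) (ha1 : a < 1) (hb : 0 ≤ b) (hb1 : b < 1) {Ψ : ℝ → ℝ → ℝ → ℝ}
    (hk : Ker a b Ψ) : ContinuousOn (fun p : ℝ × ℝ => ∫ s in (0:ℝ)..p.2, Ψ p.1 p.2 s) {p | 0 < p.2} := by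
  intro p hp
  have hp0 : 0 < p.2 := hp
  apply ContinuousAt.continuousWithinAt
  have e : ∀ q : ℝ × ℝ, ∫ s in (0:ℝ)..q.2, Ψ q.1 q.2 s = q.2 * ∫ θ in (0:ℝ)..1, Ψ q.1 q.2 (q.2 * θ) := by
    intro q
    have := intervalIntegral.smul_integral_comp_mul_left (a := 0) (b := 1) (fun s => Ψ q.1 q.2 s) q.2
    simp only [mul_zero, mul_one, smul_eq_mul] at this
    exact this.symm
  simp_rw [e]
  refine continuousAt_snd.mul ?_
  obtain ⟨C, hC, hbd⟩ := hk.bd (2 * p.2) (by linarith)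
  have hnear : ∀ᶠ q in nhds p, p.2 / 2 < q.2 ∧ q.2 < 2 * p.2 := by
    refine ((isOpen_lt (f := fun _ => p.2/2) continuous_const continuous_snd).inter (isOpen_lt (g := fun _ => 2 * p.2) continuous_snd continuous_const)).mem_nhds ?_
    constructor <;> simp <;> linarith
  refine intervalIntegral.continuousAt_of_dominated_interval
    (bound := fun θ => (C * ((p.2/2) ^ (-a) * (p.2/2) ^ (-b))) * TB a b 1 θ) ?_ ?_ ((TB_ii ha1 hb1 1).const_mul _) ?_
  · filter_upwards [hnear] with q hq
    rw [uIoc_of_le zero_le_one, ← restrict_Ioo_eq_restrict_Ioc]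
    refine ContinuousOn.aestronglyMeasurable ?_ measurableSet_Ioo
    have : ContinuousOn (fun s : ℝ => ((q.1, q.2, q.2 * s) : ℝ × ℝ × ℝ)) (Ioo 0 1) := by fun_prop
    have hq0 : 0 < q.2 := by linarith [hq.1]
    exact hk.cont.comp this fun s hs => ⟨mul_pos hq0 hs.1, by simp; nlinarith [hs.2]⟩
  · filter_upwards [hnear] with q hq
    filter_upwards [ae_ne 1] with θ h1 hm
    rw [uIoc_of_le zero_le_one] at hm
    have hθ1 := lt_of_le_of_ne hm.2 h1
    have hθ0 := hm.1
    have hq0 : 0 < q.2 := by linarith [hq.1]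
    have := hbd q.1 q.2 (q.2 * θ) (by positivity) (by nlinarith) hq.2.le
    rw [Real.norm_eq_abs]
    refine this.trans ?_
    have e1 : q.2 - q.2 * θ = q.2 * (1 - θ) := by ring
    have hθ' : 0 < 1 - θ := by linarith
    rw [e1, Real.mul_rpow hq0.le hθ'.le, Real.mul_rpow hq0.le hθ0.le, mul_assoc C]
    have i1 : q.2 ^ (-a) ≤ (p.2/2) ^ (-a) := Real.rpow_le_rpow_of_nonpos (by linarith) hq.1.le (by linarith)
    have i2 : q.2 ^ (-b) ≤ (p.2/2) ^ (-b) := Real.rpow_le_rpow_of_nonpos (by linarith) hq.1.le (by linarith)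
    have i3 := TB_ge ha hb hθ0 hθ1
    refine mul_le_mul_of_nonneg_left ?_ hC
    calc _ = (q.2 ^ (-a) * q.2 ^ (-b)) * ((1 - θ) ^ (-a) * θ ^ (-b)) := by ring
      _ ≤ ((p.2/2) ^ (-a) * (p.2/2) ^ (-b)) * TB a b 1 θ := by gcongr
  · filter_upwards [ae_ne 1] with θ h1 hm
    rw [uIoc_of_le zero_le_one] at hm
    have hθ1 := lt_of_le_of_ne hm.2 h1
    have hθ0 := hm.1
    have hopen : IsOpen Tri :=
      (isOpen_lt (f := fun _ : ℝ × ℝ × ℝ => (0:ℝ)) continuous_const (by fun_prop)).inter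
        (isOpen_lt (f := fun p : ℝ × ℝ × ℝ => p.2.2) (g := fun p : ℝ × ℝ × ℝ => p.2.1) (by fun_prop) (by fun_prop))
    have c1 : ContinuousAt (fun p : ℝ × ℝ × ℝ => Ψ p.1 p.2.1 p.2.2) (p.1, p.2, p.2 * θ) :=
      hk.cont.continuousAt (hopen.mem_nhds ⟨mul_pos hp0 hθ0, by simp; nlinarith⟩)
    have c2 : ContinuousAt (fun q : ℝ × ℝ => ((q.1, q.2, q.2 * θ) : ℝ × ℝ × ℝ)) p :=
      Continuous.continuousAt (by fun_prop)
    exact ContinuousAt.comp (f := fun q : ℝ × ℝ => ((q.1, q.2, q.2 * θ) : ℝ × ℝ × ℝ)) (x := p) c1 c2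

lemma Ker.deriv {a b a' b' : ℝ} (ha : 0 ≤ a) (ha1 : a < 1) (hb : 0 ≤ b) (hb1 : b < 1)
    (ha' : 0 ≤ a') (ha1' : a' < 1) (hb' : 0 ≤ b') (hb1' : b' < 1) {Ψ Ψ' : ℝ → ℝ → ℝ → ℝ}
    (hk : Ker a b Ψ) (hk' : Ker a' b' Ψ')
    (hd : ∀ x t s, 0 < s → s < t → HasDerivAt (fun x => Ψ x t s) (Ψ' x t s) x) (x : ℝ) {t : ℝ} (ht : 0 < t) :
    HasDerivAt (fun x => ∫ s in (0:ℝ)..t, Ψ x t s) (∫ s in (0:ℝ)..t, Ψ' x t s) x := by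
  obtain ⟨C, hC, hbd⟩ := hk'.bd t ht
  refine (intervalIntegral.hasDerivAt_integral_of_dominated_loc_of_deriv_le (s := univ) Filter.univ_mem
    (F := fun x s => Ψ x t s) (F' := fun x s => Ψ' x t s) (bound := fun s => C * TB a' b' t s)
    (Filter.Eventually.of_forall fun x => hk.meas x ht) (hk.ii ha ha1 hb hb1 x ht) (hk'.meas x ht) ?_
    ((TB_ii ha1' hb1' t).const_mul C) ?_).2
  · filter_upwards [ae_ne t] with s hs hm x _
    rw [uIoc_of_le ht.le] at hm
    have hst := lt_of_le_of_ne hm.2 hs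
    refine (hbd x t s hm.1 hst le_rfl).trans ?_
    gcongr
    exact TB_ge ha' hb' hm.1 hst
  · filter_upwards [ae_ne t] with s hs hm x _
    rw [uIoc_of_le ht.le] at hm
    have hst := lt_of_le_of_ne hm.2 hs
    exact hd x t s hm.1 hst

lemma integral_bd {a b C t : ℝ} (ha : 0 ≤ a) (ha1 : a < 1) (hb : 0 ≤ b) (hb1 : b < 1) (ht : 0 < t) (hC : 0 ≤ C) {F : ℝ → ℝ}
    (hF : ∀ s, 0 < s → s < t → |F s| ≤ C * ((t - s) ^ (-a) * s ^ (-b))) :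
    |∫ s in (0:ℝ)..t, F s| ≤ C * ((t/2) ^ (-a) * (t ^ (1 - b) / (1 - b)) + (t/2) ^ (-b) * (t ^ (1 - a) / (1 - a))) := by
  have h := intervalIntegral.norm_integral_le_of_norm_le ht.le (f := F) (g := fun s => C * TB a b t s) (μ := volume)
    (by
      filter_upwards [ae_ne t] with s hs hm
      have hst := lt_of_le_of_ne hm.2 hs
      refine (hF s hm.1 hst).trans ?_
      gcongr
      exact TB_ge ha hb hm.1 hst) ((TB_ii ha1 hb1 t).const_mul C)
  rwa [intervalIntegral.integral_const_mul, TB_int ha1 hb1] at h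

end GRD

namespace GRD
lemma Psi_bd {j : ℕ} (hj : j ≤ 2) {d c H : ℝ} (hd : 0 < d) {h : ℝ → ℝ → ℝ} (hs : Src H h) {x t s : ℝ}
    (h0 : 0 < s) (hst : s < t) :
    |Psi j d c h x t s| ≤ CS d * H * ((t - s) ^ (-((j:ℝ)/2)) * s ^ (-(1/2) : ℝ)) := by
  have := Sop_bound hj hd (by linarith : 0 ≤ t - s) (fun y => hs.bd y s h0) x (c := c)
  rw [neg_div] at this
  refine this.trans (le_of_eq (by ring))

lemma Psi_ker {j : ℕ} (hj : j ≤ 2) {d c H : ℝ} (hd : 0 < d) {h : ℝ → ℝ → ℝ} (hs : Src H h) :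
    Ker ((j:ℝ)/2) (1/2) (Psi j d c h) := by
  refine ⟨Psi_cont j hd hs, fun T hT => ⟨CS d * H, mul_nonneg (CS_pos d).le hs.nonneg, fun x t s h0 hst _ => ?_⟩⟩
  exact Psi_bd hj hd hs h0 hst

lemma Psi_ker0 {d c H : ℝ} (hd : 0 < d) {h : ℝ → ℝ → ℝ} (hs : Src H h) : Ker 0 (1/2) (Psi 0 d c h) := by
  have := Psi_ker (j := 0) (c := c) (by norm_num) hd hs
  simpa using this

lemma Psi_ker1 {d c H : ℝ} (hd : 0 < d) {h : ℝ → ℝ → ℝ} (hs : Src H h) : Ker (1/2) (1/2) (Psi 1 d c h) := by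
  have := Psi_ker (j := 1) (c := c) (by norm_num) hd hs
  rw [Nat.cast_one] at this; exact this

lemma W0_cont {d c H : ℝ} (hd : 0 < d) {h : ℝ → ℝ → ℝ} (hs : Src H h) :
    ContinuousOn (fun p : ℝ × ℝ => W 0 d c h p.1 p.2) {p | 0 < p.2} :=
  (Psi_ker0 hd hs).integral_cont le_rfl (by norm_num) (by norm_num) (by norm_num)

lemma W1_cont {d c H : ℝ} (hd : 0 < d) {h : ℝ → ℝ → ℝ} (hs : Src H h) :
    ContinuousOn (fun p : ℝ × ℝ => W 1 d c h p.1 p.2) {p | 0 < p.2} :=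
  (Psi_ker1 hd hs).integral_cont (by norm_num) (by norm_num) (by norm_num) (by norm_num)

lemma W0_deriv {d c H : ℝ} (hd : 0 < d) {h : ℝ → ℝ → ℝ} (hs : Src H h) (x : ℝ) {t : ℝ} (ht : 0 < t) :
    HasDerivAt (fun x => W 0 d c h x t) (W 1 d c h x t) x :=
  (Psi_ker0 hd hs).deriv le_rfl (by norm_num) (by norm_num) (by norm_num) (by norm_num) (by norm_num) (by norm_num)
    (by norm_num) (Psi_ker1 hd hs) (fun x t s h0 hst => Sop_deriv_x (j := 0) (by norm_num) hd (by linarith) (hs.contx h0)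
      (fun y => hs.bd y s h0) x) x ht

lemma half_pow {t a : ℝ} (ht : 0 < t) (ha1 : a ≤ 1) : (t/2) ^ (-a) ≤ 2 * t ^ (-a) := by
  rw [Real.div_rpow ht.le (by norm_num), Real.rpow_neg (by norm_num : (0:ℝ) ≤ 2), div_inv_eq_mul, mul_comm]
  gcongr
  calc (2:ℝ) ^ a ≤ 2 ^ (1:ℝ) := Real.rpow_le_rpow_of_exponent_le (by norm_num) ha1
    _ = 2 := by norm_num

lemma integral_bd' {a b C t : ℝ} (ha : 0 ≤ a) (ha1 : a < 1) (hb : 0 ≤ b) (hb1 : b < 1) (ht : 0 < t) (hC : 0 ≤ C) {F : ℝ → ℝ}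
    (hF : ∀ s, 0 < s → s < t → |F s| ≤ C * ((t - s) ^ (-a) * s ^ (-b))) :
    |∫ s in (0:ℝ)..t, F s| ≤ C * ((2 / (1 - a) + 2 / (1 - b)) * t ^ (1 - a - b)) := by
  refine (integral_bd ha ha1 hb hb1 ht hC hF).trans ?_
  refine mul_le_mul_of_nonneg_left ?_ hC
  have h1 := half_pow ht ha1.le
  have h2 := half_pow ht hb1.le
  have e1 : t ^ (-a) * t ^ (1 - b) = t ^ (1 - a - b) := by rw [← Real.rpow_add ht]; ring_nf
  have e2 : t ^ (-b) * t ^ (1 - a) = t ^ (1 - a - b) := by rw [← Real.rpow_add ht]; ring_nf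
  have a0 : 0 < 1 - a := by linarith
  have b0 : 0 < 1 - b := by linarith
  calc _ ≤ 2 * t ^ (-a) * (t ^ (1 - b) / (1 - b)) + 2 * t ^ (-b) * (t ^ (1 - a) / (1 - a)) := by gcongr
    _ = 2 / (1 - b) * (t ^ (-a) * t ^ (1 - b)) + 2 / (1 - a) * (t ^ (-b) * t ^ (1 - a)) := by ring
    _ = _ := by rw [e1, e2]; ring

lemma W0_bd {d c H : ℝ} (hd : 0 < d) {h : ℝ → ℝ → ℝ} (hs : Src H h) (x : ℝ) {t : ℝ} (ht : 0 < t) :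
    |W 0 d c h x t| ≤ CS d * H * (6 * t ^ (1/2 : ℝ)) := by
  have := integral_bd' (a := 0) (b := 1/2) le_rfl (by norm_num) (by norm_num) (by norm_num) ht
    (mul_nonneg (CS_pos d).le hs.nonneg) (F := fun s => Psi 0 d c h x t s)
    (fun s h0 hst => by simpa using Psi_bd (j := 0) (c := c) (by norm_num) hd hs (x := x) h0 hst)
  norm_num at this ⊢
  exact this

lemma W1_bd {d c H : ℝ} (hd : 0 < d) {h : ℝ → ℝ → ℝ} (hs : Src H h) (x : ℝ) {t : ℝ} (ht : 0 < t) :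
    |W 1 d c h x t| ≤ CS d * H * 8 := by
  have := integral_bd' (a := 1/2) (b := 1/2) (by norm_num) (by norm_num) (by norm_num) (by norm_num) ht
    (mul_nonneg (CS_pos d).le hs.nonneg) (F := fun s => Psi 1 d c h x t s)
    (fun s h0 hst => by simpa using Psi_bd (j := 1) (c := c) (by norm_num) hd hs (x := x) h0 hst)
  norm_num at this ⊢
  exact this

lemma W1_holder {d c H : ℝ} (hd : 0 < d) {h : ℝ → ℝ → ℝ} (hs : Src H h) (x x' : ℝ) {t : ℝ} (ht : 0 < t) :
    |W 1 d c h x t - W 1 d c h x' t| ≤ 24 * CS d * H * √|x - x'| * t ^ (-(1/4) : ℝ) := by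
  have hk := Psi_ker1 (c := c) hd hs
  have hC := CS_pos d
  have hH := hs.nonneg
  unfold W
  rw [← intervalIntegral.integral_sub (hk.ii (by norm_num) (by norm_num) (by norm_num) (by norm_num) x ht)
    (hk.ii (by norm_num) (by norm_num) (by norm_num) (by norm_num) x' ht)]
  have := integral_bd' (a := 3/4) (b := 1/2) (by norm_num) (by norm_num) (by norm_num) (by norm_num) ht
    (C := 2 * CS d * H * √|x - x'|) (by positivity) (F := fun s => Psi 1 d c h x t s - Psi 1 d c h x' t s)
    (fun s h0 hst => by
      have := Sop1_holder (c := c) hd (by linarith : 0 < t - s) (hs.contx h0) (fun y => hs.bd y s h0) x x'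
      refine this.trans (le_of_eq (by ring)))
  refine this.trans (le_of_eq ?_)
  norm_num
  ring

/-- Hölder sources -/
def SrcH (h : ℝ → ℝ → ℝ) : Prop := ∀ T, 0 < T → ∃ K, 0 ≤ K ∧ ∀ x y s, 0 < s → s ≤ T →
  |h x s - h y s| ≤ K * s ^ (-(3/4) : ℝ) * √|x - y|

lemma Psi_ker2 {d c H : ℝ} (hd : 0 < d) {h : ℝ → ℝ → ℝ} (hs : Src H h) (hh : SrcH h) :
    Ker (3/4) (3/4) (Psi 2 d c h) := by
  refine ⟨Psi_cont 2 hd hs, fun T hT => ?_⟩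
  obtain ⟨K, hK, hb⟩ := hh T hT
  refine ⟨CS d * K, mul_nonneg (CS_pos d).le hK, fun x t s h0 hst htT => ?_⟩
  refine (Sop_holder hd (by linarith : 0 < t - s) (hs.contx h0) (fun y => hs.bd y s h0)
    (fun a b => hb a b s h0 (by linarith)) x).trans (le_of_eq (by ring))

lemma W2_cont {d c H : ℝ} (hd : 0 < d) {h : ℝ → ℝ → ℝ} (hs : Src H h) (hh : SrcH h) :
    ContinuousOn (fun p : ℝ × ℝ => W 2 d c h p.1 p.2) {p | 0 < p.2} :=
  (Psi_ker2 hd hs hh).integral_cont (by norm_num) (by norm_num) (by norm_num) (by norm_num)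

lemma W1_deriv {d c H : ℝ} (hd : 0 < d) {h : ℝ → ℝ → ℝ} (hs : Src H h) (hh : SrcH h) (x : ℝ) {t : ℝ} (ht : 0 < t) :
    HasDerivAt (fun x => W 1 d c h x t) (W 2 d c h x t) x :=
  (Psi_ker1 hd hs).deriv (by norm_num) (by norm_num) (by norm_num) (by norm_num) (by norm_num) (by norm_num) (by norm_num)
    (by norm_num) (Psi_ker2 hd hs hh) (fun x t s h0 hst => Sop_deriv_x (j := 1) (by norm_num) hd (by linarith) (hs.contx h0)
      (fun y => hs.bd y s h0) x) x ht

end GRD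

namespace GRD
lemma Ker.weaken {a b a' b' : ℝ} (ha : a ≤ a') (hb : b ≤ b') {Ψ : ℝ → ℝ → ℝ → ℝ} (hk : Ker a b Ψ) : Ker a' b' Ψ := by
  refine ⟨hk.cont, fun T hT => ?_⟩
  obtain ⟨C, hC, hbd⟩ := hk.bd T hT
  refine ⟨C * (T ^ (a' - a) * T ^ (b' - b)), by positivity, fun x t s h0 hst htT => (hbd x t s h0 hst htT).trans ?_⟩
  have hts : 0 < t - s := by linarith
  have h1 : (t - s) ^ (-a) ≤ T ^ (a' - a) * (t - s) ^ (-a') := by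
    have : (t - s) ^ (-a) = (t - s) ^ (a' - a) * (t - s) ^ (-a') := by
      rw [← Real.rpow_add hts]; ring_nf
    rw [this]
    gcongr
    linarith
  have h2 : s ^ (-b) ≤ T ^ (b' - b) * s ^ (-b') := by
    have : s ^ (-b) = s ^ (b' - b) * s ^ (-b') := by
      rw [← Real.rpow_add h0]; ring_nf
    rw [this]
    gcongr
    linarith
  calc _ ≤ C * ((T ^ (a' - a) * (t - s) ^ (-a')) * (T ^ (b' - b) * s ^ (-b'))) := by gcongr
    _ = _ := by ring

lemma Ker.lin {a b : ℝ} (k l : ℝ) {Ψ Ψ' : ℝ → ℝ → ℝ → ℝ} (hk : Ker a b Ψ) (hk' : Ker a b Ψ') :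
    Ker a b (fun x t s => k * Ψ x t s + l * Ψ' x t s) := by
  refine ⟨(continuousOn_const.mul hk.cont).add (continuousOn_const.mul hk'.cont), fun T hT => ?_⟩
  obtain ⟨C, hC, hbd⟩ := hk.bd T hT
  obtain ⟨C', hC', hbd'⟩ := hk'.bd T hT
  refine ⟨|k| * C + |l| * C', by positivity, fun x t s h0 hst htT => ?_⟩
  have h1 := mul_le_mul_of_nonneg_left (hbd x t s h0 hst htT) (abs_nonneg k)
  have h2 := mul_le_mul_of_nonneg_left (hbd' x t s h0 hst htT) (abs_nonneg l)
  rw [← abs_mul] at h1 h2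
  refine (abs_add_le _ _).trans ?_
  linarith

/-- Fubini on the triangle -/
lemma Ker.fubini {a b : ℝ} (ha1 : a < 1) (hb1 : b < 1) {G : ℝ → ℝ → ℝ → ℝ}
    (hk : Ker a b G) (x : ℝ) {t : ℝ} (ht : 0 < t) :
    ∫ s in (0:ℝ)..t, (∫ τ in s..t, G x τ s) = ∫ τ in (0:ℝ)..t, (∫ s in (0:ℝ)..τ, G x τ s) := by
  set E : Set (ℝ × ℝ) := {p | 0 < p.2 ∧ p.2 < p.1 ∧ p.1 < t} with hE
  have hEo : IsOpen E :=
    (isOpen_lt (f := fun _ : ℝ × ℝ => (0:ℝ)) continuous_const (by fun_prop)).inter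
      ((isOpen_lt (f := fun p : ℝ × ℝ => p.2) (g := fun p : ℝ × ℝ => p.1) (by fun_prop) (by fun_prop)).inter
        (isOpen_lt (f := fun p : ℝ × ℝ => p.1) (g := fun p : ℝ × ℝ => t) (by fun_prop) (by fun_prop)))
  set F : ℝ × ℝ → ℝ := E.indicator (fun p => G x p.1 p.2) with hF
  obtain ⟨C, hC, hbd⟩ := hk.bd t ht
  have pint : ∀ r : ℝ, r < 1 → Integrable ((Ioo 0 t).indicator fun s : ℝ => s ^ (-r)) := by
    intro r hr
    have := pow_ii hr t
    rw [intervalIntegrable_iff, uIoc_of_le ht.le] at this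
    exact (this.mono_set Ioo_subset_Ioc_self).integrable_indicator measurableSet_Ioo
  have hint : Integrable F (volume.prod volume) := by
    have dom := (pint b hb1).convolution_integrand (ContinuousLinearMap.mul ℝ ℝ) (pint a ha1)
    refine (dom.const_mul C).mono' ?_ ?_
    · rw [hF, aestronglyMeasurable_indicator_iff hEo.measurableSet]
      refine ContinuousOn.aestronglyMeasurable ?_ hEo.measurableSet
      have : ContinuousOn (fun p : ℝ × ℝ => ((x, p.1, p.2) : ℝ × ℝ × ℝ)) E := by fun_prop
      exact hk.cont.comp this fun p hp => ⟨hp.1, hp.2.1⟩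
    · refine Filter.Eventually.of_forall fun p => ?_
      by_cases hp : p ∈ E
      · have hp' := hp
        obtain ⟨h1, h2, h3⟩ := hp'
        rw [hF, indicator_of_mem hp, ContinuousLinearMap.mul_apply',
          indicator_of_mem (show p.2 ∈ Ioo 0 t from ⟨h1, by linarith⟩),
          indicator_of_mem (show p.1 - p.2 ∈ Ioo 0 t from ⟨by linarith, by linarith⟩)]
        have := hbd x p.1 p.2 h1 h2 h3.le
        rw [mul_comm (p.2 ^ (-b))]
        exact this
      · rw [hF, indicator_of_notMem hp, norm_zero, ContinuousLinearMap.mul_apply']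
        have n1 : 0 ≤ (Ioo 0 t).indicator (fun s : ℝ => s ^ (-b)) p.2 :=
          indicator_apply_nonneg fun h => Real.rpow_nonneg h.1.le _
        have n2 : 0 ≤ (Ioo 0 t).indicator (fun s : ℝ => s ^ (-a)) (p.1 - p.2) :=
          indicator_apply_nonneg fun h => Real.rpow_nonneg h.1.le _
        positivity
  have sw := integral_integral_swap (f := fun τ s => F (τ, s)) hint
  have l1 : ∫ s, ∫ τ, F (τ, s) = ∫ s in (0:ℝ)..t, (∫ τ in s..t, G x τ s) := by
    rw [intervalIntegral.integral_of_le ht.le, integral_Ioc_eq_integral_Ioo, ← integral_indicator measurableSet_Ioo]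
    congr 1; ext s
    by_cases hs : s ∈ Ioo 0 t
    · rw [indicator_of_mem hs, intervalIntegral.integral_of_le hs.2.le, integral_Ioc_eq_integral_Ioo,
        ← integral_indicator measurableSet_Ioo]
      congr 1; ext τ
      by_cases hτ : τ ∈ Ioo s t
      · rw [indicator_of_mem hτ, hF, indicator_of_mem (show (τ, s) ∈ E from ⟨hs.1, hτ.1, hτ.2⟩)]
      · rw [indicator_of_notMem hτ, hF, indicator_of_notMem (show (τ, s) ∉ E from fun h => hτ ⟨h.2.1, h.2.2⟩)]
    · rw [indicator_of_notMem hs]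
      have : ∀ τ, F (τ, s) = 0 := fun τ => by
        rw [hF, indicator_of_notMem (show (τ, s) ∉ E from fun h => hs ⟨h.1, h.2.1.trans h.2.2⟩)]
      simp [this]
  have l2 : ∫ τ, ∫ s, F (τ, s) = ∫ τ in (0:ℝ)..t, (∫ s in (0:ℝ)..τ, G x τ s) := by
    rw [intervalIntegral.integral_of_le ht.le, integral_Ioc_eq_integral_Ioo, ← integral_indicator measurableSet_Ioo]
    congr 1; ext τ
    by_cases hτ : τ ∈ Ioo 0 t
    · rw [indicator_of_mem hτ, intervalIntegral.integral_of_le hτ.1.le, integral_Ioc_eq_integral_Ioo,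
        ← integral_indicator measurableSet_Ioo]
      congr 1; ext s
      by_cases hs : s ∈ Ioo 0 τ
      · rw [indicator_of_mem hs, hF, indicator_of_mem (show (τ, s) ∈ E from ⟨hs.1, hs.2, hτ.2⟩)]
      · rw [indicator_of_notMem hs, hF, indicator_of_notMem (show (τ, s) ∉ E from fun h => hs ⟨h.1, h.2.1⟩)]
    · rw [indicator_of_notMem hτ]
      have : ∀ s, F (τ, s) = 0 := fun s => by
        rw [hF, indicator_of_notMem (show (τ, s) ∉ E from fun h => hτ ⟨h.1.trans h.2.1, h.2.2⟩)]
      simp [this]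
  rw [← l1, ← l2]
  exact sw.symm

lemma Src.ii {H : ℝ} {h : ℝ → ℝ → ℝ} (hs : Src H h) (x : ℝ) {t : ℝ} (ht : 0 < t) :
    IntervalIntegrable (fun s => h x s) volume 0 t := by
  refine ((pow_ii (b := 1/2) (by norm_num) t).const_mul H).mono_fun' ?_ ?_
  · rw [uIoc_of_le ht.le]
    refine ContinuousOn.aestronglyMeasurable ?_ measurableSet_Ioc
    have : ContinuousOn (fun s : ℝ => ((x, s) : ℝ × ℝ)) (Ioc 0 t) := by fun_prop
    exact hs.cont.comp this fun s hs => hs.1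
  · rw [Filter.EventuallyLE, ae_restrict_iff' measurableSet_uIoc]
    refine Filter.Eventually.of_forall fun s hm => ?_
    rw [uIoc_of_le ht.le] at hm
    exact hs.bd x s hm.1

lemma Psi0_dt {d c : ℝ} {h : ℝ → ℝ → ℝ} {x s τ r : ℝ} 
    (h1 : HasDerivAt (fun θ => Sop 0 d c θ (fun y => h y s) x) r (τ - s)) :
    HasDerivAt (fun τ => Psi 0 d c h x τ s) r τ := by
  have := h1.comp_sub_const τ s
  unfold Psi
  exact this

lemma Psi0_tc {d c : ℝ} {h : ℝ → ℝ → ℝ} {x s B : ℝ} (hc : Continuous fun y => h y s) (hB : ∀ y, |h y s| ≤ B) :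
    Continuous (fun τ => Psi 0 d c h x τ s) := by
  have h2 : Continuous fun τ : ℝ => ((x, τ - s) : ℝ × ℝ) := by fun_prop
  have := (Sop0_cont (d := d) (c := c) hc hB).comp h2
  unfold Psi
  exact this

lemma Ker.cont_t {a b : ℝ} {G : ℝ → ℝ → ℝ → ℝ} (hk : Ker a b G) (x : ℝ) {s : ℝ} (h0 : 0 < s) (t : ℝ) :
    ContinuousOn (fun τ => G x τ s) (Ioc s t) := by
  have : ContinuousOn (fun τ : ℝ => ((x, τ, s) : ℝ × ℝ × ℝ)) (Ioc s t) := by fun_prop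
  exact hk.cont.comp this fun τ hτ => ⟨h0, hτ.1⟩

lemma Psi0_ftc {d c H : ℝ} (hd : 0 < d) {h : ℝ → ℝ → ℝ} (hs : Src H h) (hh : SrcH h) (x : ℝ) {s t : ℝ} (h0 : 0 < s)
    (hst : s < t) : ∫ τ in s..t, (d * Psi 2 d c h x τ s + c * Psi 1 d c h x τ s) = Psi 0 d c h x t s - h x s := by
  have hk : Ker (3/4) (3/4) (fun x t s => d * Psi 2 d c h x t s + c * Psi 1 d c h x t s) :=
    Ker.lin d c (Psi_ker2 hd hs hh) ((Psi_ker1 hd hs).weaken (by norm_num) (by norm_num))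
  obtain ⟨C, hC, hbd⟩ := hk.bd t (h0.trans hst)
  have hbx : ∀ y, |h y s| ≤ H * s ^ (-(1/2) : ℝ) := fun y => hs.bd y s h0
  have e0 : Psi 0 d c h x s s = h x s := by
    unfold Psi; rw [sub_self]; exact Sop0_zero d c _ x
  rw [← e0]
  refine intervalIntegral.integral_eq_sub_of_hasDerivAt_of_le (f := fun τ => Psi 0 d c h x τ s)
    (f' := fun τ => d * Psi 2 d c h x τ s + c * Psi 1 d c h x τ s) hst.le ?_ ?_ ?_
  · exact (Psi0_tc (c := c) (hs.contx h0) hbx).continuousOn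
  · intro τ hτ
    have h1 := Sop_deriv_t (c := c) hd (by linarith [hτ.1] : 0 < τ - s) (hs.contx h0) hbx x
    have h2 : HasDerivAt (fun τ : ℝ => τ - s) 1 τ := (hasDerivAt_id τ).sub_const s
    exact Psi0_dt h1
  · have i0 : IntervalIntegrable (fun τ : ℝ => (τ - s) ^ (-(3/4) : ℝ)) volume s t := by
      have := (pow_ii (b := 3/4) (by norm_num) (t - s)).comp_sub_right s
      simpa using this
    refine (i0.const_mul (C * s ^ (-(3/4) : ℝ))).mono_fun' ?_ ?_
    · rw [uIoc_of_le hst.le]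
      refine ContinuousOn.aestronglyMeasurable ?_ measurableSet_Ioc
      exact hk.cont_t x h0 t
    · rw [Filter.EventuallyLE, ae_restrict_iff' measurableSet_uIoc]
      refine Filter.Eventually.of_forall fun τ hm => ?_
      rw [uIoc_of_le hst.le] at hm
      refine (hbd x τ s h0 hm.1 hm.2).trans (le_of_eq (by ring))

lemma W0_eq {d c H : ℝ} (hd : 0 < d) {h : ℝ → ℝ → ℝ} (hs : Src H h) (hh : SrcH h) (x : ℝ) {t : ℝ} (ht : 0 < t) :
    W 0 d c h x t = (∫ s in (0:ℝ)..t, h x s) + ∫ s in (0:ℝ)..t, (d * W 2 d c h x s + c * W 1 d c h x s) := by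
  have k1 := Psi_ker1 (c := c) hd hs
  have k2 := Psi_ker2 (c := c) hd hs hh
  have hk : Ker (3/4) (3/4) (fun x t s => d * Psi 2 d c h x t s + c * Psi 1 d c h x t s) :=
    Ker.lin d c k2 (k1.weaken (by norm_num) (by norm_num))
  have f := hk.fubini (by norm_num) (by norm_num) x ht
  have i0 := (Psi_ker0 (c := c) hd hs).ii le_rfl (by norm_num) (by norm_num) (by norm_num) x ht
  have ih := hs.ii x ht
  have e1 : ∫ s in (0:ℝ)..t, (∫ τ in s..t, (d * Psi 2 d c h x τ s + c * Psi 1 d c h x τ s)) =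
      ∫ s in (0:ℝ)..t, (Psi 0 d c h x t s - h x s) := by
    refine intervalIntegral.integral_congr_ae ?_
    filter_upwards [ae_ne t] with s hs' hm
    rw [uIoc_of_le ht.le] at hm
    exact Psi0_ftc hd hs hh x hm.1 (lt_of_le_of_ne hm.2 hs')
  have e2 : ∫ τ in (0:ℝ)..t, (∫ s in (0:ℝ)..τ, (d * Psi 2 d c h x τ s + c * Psi 1 d c h x τ s)) =
      ∫ s in (0:ℝ)..t, (d * W 2 d c h x s + c * W 1 d c h x s) := by
    refine intervalIntegral.integral_congr_ae ?_
    refine Filter.Eventually.of_forall fun τ hm => ?_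
    rw [uIoc_of_le ht.le] at hm
    rw [intervalIntegral.integral_add ((k2.ii (by norm_num) (by norm_num) (by norm_num) (by norm_num) x hm.1).const_mul _)
      ((k1.ii (by norm_num) (by norm_num) (by norm_num) (by norm_num) x hm.1).const_mul _),
      intervalIntegral.integral_const_mul, intervalIntegral.integral_const_mul]
    rfl
  rw [e1, e2, intervalIntegral.integral_sub i0 ih] at f
  unfold W at f ⊢
  linarith

lemma ftc_right {F : ℝ → ℝ} (hc : ContinuousOn F (Ioi 0)) {t : ℝ} (ht : 0 < t) (hi : IntervalIntegrable F volume 0 t) :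
    HasDerivAt (fun t => ∫ s in (0:ℝ)..t, F s) (F t) t := by
  have hca : ContinuousAt F t := hc.continuousAt (Ioi_mem_nhds ht)
  refine intervalIntegral.integral_hasDerivAt_right hi ?_ hca
  exact hc.stronglyMeasurableAtFilter isOpen_Ioi t ht

lemma W0_deriv_t {d c H : ℝ} (hd : 0 < d) {h : ℝ → ℝ → ℝ} (hs : Src H h) (hh : SrcH h) (x : ℝ) {t : ℝ} (ht : 0 < t) :
    HasDerivAt (fun t => W 0 d c h x t) (h x t + (d * W 2 d c h x t + c * W 1 d c h x t)) t := by
  have k1 := Psi_ker1 (c := c) hd hs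
  have k2 := Psi_ker2 (c := c) hd hs hh
  have hcx : ContinuousOn (fun s : ℝ => ((x, s) : ℝ × ℝ)) (Ioi 0) := by fun_prop
  have c1 : ContinuousOn (fun s => h x s) (Ioi 0) := hs.cont.comp hcx fun s hs => hs
  have c2 : ContinuousOn (fun s => d * W 2 d c h x s + c * W 1 d c h x s) (Ioi 0) :=
    (continuousOn_const.mul ((W2_cont hd hs hh).comp hcx fun s hs => hs)).add
      (continuousOn_const.mul ((W1_cont hd hs).comp hcx fun s hs => hs))
  have hi : IntervalIntegrable (fun s => d * W 2 d c h x s + c * W 1 d c h x s) volume 0 t := by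
    obtain ⟨C, hC, hbd⟩ := k2.bd t ht
    refine (((pow_ii (b := 1/2) (by norm_num) t).const_mul (|d| * (C * 16))).add
      (intervalIntegrable_const (c := |c| * (CS d * H * 8)))).mono_fun' ?_ ?_
    · rw [uIoc_of_le ht.le]
      exact (c2.mono fun s hs => hs.1).aestronglyMeasurable measurableSet_Ioc
    · rw [Filter.EventuallyLE, ae_restrict_iff' measurableSet_uIoc]
      refine Filter.Eventually.of_forall fun s hm => ?_
      rw [uIoc_of_le ht.le] at hm
      have b1 := W1_bd (c := c) hd hs x hm.1
      have b2 := integral_bd' (a := 3/4) (b := 3/4) (by norm_num) (by norm_num) (by norm_num) (by norm_num) hm.1 hC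
        (F := fun r => Psi 2 d c h x s r) (fun r h0 hr => hbd x s r h0 hr hm.2)
      have e : (2 / (1 - 3/4 : ℝ) + 2 / (1 - 3/4)) * s ^ (1 - 3/4 - 3/4 : ℝ) = 16 * s ^ (-(1/2) : ℝ) := by norm_num
      rw [e] at b2
      change |W 2 d c h x s| ≤ _ at b2
      rw [Real.norm_eq_abs]
      refine (abs_add_le _ _).trans ?_
      rw [abs_mul, abs_mul]
      have := mul_le_mul_of_nonneg_left b2 (abs_nonneg d)
      have := mul_le_mul_of_nonneg_left b1 (abs_nonneg c)
      linarith
  have hd1 := ftc_right c1 ht (hs.ii x ht)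
  have hd2 := ftc_right c2 ht hi
  refine (hd1.add hd2).congr_of_eventuallyEq ?_
  filter_upwards [Ioi_mem_nhds ht] with τ hτ
  exact W0_eq hd hs hh x hτ

end GRD

namespace GRD
def CA (d : ℝ) : ℝ := 48 * CD d * (Real.pi + CQ)

lemma CA_pos {d : ℝ} (hd : 0 < d) : 0 < CA d := by
  unfold CA
  have := CD_pos hd
  have := CQ_nonneg
  have := Real.pi_pos
  positivity

lemma CL_abs {d s θ z : ℝ} (j : ℕ) (hd : 0 < d) (hs : 0 ≤ s) (hθ : 0 < θ) {B : ℝ} (hB : 0 ≤ B) :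
    Integrable (fun y => |kk j y| * (B * Q (z + sg d θ * y) s)) ∧
    ∫ y, |kk j y| * (B * Q (z + sg d θ * y) s) ≤ CA d * B * Q z (s + θ) := by
  have hq : ∀ y, 0 ≤ B * Q (z + sg d θ * y) s := fun y => mul_nonneg hB (Q_pos hs).le
  constructor
  · have hc : Continuous fun y => B * Q (z + sg d θ * y) s :=
      continuous_const.mul (phi_comp_cont (Q_cont s hs) _ _)
    have := (kphi_int j hc.aestronglyMeasurable (B := B) (fun y => by
      rw [abs_of_nonneg (hq y)]
      exact mul_le_of_le_one_right hB (Q_le_one hs))).abs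
    refine this.congr (Filter.Eventually.of_forall fun y => ?_)
    simp only
    rw [abs_mul, abs_of_nonneg (hq y)]
  · have := CL (d := d) (z := z) (φ := fun y => (SignType.sign (kk j y) : ℝ) * (B * Q (z + sg d θ * y) s)) j hd hs hθ hB (fun y => by
      rw [abs_mul, abs_of_nonneg (hq y)]
      refine mul_le_of_le_one_left (hq y) ?_
      rcases SignType.sign (kk j y) with _ | _ | _ <;> simp)
    have e : (fun y => kk j y * ((SignType.sign (kk j y) : ℝ) * (B * Q (z + sg d θ * y) s))) =
        fun y => |kk j y| * (B * Q (z + sg d θ * y) s) := by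
      funext y
      rw [← mul_assoc, self_mul_sign]
    rw [e] at this
    exact (le_abs_self _).trans this

lemma CL2 {d s θ z z' : ℝ} (j : ℕ) (hd : 0 < d) (hs : 0 ≤ s) (hθ : 0 < θ) {φ : ℝ → ℝ} {B B' : ℝ} (hB : 0 ≤ B) (hB' : 0 ≤ B')
    (hφ : ∀ y, |φ y| ≤ B * Q (z + sg d θ * y) s + B' * Q (z' + sg d θ * y) s) :
    |∫ y, kk j y * φ y| ≤ CA d * (B * Q z (s + θ) + B' * Q z' (s + θ)) := by
  obtain ⟨i1, h1⟩ := CL_abs (z := z) j hd hs hθ hB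
  obtain ⟨i2, h2⟩ := CL_abs (z := z') j hd hs hθ hB'
  have h := norm_integral_le_of_norm_le (μ := volume) (f := fun y => kk j y * φ y) (i1.add i2)
    (Filter.Eventually.of_forall fun y => by
      rw [Real.norm_eq_abs, abs_mul]
      have := mul_le_mul_of_nonneg_left (hφ y) (abs_nonneg (kk j y))
      rw [mul_add] at this
      exact this)
  rw [Real.norm_eq_abs] at h
  refine h.trans ?_
  simp only [Pi.add_apply]
  rw [integral_add i1 i2]
  linarith

/-- the pair of components -/
def V (X : ℕ → Bool → ℝ → ℝ → ℝ) (j : ℕ) (x s : ℝ) : ℝ × ℝ := (X j false x s, X j true x s)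

def srcF (f g : Bool → ℝ × ℝ → ℝ) (X : ℕ → Bool → ℝ → ℝ → ℝ) (i : Bool) (x s : ℝ) : ℝ :=
  f i (V X 0 x s) + fderiv ℝ (g i) (V X 0 x s) (V X 1 x s)

def pr (i : Bool) (w : ℝ × ℝ) : ℝ := cond i w.2 w.1

lemma pr_V (X : ℕ → Bool → ℝ → ℝ → ℝ) (i : Bool) (j : ℕ) (x s : ℝ) : pr i (V X j x s) = X j i x s := by
  cases i <;> rfl

lemma V_norm {X : ℕ → Bool → ℝ → ℝ → ℝ} {j : ℕ} {x s B : ℝ} (h : ∀ i, |X j i x s| ≤ B) : ‖V X j x s‖ ≤ B := by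
  rw [Prod.norm_def]
  exact max_le (h false) (h true)

lemma V_norm_sub {X Y : ℕ → Bool → ℝ → ℝ → ℝ} {j : ℕ} {x s x' s' B : ℝ} (h : ∀ i, |X j i x s - Y j i x' s'| ≤ B) :
    ‖V X j x s - V Y j x' s'‖ ≤ B := by
  rw [Prod.norm_def]
  exact max_le (h false) (h true)

structure Par (d c : Bool → ℝ) (f g : Bool → ℝ × ℝ → ℝ) (K L r : ℝ) : Prop where
  hd : ∀ i, 0 < d i
  hc : ∀ i, c (!i) - c i ≠ 0
  K0 : 0 ≤ K
  L0 : 0 ≤ L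
  r0 : 0 < r
  r1 : r ≤ 1
  fb : ∀ i w, ‖w‖ ≤ r → |f i w| ≤ K * (|pr i w| ^ 4 + |pr i w| * |pr (!i) w| + |pr (!i) w| ^ 4)
  gb : ∀ i w, ‖w‖ ≤ r → |g i w| ≤ K * (|pr i w| ^ 2 + |pr i w| * |pr (!i) w| + |pr (!i) w| ^ 3)
  fl : ∀ i w w', ‖w‖ ≤ r → ‖w'‖ ≤ r → |f i w - f i w'| ≤ L * ‖w - w'‖
  gl : ∀ i w w', ‖w‖ ≤ r → ‖w'‖ ≤ r → ‖fderiv ℝ (g i) w - fderiv ℝ (g i) w'‖ ≤ L * ‖w - w'‖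
  g0 : ∀ i, fderiv ℝ (g i) 0 = 0
  fc : ∀ i, Continuous (f i)
  gd : ∀ i, Differentiable ℝ (g i)
  gc : ∀ i, Continuous (fderiv ℝ (g i))

def qq (t : ℝ) : ℝ := 1 + t ^ (-(1/2) : ℝ)

structure Dom (c : Bool → ℝ) (η : ℝ) (X : ℕ → Bool → ℝ → ℝ → ℝ) : Prop where
  cont : ∀ j, j ≤ 1 → ∀ i, ContinuousOn (fun q : ℝ × ℝ => X j i q.1 q.2) {q | 0 < q.2}
  ub : ∀ i x t, 0 < t → |X 0 i x t| ≤ η * Q (x + c i * t) t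
  pb : ∀ i x t, 0 < t → |X 1 i x t| ≤ qq t
  der : ∀ i x t, 0 < t → HasDerivAt (fun x => X 0 i x t) (X 1 i x t) x

section
variable {d c : Bool → ℝ} {f g : Bool → ℝ × ℝ → ℝ} {K L r η : ℝ} {X Y : ℕ → Bool → ℝ → ℝ → ℝ}

lemma Par.gn (hP : Par d c f g K L r) (i : Bool) {w : ℝ × ℝ} (hw : ‖w‖ ≤ r) : ‖fderiv ℝ (g i) w‖ ≤ L * ‖w‖ := by
  have := hP.gl i w 0 hw (by simpa using hP.r0.le)
  rwa [hP.g0, sub_zero, sub_zero] at this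

lemma Dom.un (hD : Dom c η X) (h0 : 0 ≤ η) {x t : ℝ} (ht : 0 < t) : ‖V X 0 x t‖ ≤ η * (1 + t) ^ (-(1/2) : ℝ) :=
  V_norm fun i => (hD.ub i x t ht).trans (mul_le_mul_of_nonneg_left (Q_le ht.le) h0)

lemma one_add_pow_le {t b : ℝ} (ht : 0 < t) (hb : 0 ≤ b) : (1 + t) ^ (-b) ≤ 1 :=
  Real.rpow_le_one_of_one_le_of_nonpos (by linarith) (by linarith)

lemma Dom.un1 (hD : Dom c η X) (h0 : 0 ≤ η) {x t : ℝ} (ht : 0 < t) : ‖V X 0 x t‖ ≤ η :=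
  (hD.un h0 ht).trans (mul_le_of_le_one_right h0 (one_add_pow_le ht (by norm_num)))

lemma Dom.pn (hD : Dom c η X) {x t : ℝ} (ht : 0 < t) : ‖V X 1 x t‖ ≤ qq t := V_norm fun i => hD.pb i x t ht

lemma Dom.Vcont (hD : Dom c η X) (j : ℕ) (hj : j ≤ 1) : ContinuousOn (fun q : ℝ × ℝ => V X j q.1 q.2) {q | 0 < q.2} :=
  (hD.cont j hj false).prodMk (hD.cont j hj true)

lemma pr_le (i : Bool) (w : ℝ × ℝ) : |pr i w| ≤ ‖w‖ := by
  cases i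
  · exact norm_fst_le w
  · exact norm_snd_le w

lemma Par.fn (hP : Par d c f g K L r) (i : Bool) {w : ℝ × ℝ} (hw : ‖w‖ ≤ r) : |f i w| ≤ 3 * K * ‖w‖ ^ 2 := by
  refine (hP.fb i w hw).trans ?_
  have h1 := pr_le i w
  have h2 := pr_le (!i) w
  have h3 : ‖w‖ ≤ 1 := hw.trans hP.r1
  have h4 : ‖w‖ ^ 4 ≤ ‖w‖ ^ 2 := pow_le_pow_of_le_one (norm_nonneg _) h3 (by norm_num)
  have := hP.K0
  calc _ ≤ K * (‖w‖ ^ 4 + ‖w‖ * ‖w‖ + ‖w‖ ^ 4) := by gcongr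
    _ ≤ K * (‖w‖ ^ 2 + ‖w‖ * ‖w‖ + ‖w‖ ^ 2) := by gcongr
    _ = _ := by ring

lemma qq_half {s : ℝ} (hs : 0 < s) : (1 + s) ^ (-(1/2) : ℝ) * qq s ≤ 2 * s ^ (-(1/2) : ℝ) := by
  have h1 : (1 + s) ^ (-(1/2) : ℝ) ≤ 1 := one_add_pow_le hs (by norm_num)
  have h2 : (1 + s) ^ (-(1/2) : ℝ) ≤ s ^ (-(1/2) : ℝ) :=
    Real.rpow_le_rpow_of_nonpos hs (by linarith) (by norm_num)
  have h3 : 0 < s ^ (-(1/2) : ℝ) := by positivity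
  unfold qq
  nlinarith

lemma Dom.gxbd (hD : Dom c η X) (hP : Par d c f g K L r) (h0 : 0 ≤ η) (hη : η ≤ r) (i : Bool) {x s : ℝ} (hs : 0 < s) :
    |fderiv ℝ (g i) (V X 0 x s) (V X 1 x s)| ≤ 2 * L * η * s ^ (-(1/2) : ℝ) := by
  have hw : ‖V X 0 x s‖ ≤ r := (hD.un1 h0 hs).trans hη
  have hL := hP.L0
  have h1 : ‖fderiv ℝ (g i) (V X 0 x s)‖ ≤ L * (η * (1 + s) ^ (-(1/2) : ℝ)) :=
    (hP.gn i hw).trans (mul_le_mul_of_nonneg_left (hD.un h0 hs) hL)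
  have h2 := ContinuousLinearMap.le_of_opNorm_le_of_le _ h1 (hD.pn (x := x) hs)
  rw [Real.norm_eq_abs] at h2
  refine h2.trans ?_
  have := mul_le_mul_of_nonneg_left (qq_half hs) (by positivity : 0 ≤ L * η)
  linarith

lemma Dom.fbd (hD : Dom c η X) (hP : Par d c f g K L r) (h0 : 0 ≤ η) (hη : η ≤ r) (i : Bool) {x s : ℝ} (hs : 0 < s) :
    |f i (V X 0 x s)| ≤ 3 * K * η * s ^ (-(1/2) : ℝ) := by
  have hw : ‖V X 0 x s‖ ≤ r := (hD.un1 h0 hs).trans hη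
  have hK := hP.K0
  refine (hP.fn i hw).trans ?_
  have h2 : (1 + s) ^ (-(1/2) : ℝ) ≤ s ^ (-(1/2) : ℝ) :=
    Real.rpow_le_rpow_of_nonpos hs (by linarith) (by norm_num)
  have h3 : ‖V X 0 x s‖ ≤ 1 := hw.trans hP.r1
  have h4 : ‖V X 0 x s‖ ^ 2 ≤ η * s ^ (-(1/2) : ℝ) := by
    calc _ ≤ ‖V X 0 x s‖ := by nlinarith [norm_nonneg (V X 0 x s)]
      _ ≤ _ := hD.un h0 hs
      _ ≤ _ := by gcongr
  calc _ ≤ 3 * K * (η * s ^ (-(1/2) : ℝ)) := by gcongr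
    _ = _ := by ring

lemma Dom.fcont (hD : Dom c η X) (hP : Par d c f g K L r) (i : Bool) :
    ContinuousOn (fun q : ℝ × ℝ => f i (V X 0 q.1 q.2)) {q | 0 < q.2} :=
  (hP.fc i).comp_continuousOn (hD.Vcont 0 (by norm_num))

lemma Dom.gxcont (hD : Dom c η X) (hP : Par d c f g K L r) (i : Bool) :
    ContinuousOn (fun q : ℝ × ℝ => fderiv ℝ (g i) (V X 0 q.1 q.2) (V X 1 q.1 q.2)) {q | 0 < q.2} :=
  ((hP.gc i).comp_continuousOn (hD.Vcont 0 (by norm_num))).clm_apply (hD.Vcont 1 le_rfl)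

lemma Dom.srcf (hD : Dom c η X) (hP : Par d c f g K L r) (h0 : 0 ≤ η) (hη : η ≤ r) (i : Bool) :
    Src (3 * K * η) (fun x s => f i (V X 0 x s)) := ⟨hD.fcont hP i, fun _ _ hs => hD.fbd hP h0 hη i hs⟩

lemma Dom.srcg (hD : Dom c η X) (hP : Par d c f g K L r) (h0 : 0 ≤ η) (hη : η ≤ r) (i : Bool) :
    Src (2 * L * η) (fun x s => fderiv ℝ (g i) (V X 0 x s) (V X 1 x s)) :=
  ⟨hD.gxcont hP i, fun _ _ hs => hD.gxbd hP h0 hη i hs⟩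

lemma Dom.src (hD : Dom c η X) (hP : Par d c f g K L r) (h0 : 0 ≤ η) (hη : η ≤ r) (i : Bool) :
    Src ((3 * K + 2 * L) * η) (srcF f g X i) := by
  refine ⟨(hD.fcont hP i).add (hD.gxcont hP i), fun x s hs => (abs_add_le _ _).trans ?_⟩
  have := hD.fbd hP h0 hη i (x := x) hs
  have := hD.gxbd hP h0 hη i (x := x) hs
  linarith

end

end GRD

namespace GRD
def CU (b : ℝ) : ℝ := (min (1/2) (b ^ 2 / 8)) ^ (-(3/4) : ℝ)

lemma CU_nonneg (b : ℝ) : 0 ≤ CU b := by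
  unfold CU
  have : (0:ℝ) ≤ min (1/2) (b ^ 2 / 8) := le_min (by norm_num) (by positivity)
  positivity

lemma pow_mono {s a b : ℝ} (hs : 0 < s) (h : a ≤ b) : (1 + s) ^ a ≤ (1 + s) ^ b :=
  Real.rpow_le_rpow_of_exponent_le (by linarith) h

lemma Sop0_env {d c t z δ : ℝ} {φ : ℝ → ℝ} (hd : 0 < d) (ht : 0 < t) (hδ : 0 ≤ δ) (hφ : ∀ x, |φ x| ≤ δ * Q x 0) (x : ℝ)
    (hz : z = x + c * t) : |Sop 0 d c t φ x| ≤ CA d * δ * Q z t := by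
  have := CL (z := z) (φ := fun y => φ (x + c * t + sg d t * y)) 0 hd le_rfl ht hδ (fun y => by rw [hz]; exact hφ _)
  rw [zero_add] at this
  unfold Sop
  rw [pow_zero, one_mul]
  exact this

section
variable {d c : Bool → ℝ} {f g : Bool → ℝ × ℝ → ℝ} {K L r η : ℝ} {X Y : ℕ → Bool → ℝ → ℝ → ℝ}

/-- pointwise source bounds -/
lemma Dom.mixed (hD : Dom c η X) (h0 : 0 ≤ η) (i : Bool) {b : ℝ} (hb : b = c (!i) - c i) (hb0 : b ≠ 0)
    {x s : ℝ} (hs : 0 < s) :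
    |X 0 i x s| * |X 0 (!i) x s| ≤ η ^ 2 * (CU b * (1 + s) ^ (-(5/4) : ℝ) * (Q (x + c i * s) s + Q (x + c (!i) * s) s)) := by
  have h1 := hD.ub i x s hs
  have h2 := hD.ub (!i) x s hs
  have h3 := UV (z := x + c i * s) (z' := x + c (!i) * s) hs.le hb0 (by rw [hb]; ring)
  have q := Q_pos (z := x + c i * s) hs.le
  have q' := Q_pos (z := x + c (!i) * s) hs.le
  calc _ ≤ (η * Q (x + c i * s) s) * (η * Q (x + c (!i) * s) s) := by gcongr
    _ = η ^ 2 * (Q (x + c i * s) s * Q (x + c (!i) * s) s) := by ring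
    _ ≤ _ := by
      refine mul_le_mul_of_nonneg_left h3 (by positivity)

lemma Dom.powb (hD : Dom c η X) (h0 : 0 ≤ η) (h1 : η ≤ 1) (i : Bool) {x s : ℝ} (hs : 0 < s) (n : ℕ) (a : ℝ) (ha : a ≤ (n + 1) / 2) :
    |X 0 i x s| ^ (n + 2) ≤ η ^ 2 * ((1 + s) ^ (-a) * Q (x + c i * s) s) := by
  have h := hD.ub i x s hs
  have q := Q_pos (z := x + c i * s) hs.le
  have q1 := Q_le (z := x + c i * s) hs.le
  have e1 : ((1 + s) ^ (-(1/2) : ℝ)) ^ (n + 1) ≤ (1 + s) ^ (-a) := by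
    rw [← Real.rpow_natCast, ← Real.rpow_mul (by positivity)]
    refine pow_mono hs ?_
    push_cast
    linarith
  calc _ ≤ (η * Q (x + c i * s) s) ^ (n + 2) := by gcongr
    _ = η ^ (n + 2) * (Q (x + c i * s) s ^ (n + 1) * Q (x + c i * s) s) := by ring
    _ ≤ η ^ 2 * (((1 + s) ^ (-(1/2) : ℝ)) ^ (n + 1) * Q (x + c i * s) s) := by
      have : η ^ (n + 2) ≤ η ^ 2 := pow_le_pow_of_le_one h0 h1 (by omega)
      gcongr
    _ ≤ _ := by gcongr

lemma Dom.fenv (hD : Dom c η X) (hP : Par d c f g K L r) (h0 : 0 ≤ η) (hη : η ≤ r) (i : Bool) {b : ℝ}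
    (hb : b = c (!i) - c i) {x s : ℝ} (hs : 0 < s) :
    |f i (V X 0 x s)| ≤ K * (1 + CU b) * η ^ 2 * ((1 + s) ^ (-(5/4) : ℝ)) * (Q (x + c i * s) s + Q (x + c (!i) * s) s) := by
  have hb0 : b ≠ 0 := hb ▸ hP.hc i
  refine (hP.fb i _ ((hD.un1 h0 hs).trans hη)).trans ?_
  rw [pr_V, pr_V]
  have hK := hP.K0
  have h1 := hD.mixed h0 i hb hb0 (x := x) hs
  have h2 := hD.powb h0 (hη.trans hP.r1) i (x := x) hs 2 (5/4) (by norm_num)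
  have h3 := hD.powb h0 (hη.trans hP.r1) (!i) (x := x) hs 2 (5/4) (by norm_num)
  have := mul_le_mul_of_nonneg_left (add_le_add (add_le_add h2 h1) h3) hK
  refine this.trans (le_of_eq ?_)
  ring

lemma Dom.genv (hD : Dom c η X) (hP : Par d c f g K L r) (h0 : 0 ≤ η) (hη : η ≤ r) (i : Bool) {b : ℝ}
    (hb : b = c (!i) - c i) {x s : ℝ} (hs : 0 < s) :
    |g i (V X 0 x s)| ≤ K * (1 + CU b) * η ^ 2 * (1 + s) ^ (-(1/2) : ℝ) * Q (x + c i * s) s + 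
      K * (1 + CU b) * η ^ 2 * (1 + s) ^ (-1 : ℝ) * Q (x + c (!i) * s) s := by
  have hb0 : b ≠ 0 := hb ▸ hP.hc i
  refine (hP.gb i _ ((hD.un1 h0 hs).trans hη)).trans ?_
  rw [pr_V, pr_V]
  have hK := hP.K0
  have hU := CU_nonneg b
  have q := Q_pos (z := x + c i * s) hs.le
  have q' := Q_pos (z := x + c (!i) * s) hs.le
  have h1 := hD.mixed h0 i hb hb0 (x := x) hs
  have h2 := hD.powb h0 (hη.trans hP.r1) i (x := x) hs 0 (1/2) (by norm_num)
  have h3 := hD.powb h0 (hη.trans hP.r1) (!i) (x := x) hs 1 1 (by norm_num)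
  have h4 : η ^ 2 * (CU b * (1 + s) ^ (-(5/4) : ℝ) * (Q (x + c i * s) s + Q (x + c (!i) * s) s)) ≤
      η ^ 2 * (CU b * ((1 + s) ^ (-(1/2) : ℝ) * Q (x + c i * s) s + (1 + s) ^ (-1 : ℝ) * Q (x + c (!i) * s) s)) := by
    have e1 : (1 + s) ^ (-(5/4) : ℝ) ≤ (1 + s) ^ (-(1/2) : ℝ) := pow_mono hs (by norm_num)
    have e2 : (1 + s) ^ (-(5/4) : ℝ) ≤ (1 + s) ^ (-1 : ℝ) := pow_mono hs (by norm_num)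
    rw [mul_assoc (CU b), mul_add]
    gcongr
  have := mul_le_mul_of_nonneg_left (add_le_add (add_le_add h2 (h1.trans h4)) h3) hK
  refine this.trans (le_of_eq ?_)
  ring

lemma Dom.gder (hD : Dom c η X) (hP : Par d c f g K L r) (i : Bool) {x s : ℝ} (hs : 0 < s) :
    HasDerivAt (fun x => g i (V X 0 x s)) (fderiv ℝ (g i) (V X 0 x s) (V X 1 x s)) x := by
  have h1 : HasDerivAt (fun x => V X 0 x s) (V X 1 x s) x := (hD.der false x s hs).prodMk (hD.der true x s hs)
  exact ((hP.gd i) (V X 0 x s)).hasFDerivAt.comp_hasDerivAt x h1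

/-- constant of the envelope estimate -/
def CBB (d K b : ℝ) : ℝ := CA d * (K * (1 + CU b)) * (2 + (√(2 * d))⁻¹)

lemma Dom.psi_env (hD : Dom c η X) (hP : Par d c f g K L r) (h0 : 0 ≤ η) (hη : η ≤ r) (i : Bool) {b z x s t : ℝ}
    (hb : b = c (!i) - c i) (hz : z = x + c i * t) (hs : 0 < s) (hst : s < t) :
    |Psi 0 (d i) (c i) (srcF f g X i) x t s| ≤ (CBB (d i) K b * η ^ 2) *
      ((1 + s) ^ (-(5/4) : ℝ) * (Q z t + Q (z + b * s) t) +
      (t - s) ^ (-(1/2) : ℝ) * ((1 + s) ^ (-(1/2) : ℝ) * Q z t + (1 + s) ^ (-1 : ℝ) * Q (z + b * s) t)) := by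
  have hd := hP.hd i
  have hθ : 0 < t - s := by linarith
  have sf := hD.srcf hP h0 hη i
  have sgg := hD.srcg hP h0 hη i
  have hK := hP.K0
  have hU := CU_nonneg b
  have hA := CA_pos hd
  have q := Q_pos (z := z) (hs.trans hst).le
  have q' := Q_pos (z := z + b * s) (hs.trans hst).le
  have es : s + (t - s) = t := by ring
  have arg1 : ∀ y, x + c i * (t - s) + sg (d i) (t - s) * y + c i * s = z + sg (d i) (t - s) * y := fun y => by
    rw [hz]; ring
  have arg2 : ∀ y, x + c i * (t - s) + sg (d i) (t - s) * y + c (!i) * s = z + b * s + sg (d i) (t - s) * y := fun y => by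
    rw [hz, hb]; ring
  have e : Psi 0 (d i) (c i) (srcF f g X i) x t s = Sop 0 (d i) (c i) (t - s) (fun y => f i (V X 0 y s)) x +
      Sop 1 (d i) (c i) (t - s) (fun y => g i (V X 0 y s)) x := by
    have gB : ∀ y, |g i (V X 0 y s)| ≤ K * (1 + CU b) * η ^ 2 * (1 + s) ^ (-(1/2) : ℝ) + K * (1 + CU b) * η ^ 2 * (1 + s) ^ (-1 : ℝ) := by
      intro y
      refine (hD.genv hP h0 hη i hb hs).trans (add_le_add ?_ ?_) <;>
      exact mul_le_of_le_one_right (by positivity) (Q_le_one hs.le)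
    rw [← Sop_ibp hd hθ (sgg.contx hs) gB (fun y => sgg.bd y s hs) (fun y => hD.gder hP i hs),
      ← Sop_add 0 (d i) (c i) (t - s) (sf.contx hs) (sgg.contx hs) (fun y => sf.bd y s hs) (fun y => sgg.bd y s hs)]
    rfl
  have b1 : |Sop 0 (d i) (c i) (t - s) (fun y => f i (V X 0 y s)) x| ≤ CA (d i) * 
      (K * (1 + CU b) * η ^ 2 * ((1 + s) ^ (-(5/4) : ℝ)) * Q z t + 
      K * (1 + CU b) * η ^ 2 * ((1 + s) ^ (-(5/4) : ℝ)) * Q (z + b * s) t) := by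
    have := CL2 (z := z) (z' := z + b * s) (B := K * (1 + CU b) * η ^ 2 * ((1 + s) ^ (-(5/4) : ℝ))) 
      (B' := K * (1 + CU b) * η ^ 2 * ((1 + s) ^ (-(5/4) : ℝ))) 
      (φ := fun y => f i (V X 0 (x + c i * (t - s) + sg (d i) (t - s) * y) s)) 0 hd hs.le hθ (by positivity) (by positivity)
      (fun y => by
        have := hD.fenv hP h0 hη i hb (x := x + c i * (t - s) + sg (d i) (t - s) * y) hs
        rw [arg1, arg2, mul_add] at this
        exact this)
    rw [es] at this
    unfold Sop
    rw [pow_zero, one_mul]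
    exact this
  have b2 : |Sop 1 (d i) (c i) (t - s) (fun y => g i (V X 0 y s)) x| ≤ ((1 + (√(2 * d i))⁻¹) * (t - s) ^ (-(1/2) : ℝ)) * (CA (d i) * 
      (K * (1 + CU b) * η ^ 2 * ((1 + s) ^ (-(1/2) : ℝ)) * Q z t + 
      K * (1 + CU b) * η ^ 2 * ((1 + s) ^ (-1 : ℝ)) * Q (z + b * s) t)) := by
    have := CL2 (z := z) (z' := z + b * s) (B := K * (1 + CU b) * η ^ 2 * ((1 + s) ^ (-(1/2) : ℝ))) 
      (B' := K * (1 + CU b) * η ^ 2 * ((1 + s) ^ (-1 : ℝ))) 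
      (φ := fun y => g i (V X 0 (x + c i * (t - s) + sg (d i) (t - s) * y) s)) 1 hd hs.le hθ (by positivity) (by positivity)
      (fun y => by
        have := hD.genv hP h0 hη i hb (x := x + c i * (t - s) + sg (d i) (t - s) * y) hs
        rw [arg1, arg2] at this
        exact this)
    rw [es] at this
    have hi := sg_inv_le hd hθ.le
    unfold Sop
    rw [pow_one, abs_mul, abs_of_nonneg (inv_nonneg.2 (sg_nonneg _ _))]
    gcongr
  rw [e]
  refine (abs_add_le _ _).trans ((add_le_add b1 b2).trans ?_)
  unfold CBB
  set w := (√(2 * d i))⁻¹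
  have hw : 0 ≤ w := by positivity
  set A := (1 + s) ^ (-(5/4) : ℝ) * (Q z t + Q (z + b * s) t)
  have hA0 : 0 ≤ A := by positivity
  set A' := (t - s) ^ (-(1/2) : ℝ) * ((1 + s) ^ (-(1/2) : ℝ) * Q z t + (1 + s) ^ (-1 : ℝ) * Q (z + b * s) t) with hA'
  have hA'0 : 0 ≤ A' := by positivity
  calc _ = CA (d i) * (K * (1 + CU b)) * η ^ 2 * (A + (1 + w) * A') := by rw [hA']; ring
    _ ≤ CA (d i) * (K * (1 + CU b)) * η ^ 2 * ((2 + w) * (A + A')) := by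
      refine mul_le_mul_of_nonneg_left ?_ (by positivity)
      nlinarith [mul_nonneg hw hA0]
    _ = _ := by ring

def Phi (d c : Bool → ℝ) (f g : Bool → ℝ × ℝ → ℝ) (u0 : Bool → ℝ → ℝ) (X : ℕ → Bool → ℝ → ℝ → ℝ) (j : ℕ) (i : Bool) (x t : ℝ) : ℝ :=
  Sop j (d i) (c i) t (u0 i) x + W j (d i) (c i) (srcF f g X i) x t

structure Small (d c : Bool → ℝ) (K L η δ : ℝ) (u0 : Bool → ℝ → ℝ) : Prop where
  δ0 : 0 ≤ δ
  s1 : ∀ i, CE (c (!i) - c i) * CBB (d i) K (c (!i) - c i) * η ≤ 1/2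
  s2 : ∀ i, CA (d i) * δ ≤ η / 2
  s3 : ∀ i, CS (d i) * δ ≤ 1
  s4 : ∀ i, CS (d i) * ((3 * K + 2 * L) * η) * 8 ≤ 1
  u0c : ∀ i, Continuous (u0 i)
  u0b : ∀ i x, |u0 i x| ≤ δ * Q x 0

lemma CBB_nonneg {d K b : ℝ} (hd : 0 < d) (hK : 0 ≤ K) : 0 ≤ CBB d K b := by
  unfold CBB
  have := CU_nonneg b
  have := CA_pos hd
  positivity

lemma Small.u0b' {δ : ℝ} {u0 : Bool → ℝ → ℝ} (hS : Small d c K L η δ u0) (i : Bool) (x : ℝ) : |u0 i x| ≤ δ :=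
  (hS.u0b i x).trans (mul_le_of_le_one_right hS.δ0 (Q_le_one le_rfl))

lemma Dom.map (hD : Dom c η X) (hP : Par d c f g K L r) (h0 : 0 ≤ η) (hη : η ≤ r) {δ : ℝ} {u0 : Bool → ℝ → ℝ}
    (hS : Small d c K L η δ u0) : Dom c η (Phi d c f g u0 X) := by
  refine ⟨?_, ?_, ?_, ?_⟩
  · intro j hj i
    have hs := hD.src hP h0 hη i
    refine (Sop_cont j (hP.hd i) (hS.u0c i) (hS.u0b' i)).add ?_
    interval_cases j
    · exact W0_cont (hP.hd i) hs
    · exact W1_cont (hP.hd i) hs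
  · intro i x t ht
    have h1 := Sop0_env (hP.hd i) ht hS.δ0 (hS.u0b i) x (rfl : x + c i * t = x + c i * t)
    have q := Q_pos (z := x + c i * t) ht.le
    have h2 := env_int ht (hP.hc i) (mul_nonneg (CBB_nonneg (hP.hd i) hP.K0) (sq_nonneg η))
      (fun s h0' hst => hD.psi_env hP h0 hη i (rfl) (rfl : x + c i * t = x + c i * t) h0' hst)
    have h3 := hS.s1 i
    have h4 := hS.s2 i
    refine (abs_add_le _ _).trans ((add_le_add h1 h2).trans ?_)
    rw [← add_mul]
    refine mul_le_mul_of_nonneg_right ?_ q.le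
    nlinarith
  · intro i x t ht
    have hs := hD.src hP h0 hη i
    have h1 := Sop_bound (j := 1) (c := c i) (by norm_num) (hP.hd i) ht.le (hS.u0b' i) x
    have h2 := W1_bd (c := c i) (hP.hd i) hs x ht
    refine (abs_add_le _ _).trans ((add_le_add h1 h2).trans ?_)
    have h3 := hS.s3 i
    have h4 := hS.s4 i
    have e : t ^ (-((1:ℕ):ℝ)/2) = t ^ (-(1/2) : ℝ) := by norm_num
    rw [e]
    have : 0 < t ^ (-(1/2) : ℝ) := by positivity
    unfold qq
    nlinarith
  · intro i x t ht
    exact (Sop_deriv_x (j := 0) (by norm_num) (hP.hd i) ht (hS.u0c i) (hS.u0b' i) x).add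
      (W0_deriv (hP.hd i) (hD.src hP h0 hη i) x ht)

end

end GRD

namespace GRD
lemma exp_le_quarter {y : ℝ} (hy : 0 < y) : Real.exp (-y) ≤ y ^ (-(1/4) : ℝ) := by
  rw [Real.rpow_def_of_pos hy, Real.exp_le_exp]
  have := Real.log_le_sub_one_of_pos hy
  linarith

lemma one_le_CT {s T : ℝ} (hs : 0 < s) (hT : s ≤ T) : 1 ≤ T ^ (1/2 : ℝ) * s ^ (-(1/2) : ℝ) := by
  have : s ^ (1/2 : ℝ) * s ^ (-(1/2) : ℝ) = 1 := by rw [← Real.rpow_add hs]; norm_num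
  refine this.symm.le.trans ?_
  gcongr

lemma qq_le_CT {s T : ℝ} (hs : 0 < s) (hT : s ≤ T) : qq s ≤ (1 + T ^ (1/2 : ℝ)) * s ^ (-(1/2) : ℝ) := by
  have := one_le_CT hs hT
  unfold qq
  linarith

def Close (T lam D : ℝ) (X Y : ℕ → Bool → ℝ → ℝ → ℝ) : Prop :=
  ∀ j, j ≤ 1 → ∀ i x t, 0 < t → t ≤ T → |X j i x t - Y j i x t| ≤ D * (t ^ (-((j:ℝ)/2)) * Real.exp (lam * t))

section
variable {d c : Bool → ℝ} {f g : Bool → ℝ × ℝ → ℝ} {K L r η : ℝ} {X Y : ℕ → Bool → ℝ → ℝ → ℝ}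

lemma src_diff (hX : Dom c η X) (hY : Dom c η Y) (hP : Par d c f g K L r) (h0 : 0 ≤ η) (hη : η ≤ r) {T lam D : ℝ} (hD : 0 ≤ D)
    (hC : Close T lam D X Y) (i : Bool) {x s : ℝ} (hs : 0 < s) (hT : s ≤ T) :
    |srcF f g X i x s - srcF f g Y i x s| ≤ 3 * L * (1 + T ^ (1/2 : ℝ)) * D * (s ^ (-(1/2) : ℝ) * Real.exp (lam * s)) := by
  have hL := hP.L0
  have hx : ‖V X 0 x s‖ ≤ r := (hX.un1 h0 hs).trans hη
  have hy : ‖V Y 0 x s‖ ≤ r := (hY.un1 h0 hs).trans hη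
  have hT0 : 0 < T := hs.trans_le hT
  set E := Real.exp (lam * s)
  have hE : 0 < E := Real.exp_pos _
  set a := s ^ (-(1/2) : ℝ)
  have ha : 0 < a := by positivity
  set C := 1 + T ^ (1/2 : ℝ)
  have hC0 : 0 < C := by positivity
  have hq : qq s ≤ C * a := qq_le_CT hs hT
  have h1C : 1 ≤ C * a := by
    refine le_trans ?_ hq
    unfold qq
    linarith
  have haC : a ≤ C * a := by
    have : 1 ≤ C := by
      have : 0 ≤ T ^ (1/2 : ℝ) := by positivity
      simp only [C]; linarith
    nlinarith
  have d0 : ‖V X 0 x s - V Y 0 x s‖ ≤ D * E := V_norm_sub fun i => by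
    have := hC 0 (by norm_num) i x s hs hT
    simpa using this
  have d1 : ‖V X 1 x s - V Y 1 x s‖ ≤ D * (a * E) := V_norm_sub fun i => by
    have := hC 1 le_rfl i x s hs hT
    rw [Nat.cast_one] at this
    exact this
  have f1 : |f i (V X 0 x s) - f i (V Y 0 x s)| ≤ L * (D * E) :=
    (hP.fl i _ _ hx hy).trans (mul_le_mul_of_nonneg_left d0 hL)
  have g1 : |(fderiv ℝ (g i) (V X 0 x s) - fderiv ℝ (g i) (V Y 0 x s)) (V X 1 x s)| ≤ (L * (D * E)) * (C * a) :=
    ContinuousLinearMap.le_of_opNorm_le_of_le _ ((hP.gl i _ _ hx hy).trans (mul_le_mul_of_nonneg_left d0 hL))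
      ((hX.pn hs).trans hq)
  have g2 : |fderiv ℝ (g i) (V Y 0 x s) (V X 1 x s - V Y 1 x s)| ≤ (L * 1) * (D * (a * E)) :=
    ContinuousLinearMap.le_of_opNorm_le_of_le _ ((hP.gn i hy).trans (mul_le_mul_of_nonneg_left (hy.trans hP.r1) hL)) d1
  have e : srcF f g X i x s - srcF f g Y i x s = (f i (V X 0 x s) - f i (V Y 0 x s)) +
      ((fderiv ℝ (g i) (V X 0 x s) - fderiv ℝ (g i) (V Y 0 x s)) (V X 1 x s) +
      fderiv ℝ (g i) (V Y 0 x s) (V X 1 x s - V Y 1 x s)) := by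
    unfold srcF
    rw [map_sub, sub_apply]
    ring
  rw [e]
  refine (abs_add_le _ _).trans ((add_le_add f1 ((abs_add_le _ _).trans (add_le_add g1 g2))).trans ?_)
  have hp : 0 ≤ L * D * E := by positivity
  nlinarith [mul_le_mul_of_nonneg_left h1C hp, mul_le_mul_of_nonneg_left haC hp]

lemma Psi_ii {j : ℕ} (hj : j ≤ 1) {d c H : ℝ} (hd : 0 < d) {h : ℝ → ℝ → ℝ} (hs : Src H h) (x : ℝ) {t : ℝ} (ht : 0 < t) :
    IntervalIntegrable (fun s => Psi j d c h x t s) volume 0 t := by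
  interval_cases j
  · exact (Psi_ker0 hd hs).ii le_rfl (by norm_num) (by norm_num) (by norm_num) x ht
  · exact (Psi_ker1 hd hs).ii (by norm_num) (by norm_num) (by norm_num) (by norm_num) x ht

lemma contr (hX : Dom c η X) (hY : Dom c η Y) (hP : Par d c f g K L r) (h0 : 0 ≤ η) (hη : η ≤ r) {T lam D : ℝ} (hD : 0 ≤ D)
    (hlam : 0 < lam) (hC : Close T lam D X Y) (u0 : Bool → ℝ → ℝ) (i : Bool) (j : ℕ) (hj : j ≤ 1) {x t : ℝ} (ht : 0 < t) (hT : t ≤ T) :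
    |Phi d c f g u0 X j i x t - Phi d c f g u0 Y j i x t| ≤ 
      (36 * CS (d i) * L * (1 + T ^ (1/2 : ℝ)) * T ^ (1/4 : ℝ) * lam ^ (-(1/4) : ℝ)) * D * (t ^ (-((j:ℝ)/2)) * Real.exp (lam * t)) := by
  have hL := hP.L0
  have hd := hP.hd i
  have hCS := CS_pos (d i)
  have hT0 : 0 < T := ht.trans_le hT
  have sX := hX.src hP h0 hη i
  have sY := hY.src hP h0 hη i
  have e : Phi d c f g u0 X j i x t - Phi d c f g u0 Y j i x t = 
      ∫ s in (0:ℝ)..t, (Psi j (d i) (c i) (srcF f g X i) x t s - Psi j (d i) (c i) (srcF f g Y i) x t s) := by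
    rw [intervalIntegral.integral_sub (Psi_ii hj hd sX x ht) (Psi_ii hj hd sY x ht)]
    unfold Phi W
    ring
  rw [e]
  have hj' : (j:ℝ) ≤ 1 := by exact_mod_cast hj
  have hj0 : (0:ℝ) ≤ j := Nat.cast_nonneg j
  have key := integral_bd' (a := (j:ℝ)/2 + 1/4) (b := 1/2) 
    (C := CS (d i) * (3 * L * (1 + T ^ (1/2 : ℝ)) * D) * (Real.exp (lam * t) * lam ^ (-(1/4) : ℝ)))
    (F := fun s => Psi j (d i) (c i) (srcF f g X i) x t s - Psi j (d i) (c i) (srcF f g Y i) x t s)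
    (by linarith) (by linarith) (by norm_num) (by norm_num) ht (by positivity) (by
      intro s hs hst
      have hθ : 0 < t - s := by linarith
      have b1 := Sop_bound (j := j) (by omega) (c := c i) hd hθ.le (φ := fun y => srcF f g X i y s - srcF f g Y i y s)
        (fun y => src_diff hX hY hP h0 hη hD hC i (x := y) hs (hst.le.trans hT)) x
      unfold Psi
      rw [Sop_sub j (d i) (c i) (t - s) (sX.contx hs) (sY.contx hs) (fun y => sX.bd y s hs) (fun y => sY.bd y s hs)]
      refine b1.trans ?_
      have e1 : Real.exp (lam * s) ≤ Real.exp (lam * t) * (lam ^ (-(1/4) : ℝ) * (t - s) ^ (-(1/4) : ℝ)) := by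
        rw [← Real.mul_rpow hlam.le hθ.le]
        have : Real.exp (lam * s) = Real.exp (lam * t) * Real.exp (-(lam * (t - s))) := by
          rw [← Real.exp_add]; ring_nf
        rw [this]
        have := exp_le_quarter (mul_pos hlam hθ)
        gcongr
      have e2 : (t - s) ^ (-((j:ℝ)/2 + 1/4)) = (t - s) ^ (-(j:ℝ)/2) * (t - s) ^ (-(1/4) : ℝ) := by
        rw [← Real.rpow_add hθ]; ring_nf
      rw [e2]
      calc _ ≤ CS (d i) * (t - s) ^ (-(j:ℝ)/2) * (3 * L * (1 + T ^ (1/2 : ℝ)) * D * (s ^ (-(1/2) : ℝ) * 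
            (Real.exp (lam * t) * (lam ^ (-(1/4) : ℝ) * (t - s) ^ (-(1/4) : ℝ))))) := by gcongr
        _ = _ := by ring)
  refine key.trans ?_
  have e3 : t ^ (1 - ((j:ℝ)/2 + 1/4) - 1/2) = t ^ (1/4 : ℝ) * t ^ (-((j:ℝ)/2)) := by
    rw [← Real.rpow_add ht]; ring_nf
  have e4 : 2 / (1 - ((j:ℝ)/2 + 1/4)) + 2 / (1 - 1/2) ≤ 12 := by
    have : 2 / (1 - ((j:ℝ)/2 + 1/4)) ≤ 2 / (1/4) := by
      apply div_le_div_of_nonneg_left (by norm_num) (by norm_num)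
      linarith
    norm_num at this ⊢
    linarith
  have e5 : t ^ (1/4 : ℝ) ≤ T ^ (1/4 : ℝ) := by gcongr
  rw [e3]
  calc _ ≤ CS (d i) * (3 * L * (1 + T ^ (1/2 : ℝ)) * D) * (Real.exp (lam * t) * lam ^ (-(1/4) : ℝ)) * (12 * (T ^ (1/4 : ℝ) * t ^ (-((j:ℝ)/2)))) := by
        gcongr
    _ = _ := by ring

lemma exists_lam (A : ℝ) (hA : 0 ≤ A) : ∃ lam : ℝ, 0 < lam ∧ A * lam ^ (-(1/4) : ℝ) ≤ 1/2 := by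
  refine ⟨(2 * (A + 1)) ^ (4 : ℕ), by positivity, ?_⟩
  have : ((2 * (A + 1)) ^ (4 : ℕ)) ^ (-(1/4) : ℝ) = (2 * (A + 1))⁻¹ := by
    rw [← Real.rpow_natCast, ← Real.rpow_mul (by positivity)]
    norm_num
    rw [Real.rpow_neg_one]
    rw [mul_inv]
    ring
  rw [this, ← div_eq_mul_inv, div_le_iff₀ (by positivity)]
  linarith

lemma contr_half (hP : Par d c f g K L r) (h0 : 0 ≤ η) (hη : η ≤ r) (u0 : Bool → ℝ → ℝ) {T : ℝ} (hT : 0 < T) :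
    ∃ lam, 0 < lam ∧ ∀ X Y, Dom c η X → Dom c η Y → ∀ D, 0 ≤ D → Close T lam D X Y → 
      Close T lam (D / 2) (Phi d c f g u0 X) (Phi d c f g u0 Y) := by
  have hL := hP.L0
  have p1 := CS_pos (d true)
  have p2 := CS_pos (d false)
  obtain ⟨lam, hl, h⟩ := exists_lam (36 * (CS (d true) + CS (d false)) * L * (1 + T ^ (1/2 : ℝ)) * T ^ (1/4 : ℝ)) (by positivity)
  refine ⟨lam, hl, fun X Y hX hY D hD hC j hj i x t ht htT => ?_⟩
  refine (contr hX hY hP h0 hη hD hl hC u0 i j hj ht htT).trans ?_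
  refine mul_le_mul_of_nonneg_right ?_ (by positivity)
  have : 36 * CS (d i) * L * (1 + T ^ (1/2 : ℝ)) * T ^ (1/4 : ℝ) * lam ^ (-(1/4) : ℝ) ≤ 1/2 := by
    refine le_trans ?_ h
    gcongr
    cases i
    · linarith
    · linarith
  have := mul_le_mul_of_nonneg_right this hD
  linarith

end
end GRD

namespace GRD
open Filter Topology

section
variable {d c : Bool → ℝ} {f g : Bool → ℝ × ℝ → ℝ} {K L r η : ℝ}

def It (d c : Bool → ℝ) (f g : Bool → ℝ × ℝ → ℝ) (u0 : Bool → ℝ → ℝ) : ℕ → ℕ → Bool → ℝ → ℝ → ℝ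
  | 0 => fun _ _ _ _ => 0
  | n + 1 => Phi d c f g u0 (It d c f g u0 n)

lemma zero_Dom (h0 : 0 ≤ η) : Dom c η (fun _ _ _ _ => 0) := by
  refine ⟨fun j hj i => continuousOn_const, ?_, ?_, fun i x t ht => hasDerivAt_const x 0⟩
  · intro i x t ht
    rw [abs_zero]
    exact mul_nonneg h0 (Q_pos ht.le).le
  · intro i x t ht
    rw [abs_zero]
    unfold qq
    positivity

lemma It_Dom (hP : Par d c f g K L r) (h0 : 0 ≤ η) (hη : η ≤ r) {δ : ℝ} {u0 : Bool → ℝ → ℝ} (hS : Small d c K L η δ u0) (n : ℕ) :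
    Dom c η (It d c f g u0 n) := by
  induction n with
  | zero => exact zero_Dom h0
  | succ n ih => exact ih.map hP h0 hη hS

lemma It_close (hP : Par d c f g K L r) (h0 : 0 ≤ η) (hη : η ≤ r) {δ : ℝ} {u0 : Bool → ℝ → ℝ} (hS : Small d c K L η δ u0)
    {T lam : ℝ} (hl : 0 < lam) (hT : 0 < T)
    (hc : ∀ X Y, Dom c η X → Dom c η Y → ∀ D, 0 ≤ D → Close T lam D X Y → 
      Close T lam (D / 2) (Phi d c f g u0 X) (Phi d c f g u0 Y)) (n : ℕ) :
    Close T lam ((1 + T ^ (1/2 : ℝ)) / 2 ^ n) (It d c f g u0 n) (It d c f g u0 (n + 1)) := by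
  induction n with
  | zero =>
    intro j hj i x t ht htT
    have hD := It_Dom hP h0 hη hS 1
    have e1 : 1 ≤ Real.exp (lam * t) := Real.one_le_exp (by positivity)
    have hT2 : 0 ≤ T ^ (1/2 : ℝ) := by positivity
    have key : |It d c f g u0 1 j i x t| ≤ (1 + T ^ (1/2 : ℝ)) * t ^ (-((j:ℝ)/2)) := by
      interval_cases j
      · have := (hD.ub i x t ht).trans (mul_le_of_le_one_right h0 (Q_le_one ht.le))
        simp only [Nat.cast_zero, zero_div, neg_zero, Real.rpow_zero, mul_one]
        linarith [hη.trans hP.r1]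
      · refine (hD.pb i x t ht).trans ((qq_le_CT ht htT).trans (le_of_eq ?_))
        rw [Nat.cast_one]
    have hz : It d c f g u0 0 j i x t = 0 := rfl
    rw [hz, zero_sub, abs_neg, pow_zero, div_one, ← mul_assoc]
    have hn : 0 ≤ (1 + T ^ (1/2 : ℝ)) * t ^ (-((j:ℝ)/2)) := by positivity
    exact key.trans (le_mul_of_one_le_right hn e1)
  | succ n ih =>
    have := hc _ _ (It_Dom hP h0 hη hS n) (It_Dom hP h0 hη hS (n + 1)) _ (by positivity) ih
    have e : (1 + T ^ (1/2 : ℝ)) / 2 ^ n / 2 = (1 + T ^ (1/2 : ℝ)) / 2 ^ (n + 1) := by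
      rw [div_div, pow_succ]
    rw [e] at this
    exact this

lemma tendsto_geo (A : ℝ) : Tendsto (fun n : ℕ => A / 2 ^ n) atTop (𝓝 0) := by
  have := (tendsto_pow_atTop_nhds_zero_of_lt_one (by norm_num : (0:ℝ) ≤ 1/2) (by norm_num)).const_mul A
  rw [mul_zero] at this
  refine this.congr fun n => ?_
  rw [one_div, inv_pow, div_eq_mul_inv]

/-- existence of the fixed point -/
lemma fixpoint (hP : Par d c f g K L r) (h0 : 0 ≤ η) (hη : η ≤ r) {δ : ℝ} {u0 : Bool → ℝ → ℝ} (hS : Small d c K L η δ u0) :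
    ∃ X, Dom c η X ∧ ∀ j, j ≤ 1 → ∀ i x t, 0 < t → X j i x t = Phi d c f g u0 X j i x t := by
  set I := It d c f g u0 with hI
  have hlam := fun (T : ℝ) (hT : 0 < T) => contr_half hP h0 hη u0 hT
  choose! lam lam0 hlam using hlam
  have step : ∀ T, 0 < T → ∀ n, Close T (lam T) ((1 + T ^ (1/2 : ℝ)) / 2 ^ n) (I n) (I (n + 1)) := fun T hT n =>
    It_close hP h0 hη hS (lam0 T hT) hT (hlam T hT) n
  have lim : ∀ j, j ≤ 1 → ∀ i x t, 0 < t → ∃ a, Tendsto (fun n => I n j i x t) atTop (𝓝 a) := by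
    intro j hj i x t ht
    refine cauchySeq_tendsto_of_complete (cauchySeq_of_le_geometric_two (C := 2 * ((1 + t ^ (1/2 : ℝ)) * (t ^ (-((j:ℝ)/2)) * Real.exp (lam t * t)))) fun n => ?_)
    rw [Real.dist_eq]
    refine (step t ht n j hj i x t ht le_rfl).trans (le_of_eq ?_)
    ring
  choose! X hX using lim
  have close : ∀ T, 0 < T → ∀ n, Close T (lam T) (2 * (1 + T ^ (1/2 : ℝ)) / 2 ^ n) (I n) X := by
    intro T hT n j hj i x t ht htT
    have := dist_le_of_le_geometric_two_of_tendsto (C := 2 * ((1 + T ^ (1/2 : ℝ)) * (t ^ (-((j:ℝ)/2)) * Real.exp (lam T * t)))) 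
      (f := fun n => I n j i x t) (a := X j i x t) (fun n => by
        rw [Real.dist_eq]
        refine (step T hT n j hj i x t ht htT).trans (le_of_eq ?_)
        ring) (hX j hj i x t ht) n
    rw [Real.dist_eq] at this
    refine this.trans (le_of_eq ?_)
    ring
  have ID := It_Dom hP h0 hη hS
  -- uniform convergence on slabs
  have unif : ∀ a T, 0 < a → 0 < T → ∀ j, j ≤ 1 → ∀ i, TendstoUniformlyOn (fun n (q : ℝ × ℝ) => I n j i q.1 q.2)
      (fun q => X j i q.1 q.2) atTop {q | a ≤ q.2 ∧ q.2 ≤ T} := by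
    intro a T ha hT j hj i
    rw [Metric.tendstoUniformlyOn_iff]
    intro e he
    have hl := tendsto_geo (2 * (1 + T ^ (1/2 : ℝ)) * (a ^ (-((j:ℝ)/2)) * Real.exp (lam T * T)))
    filter_upwards [hl.eventually (gt_mem_nhds he)] with n hn q hq
    have hq0 : 0 < q.2 := ha.trans_le hq.1
    rw [dist_comm, Real.dist_eq]
    refine ((close T hT n j hj i q.1 q.2 hq0 hq.2).trans ?_).trans_lt hn
    have e1 : q.2 ^ (-((j:ℝ)/2)) ≤ a ^ (-((j:ℝ)/2)) := 
      Real.rpow_le_rpow_of_nonpos ha hq.1 (by have : (0:ℝ) ≤ j := Nat.cast_nonneg j; linarith)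
    have e2 : Real.exp (lam T * q.2) ≤ Real.exp (lam T * T) := by
      rw [Real.exp_le_exp]
      exact mul_le_mul_of_nonneg_left hq.2 (lam0 T hT).le
    calc _ ≤ 2 * (1 + T ^ (1/2 : ℝ)) / 2 ^ n * (a ^ (-((j:ℝ)/2)) * Real.exp (lam T * T)) := by gcongr
      _ = _ := by ring
  have XD : Dom c η X := by
    refine ⟨?_, ?_, ?_, ?_⟩
    · intro j hj i
      have hl : TendstoLocallyUniformlyOn (fun n (q : ℝ × ℝ) => I n j i q.1 q.2)
        (fun q => X j i q.1 q.2) atTop {q | 0 < q.2} := by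
        rw [tendstoLocallyUniformlyOn_iff_forall_tendsto]
        intro q hq
        have hq' : (0:ℝ) < q.2 := hq
        have hu := unif (q.2 / 2) (2 * q.2) (by positivity) (by positivity) j hj i
        rw [tendstoUniformlyOn_iff_tendsto] at hu
        refine hu.mono_left (Filter.prod_mono le_rfl ?_)
        refine Filter.le_principal_iff.2 (mem_nhdsWithin_of_mem_nhds ?_)
        have o : IsOpen {p : ℝ × ℝ | q.2 / 2 < p.2 ∧ p.2 < 2 * q.2} :=
          (isOpen_lt continuous_const continuous_snd).inter (isOpen_lt continuous_snd continuous_const)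
        filter_upwards [o.mem_nhds ⟨by linarith, by linarith⟩] with p hp using ⟨hp.1.le, hp.2.le⟩
      exact hl.continuousOn (Filter.Frequently.of_forall fun n => (ID n).cont j hj i)
    · intro i x t ht
      exact le_of_tendsto ((hX 0 (by norm_num) i x t ht).abs) (Filter.Eventually.of_forall fun n => (ID n).ub i x t ht)
    · intro i x t ht
      exact le_of_tendsto ((hX 1 le_rfl i x t ht).abs) (Filter.Eventually.of_forall fun n => (ID n).pb i x t ht)
    · intro i x t ht
      refine hasDerivAt_of_tendstoUniformlyOn (f := fun n x => I n 0 i x t) (f' := fun n x => I n 1 i x t) (g' := fun x => X 1 i x t) (s := univ) (l := atTop) isOpen_univ ?_ 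
        (Filter.Eventually.of_forall fun n x _ => (ID n).der i x t ht) (fun x _ => hX 0 (by norm_num) i x t ht) (mem_univ x)
      have := (unif t t ht ht 1 le_rfl i).comp (fun x : ℝ => ((x, t) : ℝ × ℝ))
      refine this.mono fun x _ => ⟨le_rfl, le_rfl⟩
  refine ⟨X, XD, fun j hj i x t ht => ?_⟩
  have h1 := (hX j hj i x t ht).comp (tendsto_add_atTop_nat 1)
  refine tendsto_nhds_unique h1 ?_
  rw [tendsto_iff_dist_tendsto_zero]
  have hl := tendsto_geo (2 * (1 + t ^ (1/2 : ℝ)) / 2 * (t ^ (-((j:ℝ)/2)) * Real.exp (lam t * t)))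
  refine squeeze_zero (fun n => dist_nonneg) (fun n => ?_) hl
  rw [Real.dist_eq]
  have := hlam t ht (I n) X (ID n) XD _ (by positivity) (close t ht n) j hj i x t ht le_rfl
  refine this.trans (le_of_eq ?_)
  ring

end
end GRD

namespace GRD
open Filter Topology

lemma quarter_le {s T : ℝ} (hs : 0 < s) (hT : s ≤ T) : s ^ (-(1/4) : ℝ) ≤ T ^ (1/2 : ℝ) * s ^ (-(3/4) : ℝ) := by
  have : s ^ (-(1/4) : ℝ) = s ^ (1/2 : ℝ) * s ^ (-(3/4) : ℝ) := by rw [← Real.rpow_add hs]; norm_num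
  rw [this]
  gcongr

section
variable {d c : Bool → ℝ} {f g : Bool → ℝ × ℝ → ℝ} {K L r η : ℝ} {X : ℕ → Bool → ℝ → ℝ → ℝ}

lemma Dom.xhol (hD : Dom c η X) (h0 : 0 ≤ η) (h1 : η ≤ 1) (i : Bool) {x y s T : ℝ} (hs : 0 < s) (hT : s ≤ T) :
    |X 0 i x s - X 0 i y s| ≤ √(2 * (1 + T ^ (1/2 : ℝ))) * s ^ (-(1/4) : ℝ) * √|x - y| := by
  have hT0 : 0 < T := hs.trans_le hT
  have a1 : |X 0 i x s - X 0 i y s| ≤ 2 := by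
    have b : ∀ x, |X 0 i x s| ≤ 1 := fun x =>
      ((hD.ub i x s hs).trans (mul_le_of_le_one_right h0 (Q_le_one hs.le))).trans h1
    refine (abs_sub _ _).trans ?_
    linarith [b x, b y]
  have a2 : |X 0 i x s - X 0 i y s| ≤ ((1 + T ^ (1/2 : ℝ)) * s ^ (-(1/2) : ℝ)) * |x - y| :=
    convex_univ.norm_image_sub_le_of_norm_hasDerivWithin_le (f := fun x => X 0 i x s) (f' := fun x => X 1 i x s)
      (fun x _ => (hD.der i x s hs).hasDerivWithinAt) (fun x _ => (hD.pb i x s hs).trans (qq_le_CT hs hT)) (mem_univ y) (mem_univ x)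
  refine (min_le_sqrt (abs_nonneg _) a1 a2).trans (le_of_eq ?_)
  have e : √(s ^ (-(1/2) : ℝ)) = s ^ (-(1/4) : ℝ) := by
    rw [Real.sqrt_eq_rpow, ← Real.rpow_mul hs.le]; norm_num
  rw [← e, ← Real.sqrt_mul (by positivity), ← Real.sqrt_mul (by positivity)]
  congr 1
  ring

lemma Dom.srcH (hD : Dom c η X) (hP : Par d c f g K L r) (h0 : 0 ≤ η) (hη : η ≤ r) {δ : ℝ} {u0 : Bool → ℝ → ℝ}
    (hS : Small d c K L η δ u0) (hX : ∀ j, j ≤ 1 → ∀ i x t, 0 < t → X j i x t = Phi d c f g u0 X j i x t) (i : Bool) :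
    SrcH (srcF f g X i) := by
  intro T hT
  have hL := hP.L0
  have hK := hP.K0
  have hδ := hS.δ0
  set C := 1 + T ^ (1/2 : ℝ) with hC
  have hC0 : 0 < C := by positivity
  set A := √(2 * C)
  set B : Bool → ℝ := fun i => 2 * CS (d i) * δ + 24 * CS (d i) * ((3 * K + 2 * L) * η) * T ^ (1/2 : ℝ) with hB
  have hB0 : ∀ i, 0 ≤ B i := fun i => by
    have := CS_pos (d i)
    simp only [hB]
    positivity
  have pd : ∀ i x y s, 0 < s → s ≤ T → |X 1 i x s - X 1 i y s| ≤ B i * s ^ (-(3/4) : ℝ) * √|x - y| := by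
    intro i x y s hs hsT
    rw [hX 1 le_rfl i x s hs, hX 1 le_rfl i y s hs]
    have h1 := Sop1_holder (c := c i) (hP.hd i) hs (hS.u0c i) (hS.u0b' i) x y
    have h2 := W1_holder (c := c i) (hP.hd i) (hD.src hP h0 hη i) x y hs
    have e : Phi d c f g u0 X 1 i x s - Phi d c f g u0 X 1 i y s = (Sop 1 (d i) (c i) s (u0 i) x - Sop 1 (d i) (c i) s (u0 i) y) +
      (W 1 (d i) (c i) (srcF f g X i) x s - W 1 (d i) (c i) (srcF f g X i) y s) := by
      unfold Phi; ring
    rw [e]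
    refine (abs_add_le _ _).trans ((add_le_add h1 h2).trans ?_)
    have h3 := quarter_le hs hsT
    have := CS_pos (d i)
    calc _ ≤ 2 * CS (d i) * s ^ (-(3/4) : ℝ) * δ * √|x - y| + 
        24 * CS (d i) * ((3 * K + 2 * L) * η) * √|x - y| * (T ^ (1/2 : ℝ) * s ^ (-(3/4) : ℝ)) := by gcongr
      _ = _ := by simp only [hB]; ring
  refine ⟨L * A * T ^ (1/2 : ℝ) + L * A * C + L * (B true + B false), by
    have := hB0 true
    have := hB0 false
    positivity, fun x y s hs hsT => ?_⟩
  have hx : ‖V X 0 x s‖ ≤ r := (hD.un1 h0 hs).trans hη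
  have hy : ‖V X 0 y s‖ ≤ r := (hD.un1 h0 hs).trans hη
  have d0 : ‖V X 0 x s - V X 0 y s‖ ≤ A * s ^ (-(1/4) : ℝ) * √|x - y| :=
    V_norm_sub fun i => hD.xhol h0 (hη.trans hP.r1) i hs hsT
  have d1 : ‖V X 1 x s - V X 1 y s‖ ≤ (B true + B false) * s ^ (-(3/4) : ℝ) * √|x - y| := V_norm_sub fun i => by
    refine (pd i x y s hs hsT).trans ?_
    have := hB0 true
    have := hB0 false
    gcongr
    cases i <;> linarith
  have f1 : |f i (V X 0 x s) - f i (V X 0 y s)| ≤ L * (A * s ^ (-(1/4) : ℝ) * √|x - y|) :=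
    (hP.fl i _ _ hx hy).trans (mul_le_mul_of_nonneg_left d0 hL)
  have g1 : |(fderiv ℝ (g i) (V X 0 x s) - fderiv ℝ (g i) (V X 0 y s)) (V X 1 x s)| ≤ 
      (L * (A * s ^ (-(1/4) : ℝ) * √|x - y|)) * (C * s ^ (-(1/2) : ℝ)) :=
    ContinuousLinearMap.le_of_opNorm_le_of_le _ ((hP.gl i _ _ hx hy).trans (mul_le_mul_of_nonneg_left d0 hL))
      ((hD.pn hs).trans (qq_le_CT hs hsT))
  have g2 : |fderiv ℝ (g i) (V X 0 y s) (V X 1 x s - V X 1 y s)| ≤ (L * 1) * ((B true + B false) * s ^ (-(3/4) : ℝ) * √|x - y|) :=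
    ContinuousLinearMap.le_of_opNorm_le_of_le _ ((hP.gn i hy).trans (mul_le_mul_of_nonneg_left (hy.trans hP.r1) hL)) d1
  have e : srcF f g X i x s - srcF f g X i y s = (f i (V X 0 x s) - f i (V X 0 y s)) +
      ((fderiv ℝ (g i) (V X 0 x s) - fderiv ℝ (g i) (V X 0 y s)) (V X 1 x s) +
      fderiv ℝ (g i) (V X 0 y s) (V X 1 x s - V X 1 y s)) := by
    unfold srcF
    rw [map_sub, sub_apply]
    ring
  rw [e]
  refine (abs_add_le _ _).trans ((add_le_add f1 ((abs_add_le _ _).trans (add_le_add g1 g2))).trans ?_)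
  have e3 : s ^ (-(3/4) : ℝ) = s ^ (-(1/4) : ℝ) * s ^ (-(1/2) : ℝ) := by rw [← Real.rpow_add hs]; norm_num
  have h3 := quarter_le hs hsT
  have h4 : L * (A * s ^ (-(1/4) : ℝ) * √|x - y|) ≤ L * (A * (T ^ (1/2 : ℝ) * s ^ (-(3/4) : ℝ)) * √|x - y|) := by gcongr
  have h5 : (L * (A * s ^ (-(1/4) : ℝ) * √|x - y|)) * (C * s ^ (-(1/2) : ℝ)) = L * A * C * s ^ (-(3/4) : ℝ) * √|x - y| := by
    rw [e3]; ring
  rw [h5]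
  linarith

lemma W0_zero (d c : ℝ) (h : ℝ → ℝ → ℝ) (x : ℝ) : W 0 d c h x 0 = 0 := by
  unfold W; exact intervalIntegral.integral_same

lemma Phi0_cont (hP : Par d c f g K L r) {δ : ℝ} {u0 : Bool → ℝ → ℝ} (hS : Small d c K L η δ u0) (i : Bool)
    {H : ℝ} (hs : Src H (srcF f g X i)) :
    ContinuousOn (fun q : ℝ × ℝ => Phi d c f g u0 X 0 i q.1 q.2) {q | 0 ≤ q.2} := by
  refine (Sop0_cont (hS.u0c i) (hS.u0b' i)).continuousOn.add ?_
  intro q hq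
  have hq' : 0 ≤ q.2 := hq
  rcases hq'.lt_or_eq with h | h
  · exact ((W0_cont (hP.hd i) hs).continuousAt
      ((isOpen_lt continuous_const continuous_snd).mem_nhds h)).continuousWithinAt
  · unfold ContinuousWithinAt
    beta_reduce
    rw [← h, W0_zero]
    have hz : Tendsto (fun p : ℝ × ℝ => CS (d i) * H * (6 * p.2 ^ (1/2 : ℝ))) (𝓝[{q | 0 ≤ q.2}] q) (𝓝 0) := by
      have : ContinuousAt (fun p : ℝ × ℝ => CS (d i) * H * (6 * p.2 ^ (1/2 : ℝ))) q :=
        continuousAt_const.mul (continuousAt_const.mul (continuousAt_snd.rpow_const (Or.inr (by norm_num))))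
      have := this.tendsto
      simp only [← h] at this
      rw [Real.zero_rpow (by norm_num)] at this
      simp only [mul_zero] at this
      exact this.mono_left nhdsWithin_le_nhds
    refine squeeze_zero_norm' ?_ hz
    filter_upwards [self_mem_nhdsWithin] with p hp
    have hp' : 0 ≤ p.2 := hp
    rw [Real.norm_eq_abs]
    rcases hp'.lt_or_eq with h' | h'
    · exact W0_bd (hP.hd i) hs p.1 h'
    · rw [← h', W0_zero, Real.zero_rpow (by norm_num)]
      simp

/-- all that is needed about the solution -/
lemma solution (hP : Par d c f g K L r) (h0 : 0 ≤ η) (hη : η ≤ r) {δ : ℝ} (hδ : δ ≤ η) {u0 : Bool → ℝ → ℝ}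
    (hS : Small d c K L η δ u0) : ∃ (Y : ℕ → Bool → ℝ → ℝ → ℝ) (yt : Bool → ℝ → ℝ → ℝ),
    (∀ i x, Y 0 i x 0 = u0 i x) ∧
    (∀ i, ContinuousOn (fun q : ℝ × ℝ => Y 0 i q.1 q.2) {q | 0 ≤ q.2}) ∧
    (∀ i x t, 0 ≤ t → |Y 0 i x t| ≤ η * Q (x + c i * t) t) ∧
    (∀ i x t, 0 < t → HasDerivAt (fun τ => Y 0 i x τ) (yt i x t) t ∧ HasDerivAt (fun ξ => Y 0 i ξ t) (Y 1 i x t) x ∧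
      HasDerivAt (fun ξ => Y 1 i ξ t) (Y 2 i x t) x ∧
      HasDerivAt (fun ξ => g i (V Y 0 ξ t)) (fderiv ℝ (g i) (V Y 0 x t) (V Y 1 x t)) x ∧
      yt i x t = d i * Y 2 i x t + c i * Y 1 i x t + f i (V Y 0 x t) + fderiv ℝ (g i) (V Y 0 x t) (V Y 1 x t)) ∧
    (∀ i, ContinuousOn (fun q : ℝ × ℝ => yt i q.1 q.2) {q | 0 < q.2}) ∧
    (∀ i, ContinuousOn (fun q : ℝ × ℝ => Y 1 i q.1 q.2) {q | 0 < q.2}) ∧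
    (∀ i, ContinuousOn (fun q : ℝ × ℝ => Y 2 i q.1 q.2) {q | 0 < q.2}) := by
  obtain ⟨X, hD, hX⟩ := fixpoint hP h0 hη hS
  have hs := hD.src hP h0 hη
  have hh := hD.srcH hP h0 hη hS hX
  have hY := hD.map hP h0 hη hS
  set Y := Phi d c f g u0 X with hYdef
  have hV : ∀ j, j ≤ 1 → ∀ x t, 0 < t → V X j x t = V Y j x t := fun j hj x t ht => by
    unfold V; rw [hX j hj _ x t ht, hX j hj _ x t ht]
  have c2 : ∀ i, ContinuousOn (fun q : ℝ × ℝ => Y 2 i q.1 q.2) {q | 0 < q.2} := fun i =>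
    (Sop_cont 2 (hP.hd i) (hS.u0c i) (hS.u0b' i)).add (W2_cont (hP.hd i) (hs i) (hh i))
  refine ⟨Y, fun i x t => d i * Y 2 i x t + c i * Y 1 i x t + f i (V Y 0 x t) + fderiv ℝ (g i) (V Y 0 x t) (V Y 1 x t),
    fun i x => ?_, fun i => Phi0_cont hP hS i (hs i), ?_, ?_, ?_, hY.cont 1 le_rfl, c2⟩
  · rw [hYdef]
    unfold Phi
    rw [Sop0_zero, W0_zero, add_zero]
  · intro i x t ht
    rcases ht.lt_or_eq with h | h
    · exact hY.ub i x t h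
    · subst h
      rw [hYdef]
      unfold Phi
      rw [Sop0_zero, W0_zero, add_zero, mul_zero, add_zero]
      exact (hS.u0b i x).trans (mul_le_mul_of_nonneg_right hδ (Q_pos le_rfl).le)
  · intro i x t ht
    refine ⟨?_, hY.der i x t ht, ?_, hY.gder hP i ht, rfl⟩
    · have h1 := (Sop_deriv_t (c := c i) (hP.hd i) ht (hS.u0c i) (hS.u0b' i) x).add (W0_deriv_t (c := c i) (hP.hd i) (hs i) (hh i) x ht)
      refine h1.congr_deriv ?_
      have e1 : srcF f g X i x t = f i (V Y 0 x t) + fderiv ℝ (g i) (V Y 0 x t) (V Y 1 x t) := by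
        unfold srcF
        rw [hV 0 (by norm_num) x t ht, hV 1 le_rfl x t ht]
      have e2 : ∀ j, Y j i x t = Sop j (d i) (c i) t (u0 i) x + W j (d i) (c i) (srcF f g X i) x t := fun j => rfl
      rw [e1]
      beta_reduce
      rw [e2 2, e2 1]
      ring
    · exact (Sop_deriv_x (j := 1) le_rfl (hP.hd i) ht (hS.u0c i) (hS.u0b' i) x).add (W1_deriv (hP.hd i) (hs i) (hh i) x ht)
  · intro i
    exact (((continuousOn_const.mul (c2 i)).add (continuousOn_const.mul (hY.cont 1 le_rfl i))).add (hY.fcont hP i)).add (hY.gxcont hP i)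

end
end GRD

namespace GRD
open Filter Topology

lemma lip_ball {G : Type*} [NormedAddCommGroup G] [NormedSpace ℝ G] {F : ℝ × ℝ → G} (hF : ContDiff ℝ 1 F) :
    ∃ L : ℝ, 0 ≤ L ∧ ∀ w w', ‖w‖ ≤ 1 → ‖w'‖ ≤ 1 → ‖F w - F w'‖ ≤ L * ‖w - w'‖ := by
  have hc : Continuous fun w => ‖fderiv ℝ F w‖ := (hF.continuous_fderiv (by norm_num)).norm
  obtain ⟨L, hL⟩ := (isCompact_closedBall (0 : ℝ × ℝ) 1).exists_bound_of_continuousOn hc.continuousOn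
  have m : ∀ w : ℝ × ℝ, ‖w‖ ≤ 1 → w ∈ Metric.closedBall (0 : ℝ × ℝ) 1 := fun w hw => by simpa using hw
  refine ⟨L, (norm_nonneg _).trans (hL 0 (m 0 (by simp))), fun w w' hw hw' => ?_⟩
  refine (convex_closedBall (0 : ℝ × ℝ) 1).norm_image_sub_le_of_norm_fderiv_le (𝕜 := ℝ) (f := F) (C := L)
    (fun x _ => (hF.differentiable (by norm_num)) x) (fun x hx => ?_) (m w' hw') (m w hw)
  have := hL x hx
  rwa [norm_norm] at this

lemma fderiv_zero_of {G : ℝ × ℝ → ℝ} {C r : ℝ} (hr : 0 < r) (h : ∀ w, ‖w‖ ≤ r → |G w| ≤ C * ‖w‖ ^ 2) : fderiv ℝ G 0 = 0 := by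
  have : HasFDerivAt G (0 : ℝ × ℝ →L[ℝ] ℝ) 0 := by
    refine Asymptotics.IsBigO.hasFDerivAt (n := 2) ?_ (by norm_num)
    refine Asymptotics.IsBigO.of_bound C ?_
    filter_upwards [Metric.closedBall_mem_nhds (0 : ℝ × ℝ) hr] with w hw
    have := h w (by simpa using hw)
    simpa using this
  exact this.fderiv

lemma mkPar {d c : Bool → ℝ} {f g : Bool → ℝ × ℝ → ℝ} {K r₀ : ℝ} (hd : ∀ i, 0 < d i) (hc : ∀ i, c (!i) - c i ≠ 0) (hK : 0 ≤ K)
    (hr : 0 < r₀) (hf : ∀ i, ContDiff ℝ 2 (f i)) (hg : ∀ i, ContDiff ℝ 2 (g i))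
    (fb : ∀ i w, ‖w‖ ≤ r₀ → |f i w| ≤ K * (|pr i w| ^ 4 + |pr i w| * |pr (!i) w| + |pr (!i) w| ^ 4))
    (gb : ∀ i w, ‖w‖ ≤ r₀ → |g i w| ≤ K * (|pr i w| ^ 2 + |pr i w| * |pr (!i) w| + |pr (!i) w| ^ 3)) :
    ∃ L r, Par d c f g K L r := by
  have h1 : ∀ i, ∃ L : ℝ, 0 ≤ L ∧ ∀ w w', ‖w‖ ≤ 1 → ‖w'‖ ≤ 1 → ‖f i w - f i w'‖ ≤ L * ‖w - w'‖ := fun i =>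
    lip_ball ((hf i).of_le (by norm_num))
  have h2 : ∀ i, ∃ L : ℝ, 0 ≤ L ∧ ∀ w w', ‖w‖ ≤ 1 → ‖w'‖ ≤ 1 → ‖fderiv ℝ (g i) w - fderiv ℝ (g i) w'‖ ≤ L * ‖w - w'‖ := fun i =>
    lip_ball ((hg i).fderiv_right (by norm_num))
  choose L1 p1 h1 using h1
  choose L2 p2 h2 using h2
  have q1 := p1 true
  have q2 := p1 false
  have q3 := p2 true
  have q4 := p2 false
  have r1 : min r₀ 1 ≤ 1 := min_le_right _ _
  have r2 : min r₀ 1 ≤ r₀ := min_le_left _ _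
  refine ⟨L1 true + L1 false + L2 true + L2 false, min r₀ 1, hd, hc, hK, by positivity, lt_min hr one_pos, r1,
    fun i w hw => fb i w (hw.trans r2), fun i w hw => gb i w (hw.trans r2), ?_, ?_, ?_, fun i => (hf i).continuous,
    fun i => (hg i).differentiable (by norm_num), fun i => (hg i).continuous_fderiv (by norm_num)⟩
  · intro i w w' hw hw'
    refine (h1 i w w' (hw.trans r1) (hw'.trans r1)).trans (mul_le_mul_of_nonneg_right ?_ (norm_nonneg _))
    cases i <;> linarith
  · intro i w w' hw hw'
    refine (h2 i w w' (hw.trans r1) (hw'.trans r1)).trans (mul_le_mul_of_nonneg_right ?_ (norm_nonneg _))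
    cases i <;> linarith
  · intro i
    refine fderiv_zero_of (C := 3 * K) (lt_min hr one_pos) fun w hw => (gb i w (hw.trans r2)).trans ?_
    have a1 := pr_le i w
    have a2 := pr_le (!i) w
    have a3 : ‖w‖ ^ 3 ≤ ‖w‖ ^ 2 := pow_le_pow_of_le_one (norm_nonneg _) (hw.trans r1) (by norm_num)
    calc _ ≤ K * (‖w‖ ^ 2 + ‖w‖ * ‖w‖ + ‖w‖ ^ 3) := by gcongr
      _ ≤ K * (‖w‖ ^ 2 + ‖w‖ * ‖w‖ + ‖w‖ ^ 2) := by gcongr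
      _ = _ := by ring

lemma small_mul {A η S : ℝ} (h0 : 0 ≤ η) (hA : A ≤ S) (h : S * η ≤ 1) : A * η ≤ 1 :=
  (mul_le_mul_of_nonneg_right hA h0).trans h

lemma exists_eta {d c : Bool → ℝ} {f g : Bool → ℝ × ℝ → ℝ} {K L r : ℝ} (hP : Par d c f g K L r) {ε : ℝ} (hε : 0 < ε) :
    ∃ η δ, 0 < η ∧ η ≤ r ∧ 0 < δ ∧ δ ≤ η ∧ 2 * η ≤ ε ∧ 2 * η * CQ ≤ ε ∧ ∀ u0 : Bool → ℝ → ℝ, (∀ i, Continuous (u0 i)) →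
      (∀ i x, |u0 i x| ≤ δ * Q x 0) → Small d c K L η δ u0 := by
  have hK := hP.K0
  have hL := hP.L0
  set A : Bool → ℝ := fun i => 2 * (CE (c (!i) - c i) * CBB (d i) K (c (!i) - c i)) with hA
  set B : Bool → ℝ := fun i => CS (d i) * (3 * K + 2 * L) * 8 with hB
  have hA0 : ∀ i, 0 ≤ A i := fun i => by
    have := CE_pos (c (!i) - c i)
    have := CBB_nonneg (b := c (!i) - c i) (hP.hd i) hK
    simp only [hA]; positivity
  have hB0 : ∀ i, 0 ≤ B i := fun i => by
    have := CS_pos (d i)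
    simp only [hB]; positivity
  have a1 := hA0 true
  have a2 := hA0 false
  have b1 := hB0 true
  have b2 := hB0 false
  have hq := CQ_nonneg
  set S := 1 + A true + A false + B true + B false with hSd
  have hS : 0 < S := by positivity
  set m := min r (min S⁻¹ (ε / (2 + 2 * CQ))) with hm
  have hm0 : 0 < m := lt_min hP.r0 (lt_min (by positivity) (by positivity))
  have m1 : m ≤ r := min_le_left _ _
  have m2 : S * m ≤ 1 := by
    have : m ≤ S⁻¹ := (min_le_right _ _).trans (min_le_left _ _)
    calc _ ≤ S * S⁻¹ := by gcongr
      _ = 1 := mul_inv_cancel₀ hS.ne'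
  have m3 : (2 + 2 * CQ) * m ≤ ε := by
    have : m ≤ ε / (2 + 2 * CQ) := (min_le_right _ _).trans (min_le_right _ _)
    rwa [le_div_iff₀ (by positivity), mul_comm] at this
  have ca : ∀ i, 0 < CA (d i) := fun i => CA_pos (hP.hd i)
  have cs : ∀ i, 0 < CS (d i) := fun i => CS_pos (d i)
  have ca1 := ca true
  have ca2 := ca false
  have cs1 := cs true
  have cs2 := cs false
  set R := 1 + 2 * CA (d true) + 2 * CA (d false) + CS (d true) + CS (d false) with hR
  have hR0 : 0 < R := by positivity
  have key : ∀ a, a ≤ R → a * (m / R) ≤ m := fun a ha => by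
    calc _ ≤ R * (m / R) := by gcongr
      _ = m := by field_simp
  refine ⟨m, m / R, hm0, m1, by positivity, ?_, by nlinarith, by nlinarith, fun u0 hc hb => ⟨by positivity, ?_, ?_, ?_, ?_, hc, hb⟩⟩
  · have := key 1 (by linarith)
    linarith
  · intro i
    have := small_mul (A := A i) hm0.le (by cases i <;> linarith) m2
    simp only [hA] at this
    linarith
  · intro i
    have := key (2 * CA (d i)) (by cases i <;> linarith)
    linarith
  · intro i
    have := key (CS (d i)) (by cases i <;> linarith)
    linarith [hP.r1]
  · intro i
    have := small_mul (A := B i) hm0.le (by cases i <;> linarith) m2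
    simp only [hB] at this
    linarith

lemma holder_cont {α : ℝ} (hα : 0 < α) {u : ℝ → ℝ} (h : ∃ C : ℝ, ∀ x y : ℝ, |u x - u y| ≤ C * |x - y| ^ α) : Continuous u := by
  obtain ⟨C, hC⟩ := h
  rw [continuous_iff_continuousAt]
  intro y
  unfold ContinuousAt
  rw [tendsto_iff_dist_tendsto_zero]
  have h1 : ContinuousAt (fun x : ℝ => C * |x - y| ^ α) y :=
    continuousAt_const.mul (ContinuousAt.rpow_const (by fun_prop) (Or.inr hα.le))
  have := h1.tendsto
  simp only [sub_self, abs_zero] at this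
  rw [Real.zero_rpow hα.ne', mul_zero] at this
  exact squeeze_zero (fun x => dist_nonneg) (fun x => by rw [Real.dist_eq]; exact hC x y) this

lemma gauss_data {M δ : ℝ} (hM : 1 ≤ M) {u : ℝ → ℝ} (h : ∀ x, |u x| * Real.exp (x ^ 2 / M) < δ / M) (x : ℝ) :
    |u x| ≤ δ * Q x 0 := by
  have h1 := gauss_Q hM x
  have h2 := (h x).le
  have hM0 : 0 < M := by linarith
  have hp : 0 ≤ δ / M := le_trans (by positivity) h2
  have e : |u x| = (|u x| * Real.exp (x ^ 2 / M)) * Real.exp (-(x ^ 2 / M)) := by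
    rw [mul_assoc, ← Real.exp_add, add_neg_cancel, Real.exp_zero, mul_one]
  rw [e]
  calc _ ≤ (δ / M) * (M * Q x 0) := by gcongr
    _ = δ * Q x 0 := by field_simp

lemma L1_bound {u v : ℝ → ℝ} {a b t η : ℝ} (ht : 0 ≤ t) (hu : Continuous u) (hv : Continuous v)
    (h1 : ∀ x, |u x| ≤ η * Q (x + a) t) (h2 : ∀ x, |v x| ≤ η * Q (x + b) t) :
    Integrable (fun x => |u x| + |v x|) ∧ ∫ x, (|u x| + |v x|) ≤ 2 * η * CQ := by
  obtain ⟨qi, qe⟩ := Q_int ht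
  have i1 : Integrable fun x => η * Q (x + a) t := (qi.comp_add_right a).const_mul η
  have i2 : Integrable fun x => η * Q (x + b) t := (qi.comp_add_right b).const_mul η
  have hi : Integrable (fun x => |u x| + |v x|) := by
    refine (i1.add i2).mono' (hu.abs.add hv.abs).aestronglyMeasurable (Eventually.of_forall fun x => ?_)
    rw [Real.norm_eq_abs, abs_of_nonneg (by positivity)]
    exact add_le_add (h1 x) (h2 x)
  refine ⟨hi, ?_⟩
  have := integral_mono hi (i1.add i2) (fun x => add_le_add (h1 x) (h2 x))
  refine this.trans (le_of_eq ?_)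
  simp only [Pi.add_apply]
  rw [integral_add i1 i2, integral_const_mul, integral_const_mul, integral_add_right_eq_self (fun x => Q x t) a,
    integral_add_right_eq_self (fun x => Q x t) b, qe]
  ring

end GRD

/-- Theorem 1.4: global existence and decay allowing for irrelevant nonlinear
couplings which are not of mix-type. -/
theorem global_existence_irrelevant_couplings
    (α d₁ d₂ c₁ c₂ : ℝ) (hα : α ∈ Set.Ioo (0 : ℝ) 1)
    (hd₁ : 0 < d₁) (hd₂ : 0 < d₂) (hc : c₁ ≠ c₂)
    (f₁ f₂ g₁ g₂ : ℝ × ℝ → ℝ)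
    (hf₁ : IsC2Holder α f₁) (hf₂ : IsC2Holder α f₂)
    (hg₁ : IsC2Holder α g₁) (hg₂ : IsC2Holder α g₂)
    (C₀ r₀ : ℝ) (hC₀ : 1 < C₀) (hr₀ : 0 < r₀)
    (hnl : ∀ u v : ℝ, |u| ≤ r₀ → |v| ≤ r₀ →
      |f₁ (u, v)| ≤ C₀ * (|u| ^ 4 + |u| * |v| + |v| ^ 4) ∧
      |g₁ (u, v)| ≤ C₀ * (|u| ^ 2 + |u| * |v| + |v| ^ 3) ∧
      |f₂ (u, v)| ≤ C₀ * (|v| ^ 4 + |u| * |v| + |u| ^ 4) ∧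
      |g₂ (u, v)| ≤ C₀ * (|v| ^ 2 + |u| * |v| + |u| ^ 3)) :
    ∃ M₀ : ℝ, 1 ≤ M₀ ∧
      ∀ M : ℝ, M₀ ≤ M → ∀ ε : ℝ, 0 < ε → ∃ δ : ℝ, 0 < δ ∧
        ∀ u₀ v₀ : ℝ → ℝ,
          (∃ B : ℝ, ∀ x : ℝ, |u₀ x| ≤ B) → (∃ B : ℝ, ∀ x : ℝ, |v₀ x| ≤ B) →
          HolderCont α u₀ → HolderCont α v₀ →
          (∀ x : ℝ, |u₀ x| * Real.exp (x ^ 2 / M) < δ) →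
          (∀ x : ℝ, |v₀ x| * Real.exp (x ^ 2 / M) < δ) →
          ∃ u v : ℝ → ℝ → ℝ,
            IsClassicalSolution d₁ d₂ c₁ c₂ f₁ f₂ g₁ g₂ ⊤ u₀ v₀ u v ∧
            ∀ t : ℝ, 0 ≤ t →
              (∀ x : ℝ, |u x t| + |v x t| ≤ ε / Real.sqrt (1 + t)) ∧
              Integrable (fun x : ℝ => |u x t| + |v x t|) ∧
              (∫ x : ℝ, (|u x t| + |v x t|)) ≤ ε := by
  obtain ⟨L, r, hP⟩ := GRD.mkPar (d := fun i => cond i d₂ d₁) (c := fun i => cond i c₂ c₁) (f := fun i => cond i f₂ f₁)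
    (g := fun i => cond i g₂ g₁) (K := C₀) (r₀ := r₀) (by intro i; cases i <;> assumption)
    (by
      intro i
      cases i
      · exact sub_ne_zero.mpr hc.symm
      · exact sub_ne_zero.mpr hc)
    (by linarith) hr₀
    (by
      intro i
      cases i
      · exact hf₁.1
      · exact hf₂.1)
    (by
      intro i
      cases i
      · exact hg₁.1
      · exact hg₂.1)
    (by
      intro i w hw
      obtain ⟨h1, h2, h3, h4⟩ := hnl w.1 w.2 ((norm_fst_le w).trans hw) ((norm_snd_le w).trans hw)
      cases i
      · exact h1
      · rw [mul_comm |w.1| |w.2|] at h3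
        exact h3)
    (by
      intro i w hw
      obtain ⟨h1, h2, h3, h4⟩ := hnl w.1 w.2 ((norm_fst_le w).trans hw) ((norm_snd_le w).trans hw)
      cases i
      · exact h2
      · rw [mul_comm |w.1| |w.2|] at h4
        exact h4)
  refine ⟨1, le_rfl, fun M hM ε hε => ?_⟩
  obtain ⟨η, δ, hη, hηr, hδ, hδη, e1, e2, hsm⟩ := GRD.exists_eta hP hε
  refine ⟨δ / M, div_pos hδ (by linarith), fun u₀ v₀ _ _ hu hv hub hvb => ?_⟩
  have hS := hsm (fun i => cond i v₀ u₀)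
    (by
      intro i
      cases i
      · exact GRD.holder_cont hα.1 hu
      · exact GRD.holder_cont hα.1 hv)
    (by
      intro i x
      cases i
      · exact GRD.gauss_data hM hub x
      · exact GRD.gauss_data hM hvb x)
  obtain ⟨Y, yt, h0, hc0, hb, hder, ct, c1, c2⟩ := GRD.solution hP hη.le hηr hδη hS
  have hb' : ∀ i x t, 0 ≤ t → |Y 0 i x t| ≤ η * (1 + t) ^ (-(1/2) : ℝ) := fun i x t ht =>
    (hb i x t ht).trans (mul_le_mul_of_nonneg_left (GRD.Q_le ht) hη.le)
  have hb1 : ∀ i x t, 0 ≤ t → |Y 0 i x t| ≤ η := fun i x t ht =>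
    (hb i x t ht).trans (mul_le_of_le_one_right hη.le (GRD.Q_le_one ht))
  refine ⟨Y 0 false, Y 0 true, ⟨h0 false, h0 true, ?_, ?_, yt false, yt true, Y 1 false, Y 1 true, Y 2 false, Y 2 true,
    fun x t => fderiv ℝ g₁ (GRD.V Y 0 x t) (GRD.V Y 1 x t), fun x t => fderiv ℝ g₂ (GRD.V Y 0 x t) (GRD.V Y 1 x t), ?_, ?_⟩, ?_⟩
  · exact ((hc0 false).prodMk (hc0 true)).mono fun p hp => hp.1
  · intro t₁ _ _
    exact ⟨η + η, fun x t ht _ => add_le_add (hb1 false x t ht) (hb1 true x t ht)⟩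
  · intro x t ht _
    obtain ⟨a1, a2, a3, a4, a5⟩ := hder false x t ht
    obtain ⟨b1, b2, b3, b4, b5⟩ := hder true x t ht
    exact ⟨a1, a2, a3, a4, b1, b2, b3, b4, a5, b5⟩
  · exact ((ct false).prodMk ((c1 false).prodMk ((c2 false).prodMk ((ct true).prodMk ((c1 true).prodMk (c2 true)))))).mono
      fun p hp => hp.1
  · intro t ht
    have hcx : ∀ i, Continuous fun x => Y 0 i x t := fun i => by
      have := (hc0 i).comp (f := fun x : ℝ => (x, t)) (s := Set.univ) (by fun_prop) (fun x _ => ht)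
      exact continuousOn_univ.mp this
    refine ⟨fun x => ?_, ?_⟩
    · have a1 := hb' false x t ht
      have a2 := hb' true x t ht
      have ht1 : 0 ≤ 1 + t := by linarith
      have p0 := Real.rpow_nonneg ht1 (-(1/2) : ℝ)
      have hs : ε / Real.sqrt (1 + t) = ε * (1 + t) ^ (-(1/2) : ℝ) := by
        rw [Real.sqrt_eq_rpow, Real.rpow_neg ht1, div_eq_mul_inv]
      rw [hs]
      nlinarith [mul_le_mul_of_nonneg_right e1 p0]
    · obtain ⟨i1, i2⟩ := GRD.L1_bound ht (hcx false) (hcx true) (fun x => hb false x t ht) (fun x => hb true x t ht)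
      exact ⟨i1, i2.trans e2⟩
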